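/- Define the complex numbers L₁ = F(1/8,5/8) − 2√3·F(3/8,7/8) − 4i√3·F(5/8,9/8) − 8i·F(7/8,11/8) (the L-value L(f_{1/8,5/8},1) of the Hecke eigenform built from the Galois family of 𝕂₂(1/8,5/8), up to normalization) and L₂ = F(1/8,1) − 2i√3·F(3/8,1) − 4√3·F(5/8,1) + 8i·F(7/8,1) (similarly for f_{1/8,1}). Then L₁ = −(1/2)·ζ₄₈·L₂, where ζ₄₈ = e^{2πi/48}. -/

import Mathlib

/-- The Pochhammer symbol (x)_k = x(x+1)⋯(x+k−1). -/
noncomputable def poch (x : ℝ) (k : ℕ) : ℝ := ∏ i ∈ Finset.range k, (x + i)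

/-- The hypergeometric series ₃F₂(a1,a2,a3;b1,b2;1). -/
noncomputable def threeF2 (a1 a2 a3 b1 b2 : ℝ) : ℝ :=
  ∑' k : ℕ, poch a1 k * poch a2 k * poch a3 k /
    (poch b1 k * poch b2 k * (Nat.factorial k : ℝ))

/-- The Beta function B(a,b) = Γ(a)Γ(b)/Γ(a+b). -/
noncomputable def betaFn (a b : ℝ) : ℝ :=
  Real.Gamma a * Real.Gamma b / Real.Gamma (a + b)

/-- The normalized hypergeometric value
F(r,s) = (2^{1−4r}·B(r,s−r)/N(r)) · ₃F₂(1/2,1/2,r;1,s;1), where N(r) = 2·den(r). -/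
noncomputable def Fval (r s : ℚ) : ℝ :=
  (2:ℝ) ^ ((1:ℝ) - 4 * (r:ℝ)) * betaFn (r:ℝ) ((s:ℝ) - (r:ℝ)) / (2 * (r.den : ℝ)) *
    threeF2 (1/2) (1/2) (r:ℝ) 1 (s:ℝ)

section

open MeasureTheory Set Filter Topology

lemma lintegral_rpow_mul_one_sub_rpow {a b : ℝ} (ha : 0 < a) (hb : 0 < b) :
    ∫⁻ x in Ioo (0 : ℝ) 1, ENNReal.ofReal (x ^ (a - 1) * (1 - x) ^ (b - 1)) =
      ENNReal.ofReal (ProbabilityTheory.beta a b) := by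
  have h := ProbabilityTheory.lintegral_betaPDF_eq_one ha hb
  have hB := ProbabilityTheory.beta_pos ha hb
  rw [ProbabilityTheory.lintegral_betaPDF] at h
  have h2 : ∀ x : ℝ, ENNReal.ofReal (1 / ProbabilityTheory.beta a b *
      x ^ (a - 1) * (1 - x) ^ (b - 1))
      = ENNReal.ofReal (1 / ProbabilityTheory.beta a b) *
        ENNReal.ofReal (x ^ (a - 1) * (1 - x) ^ (b - 1)) := fun x => by
    rw [mul_assoc, ENNReal.ofReal_mul (by positivity)]
  simp_rw [h2] at h
  rw [lintegral_const_mul _ (by fun_prop)] at h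
  calc _ = ENNReal.ofReal (ProbabilityTheory.beta a b * (1 / ProbabilityTheory.beta a b)) * _ := by
        rw [mul_one_div_cancel hB.ne', ENNReal.ofReal_one, one_mul]
    _ = _ := by rw [ENNReal.ofReal_mul hB.le, mul_assoc, h, mul_one]

lemma integrableOn_rpow_mul_one_sub_rpow {a b : ℝ} (ha : -1 < a) (hb : -1 < b) :
    IntegrableOn (fun x : ℝ => x ^ a * (1 - x) ^ b) (Ioo 0 1) := by
  have h := lintegral_rpow_mul_one_sub_rpow (a := a + 1) (b := b + 1) (by linarith) (by linarith)
  simp only [add_sub_cancel_right] at h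
  refine ⟨by fun_prop, ?_⟩
  rw [hasFiniteIntegral_iff_ofReal, h]
  · exact ENNReal.ofReal_lt_top
  · filter_upwards [ae_restrict_mem measurableSet_Ioo] with x hx
    exact mul_nonneg (Real.rpow_nonneg hx.1.le _) (Real.rpow_nonneg (by linarith [hx.2]) _)

section Substitution

variable {E : Type*} [NormedAddCommGroup E] [NormedSpace ℝ E] {a b : ℝ} {f f' : ℝ → ℝ}

/-- An increasing substitution on an open interval. -/
lemma integral_Ioo_comp_mul_deriv_of_pos (hab : a ≤ b) (hf : ContinuousOn f (Icc a b))
    (hff' : ∀ x ∈ Ioo a b, HasDerivAt f (f' x) x) (hf' : ∀ x ∈ Ioo a b, 0 < f' x) (g : ℝ → E) :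
    ∫ u in Ioo (f a) (f b), g u = ∫ x in Ioo a b, f' x • g (f x) := by
  rw [← integral_Icc_eq_integral_Ioo, ← integral_Icc_eq_integral_Ioo,
    integral_Icc_deriv_smul_of_deriv_nonneg hf hff' (fun x hx => (hf' x hx).le) hab]

/-- A decreasing substitution on an open interval. -/
lemma integral_Ioo_comp_mul_deriv_of_neg (hab : a ≤ b) (hf : ContinuousOn f (Icc a b))
    (hff' : ∀ x ∈ Ioo a b, HasDerivAt f (f' x) x) (hf' : ∀ x ∈ Ioo a b, f' x < 0) (g : ℝ → E) :
    ∫ u in Ioo (f b) (f a), g u = -∫ x in Ioo a b, f' x • g (f x) := by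
  rw [← integral_Icc_eq_integral_Ioo, ← integral_Icc_eq_integral_Ioo,
    integral_Icc_deriv_smul_of_deriv_nonpos hf hff' (fun x hx => (hf' x hx).le) hab, neg_neg]

lemma integrableOn_Ioo_comp_mul_deriv_of_neg (hab : a ≤ b) (hf : ContinuousOn f (Icc a b))
    (hff' : ∀ x ∈ Ioo a b, HasDerivAt f (f' x) x) (hf' : ∀ x ∈ Ioo a b, f' x < 0) (g : ℝ → E) :
    IntegrableOn (fun x => f' x • g (f x)) (Ioo a b) ↔ IntegrableOn g (Ioo (f b) (f a)) := by
  rw [← integrableOn_Icc_iff_integrableOn_Ioo, ← integrableOn_Icc_iff_integrableOn_Ioo,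
    integrableOn_Icc_deriv_smul_iff_of_deriv_nonpos hf hff' (fun x hx => (hf' x hx).le) hab]

end Substitution

/-- The symmetric elliptic integral `(1 / π) ∫₀^∞ du / √(u (u + x) (u + y))`. -/
noncomputable def ellInt (x y : ℝ) : ℝ :=
  1 / Real.pi * ∫ u in Ioi (0 : ℝ), (√(u * (u + x) * (u + y)))⁻¹

lemma ellInt_comm (x y : ℝ) : ellInt x y = ellInt y x := by
  simp only [ellInt, mul_right_comm]

lemma ellInt_mul_mul {c : ℝ} (hc : 0 < c) (x y : ℝ) :
    ellInt (c * x) (c * y) = (√c)⁻¹ * ellInt x y := by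
  have h := integral_comp_mul_left_Ioi (fun u : ℝ => (√(u * (u + c * x) * (u + c * y)))⁻¹) 0 hc
  rw [mul_zero] at h
  have h2 : ∀ u : ℝ, (√(c * u * (c * u + c * x) * (c * u + c * y)))⁻¹ =
      c⁻¹ * (√c)⁻¹ * (√(u * (u + x) * (u + y)))⁻¹ := fun u => by
    rw [show c * u * (c * u + c * x) * (c * u + c * y) =
      c ^ 2 * c * (u * (u + x) * (u + y)) by ring,
      Real.sqrt_mul (by positivity), Real.sqrt_mul (by positivity), Real.sqrt_sq hc.le]
    simp only [mul_inv]
  simp_rw [h2, integral_const_mul, smul_eq_mul] at h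
  have h3 := congrArg (fun z => c * z) h
  simp only [← mul_assoc, mul_inv_cancel₀ hc.ne', one_mul] at h3
  rw [ellInt, ellInt, ← h3]
  ring

lemma image_Ioi_zero {f : ℝ → ℝ} (hc : ContinuousOn f (Ici 0)) (h0 : f 0 = 0)
    (hpos : ∀ u, 0 < u → 0 < f u) (hlim : Tendsto f atTop atTop) : f '' Ioi 0 = Ioi 0 := by
  refine Subset.antisymm (image_subset_iff.2 fun u hu => hpos u hu) fun z hz => ?_
  obtain ⟨R, hR, hR0⟩ := ((hlim.eventually_gt_atTop z).and (eventually_gt_atTop 0)).exists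
  have := intermediate_value_Ioo hR0.le (hc.mono Icc_subset_Ici_self)
  obtain ⟨u, hu, rfl⟩ := this ⟨by rwa [h0], hR⟩
  exact ⟨u, hu.1, rfl⟩

/-- An increasing substitution of the half line. -/
lemma integral_Ioi_comp_mul_deriv {E : Type*} [NormedAddCommGroup E] [NormedSpace ℝ E]
    {f f' : ℝ → ℝ} (hc : ContinuousOn f (Ici 0)) (h0 : f 0 = 0)
    (hff' : ∀ u, 0 < u → HasDerivAt f (f' u) u) (hf' : ∀ u, 0 < u → 0 < f' u)
    (hlim : Tendsto f atTop atTop) (g : ℝ → E) :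
    ∫ u in Ioi (0 : ℝ), g u = ∫ u in Ioi (0 : ℝ), f' u • g (f u) := by
  have hm : StrictMonoOn f (Ici 0) := by
    refine strictMonoOn_of_deriv_pos (convex_Ici 0) hc fun u hu => ?_
    rw [interior_Ici, mem_Ioi] at hu
    rw [(hff' u hu).deriv]
    exact hf' u hu
  have hpos : ∀ u, 0 < u → 0 < f u := fun u hu => by
    rw [← h0]; exact hm self_mem_Ici hu.le hu
  rw [← image_Ioi_zero hc h0 hpos hlim]
  exact (integral_image_eq_integral_deriv_smul_of_monotoneOn measurableSet_Ioi
    (fun u hu => (hff' u hu).hasDerivWithinAt) (hm.monotoneOn.mono Ioi_subset_Ici_self) g).trans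
    (by rw [image_Ioi_zero hc h0 hpos hlim])

/-- Invariance of the elliptic integral under a `3`-isogeny. -/
lemma ellInt_isogeny {x y X Y A B C D : ℝ} (hA : 0 < A) (hB : 0 < B) (hC : 0 < C) (hD : 0 < D)
    (hsum : C + D = 3 * B - A) (hprod : C * D = A * B)
    (hX : ∀ u, u * (u + A) ^ 2 + X * (u + B) ^ 2 = (u + x) * (u + C) ^ 2)
    (hY : ∀ u, u * (u + A) ^ 2 + Y * (u + B) ^ 2 = (u + y) * (u + D) ^ 2) :
    ellInt X Y = ellInt x y := by
  have hB' : ∀ u : ℝ, 0 ≤ u → u + B ≠ 0 := fun u hu => by positivity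
  rw [ellInt, ellInt, integral_Ioi_comp_mul_deriv (f := fun u => u * (u + A) ^ 2 / (u + B) ^ 2)
    (f' := fun u => (u + A) * (u + C) * (u + D) / (u + B) ^ 3)]
  · congr 1
    refine setIntegral_congr_fun measurableSet_Ioi fun u (hu : 0 < u) => ?_
    have hb := hB' u hu.le
    have e : u * (u + A) ^ 2 / (u + B) ^ 2 * (u * (u + A) ^ 2 / (u + B) ^ 2 + X) *
        (u * (u + A) ^ 2 / (u + B) ^ 2 + Y) =
        ((u + A) * (u + C) * (u + D) / (u + B) ^ 3) ^ 2 * (u * (u + x) * (u + y)) := by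
      have e1 : u * (u + A) ^ 2 / (u + B) ^ 2 + X = (u + x) * (u + C) ^ 2 / (u + B) ^ 2 := by
        rw [← hX]; field_simp
      have e2 : u * (u + A) ^ 2 / (u + B) ^ 2 + Y = (u + y) * (u + D) ^ 2 / (u + B) ^ 2 := by
        rw [← hY]; field_simp
      rw [e1, e2]; field_simp
    have hp : 0 < (u + A) * (u + C) * (u + D) / (u + B) ^ 3 := by positivity
    simp only [smul_eq_mul]
    rw [e, Real.sqrt_mul (by positivity), Real.sqrt_sq hp.le, mul_inv, ← mul_assoc,
      mul_inv_cancel₀ hp.ne', one_mul]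
  · refine ContinuousOn.div (by fun_prop) (by fun_prop) fun u hu => pow_ne_zero 2 (hB' u hu)
  · simp
  · intro u hu
    have hb := hB' u hu.le
    have h1 : HasDerivAt (fun u : ℝ => u * (u + A) ^ 2)
        (1 * (u + A) ^ 2 + u * (2 * (u + A) ^ 1 * 1)) u :=
      (hasDerivAt_id u).mul (((hasDerivAt_id u).add_const A).pow 2)
    have h2 : HasDerivAt (fun u : ℝ => (u + B) ^ 2) (2 * (u + B) ^ 1 * 1) u :=
      ((hasDerivAt_id u).add_const B).pow 2
    refine (h1.div h2 (pow_ne_zero 2 hb)).congr_deriv ?_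
    rw [div_eq_div_iff (by positivity) (by positivity)]
    have : (u + C) * (u + D) = u ^ 2 + (3 * B - A) * u + A * B := by
      rw [← hsum, ← hprod]; ring
    rw [mul_assoc (u + A), this]; ring
  · intro u hu; positivity
  · refine tendsto_atTop_mono' atTop (f₁ := fun u => u * (A / (A + B)) ^ 2) ?_
      (Tendsto.atTop_mul_const (by positivity) tendsto_id)
    filter_upwards [eventually_ge_atTop 0] with u hu
    rw [mul_div_assoc, ← div_pow]
    gcongr u * ?_ ^ 2
    rw [div_le_div_iff₀ (by positivity) (by positivity)]
    nlinarith

/-- The Hauptmodul `β(q) = (q - 1)³ (q + 3) / (16 q)`. -/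
noncomputable def modBeta {K : Type*} [Field K] (q : K) : K := (q - 1) ^ 3 * (q + 3) / (16 * q)

/-- The Hauptmodul `α(q) = (q - 1) (q + 3)³ / (16 q³)`. -/
noncomputable def modAlpha {K : Type*} [Field K] (q : K) : K :=
  (q - 1) * (q + 3) ^ 3 / (16 * q ^ 3)

lemma one_sub_modBeta {q : ℝ} (hq : q ≠ 0) :
    1 - modBeta q = (1 + q) ^ 3 * (3 - q) / (16 * q) := by
  rw [modBeta]; field_simp; ring

lemma one_sub_modAlpha {q : ℝ} (hq : q ≠ 0) :
    1 - modAlpha q = (1 + q) * (3 - q) ^ 3 / (16 * q ^ 3) := by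
  rw [modAlpha]; field_simp; ring

lemma modBeta_neg {q : ℝ} (hq : q ≠ 0) : modBeta (-q) = 1 - modBeta q := by
  rw [modBeta, modBeta]; field_simp; ring

lemma modAlpha_neg {q : ℝ} (hq : q ≠ 0) : modAlpha (-q) = 1 - modAlpha q := by
  rw [modAlpha, modAlpha]; field_simp; ring

lemma ellInt_scale_rel {c d k x y X Y : ℝ} (hc : 0 < c) (hd : 0 < d) (hk : 0 < k)
    (hcd : c = k ^ 2 * d) (h : ellInt (c * X) (c * Y) = ellInt (d * x) (d * y)) :
    ellInt X Y = k * ellInt x y := by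
  have hd' : 0 < √d := Real.sqrt_pos.2 hd
  rw [ellInt_mul_mul hc, ellInt_mul_mul hd, hcd, Real.sqrt_mul (by positivity),
    Real.sqrt_sq hk.le] at h
  field_simp at h
  linarith

lemma ellInt_one_sub_modAlpha {q : ℝ} (h0 : 0 < q) (h3 : q < 3) :
    ellInt 1 (1 - modAlpha q) = q * ellInt 1 (1 - modBeta q) := by
  have h3' : 0 < 3 - q := by linarith
  refine ellInt_scale_rel (c := 16 * q ^ 3) (d := 16 * q) (by positivity) (by positivity) h0
    (by ring) ?_
  rw [one_sub_modAlpha h0.ne', one_sub_modBeta h0.ne', mul_div_cancel₀ _ (by positivity),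
    mul_div_cancel₀ _ (by positivity)]
  refine ellInt_isogeny (A := 4 * q * (3 - q) * (1 + q)) (B := 4 * (1 + q) ^ 2)
    (C := 4 * q * (1 + q) ^ 2) (D := 4 * (1 + q) * (3 - q)) (by positivity) (by positivity)
    (by positivity) (by positivity) ?_ ?_ ?_ ?_ <;> intros <;> ring

lemma ellInt_modAlpha_of_one_lt {q : ℝ} (h1 : 1 < q) :
    ellInt 1 (modAlpha q) = q / 3 * ellInt 1 (modBeta q) := by
  have h1' : 0 < q - 1 := by linarith
  have h0 : 0 < q := by linarith
  refine ellInt_scale_rel (c := 16 * q ^ 3) (d := 144 * q) (by positivity) (by positivity)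
    (by positivity) (by ring) ?_
  rw [modAlpha, modBeta, mul_div_cancel₀ _ (by positivity),
    show 144 * q * ((q - 1) ^ 3 * (q + 3) / (16 * q)) = 9 * ((q - 1) ^ 3 * (q + 3)) by
      field_simp; ring]
  refine (ellInt_isogeny (A := 12 * q * (q - 1) * (q + 3)) (B := 4 * q ^ 2 * (q + 3) ^ 2 / 3)
    (C := 4 * q * (q + 3) ^ 2) (D := 4 * q ^ 2 * (q - 1) * (q + 3)) (by positivity) (by positivity)
    (by positivity) (by positivity) ?_ ?_ ?_ ?_).symm <;> intros <;> ring

lemma ellInt_neg_modAlpha {q : ℝ} (h0 : 0 < q) (h1 : q < 1) :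
    ellInt (-modAlpha q) (1 - modAlpha q) = q / 3 * ellInt (-modBeta q) (1 - modBeta q) := by
  have h1' : 0 < 1 - q := by linarith
  have h3' : 0 < 3 - q := by linarith
  refine ellInt_scale_rel (c := 16 * q ^ 3) (d := 144 * q) (by positivity) (by positivity)
    (by positivity) (by ring) ?_
  rw [one_sub_modAlpha h0.ne', one_sub_modBeta h0.ne', modAlpha, modBeta,
    mul_div_cancel₀ _ (by positivity),
    show 16 * q ^ 3 * -((q - 1) * (q + 3) ^ 3 / (16 * q ^ 3)) = (1 - q) * (q + 3) ^ 3 by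
      field_simp; ring,
    show 144 * q * -((q - 1) ^ 3 * (q + 3) / (16 * q)) = 9 * ((1 - q) ^ 3 * (q + 3)) by
      field_simp; ring,
    show 144 * q * ((1 + q) ^ 3 * (3 - q) / (16 * q)) = 9 * ((1 + q) ^ 3 * (3 - q)) by
      field_simp; ring]
  refine (ellInt_isogeny (A := 3 * (1 - q) * (1 + q) * (3 + q) * (3 - q))
    (B := (9 - q ^ 2) ^ 2 / 3) (C := (1 - q) * (3 - q) ^ 2 * (3 + q))
    (D := (1 + q) * (3 + q) ^ 2 * (3 - q)) (by positivity) ?_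
    (by positivity) (by positivity) ?_ ?_ ?_ ?_).symm
  · have : 9 - q ^ 2 = (3 - q) * (3 + q) := by ring
    rw [this]; positivity
  all_goals intros; ring

/-- The half strip `-1 < re q < 1`, `0 < im q`. -/
def halfStrip : Set ℂ := {q | -1 < q.re ∧ q.re < 1 ∧ 0 < q.im}

lemma isOpen_halfStrip : IsOpen halfStrip :=
  (isOpen_lt continuous_const Complex.continuous_re).inter
    ((isOpen_lt Complex.continuous_re continuous_const).inter
      (isOpen_lt continuous_const Complex.continuous_im))

lemma convex_halfStrip : Convex ℝ halfStrip :=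
  (convex_halfSpace_re_gt (-1)).inter
    ((convex_halfSpace_re_lt 1).inter (convex_halfSpace_im_gt 0))

/-- The weight dominating all integrands on the half strip. -/
noncomputable def stripWeight (x : ℝ) : ℝ := (|x| * (1 - |x|)) ^ (-(15 / 16) : ℝ)

lemma integrableOn_stripWeight : IntegrableOn stripWeight (Ioo (-1) 1) := by
  have h1 : IntegrableOn stripWeight (Ioo 0 1) := by
    refine (integrableOn_rpow_mul_one_sub_rpow (a := -(15 / 16)) (b := -(15 / 16))
      (by norm_num) (by norm_num)).congr_fun ?_ measurableSet_Ioo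
    intro x hx
    simp only [stripWeight]
    rw [abs_of_pos hx.1, Real.mul_rpow hx.1.le (by linarith [hx.2])]
  have h2 : IntegrableOn stripWeight (Ioo (-1) 0) := by
    have := h1.comp_neg
    rw [show -Ioo (0 : ℝ) 1 = Ioo (-1) 0 by simp] at this
    refine this.congr_fun (fun x _ => ?_) measurableSet_Ioo
    simp [stripWeight]
  have h3 : (Ioo (-1) 1 : Set ℝ) ⊆ (Ioo (-1) 0 ∪ {0}) ∪ Ioo 0 1 := by
    intro x hx
    rcases lt_trichotomy x 0 with h | h | h
    · exact Or.inl (Or.inl ⟨hx.1, h⟩)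
    · exact Or.inl (Or.inr h)
    · exact Or.inr ⟨h, hx.2⟩
  exact (((h2.union (by simp)).union h1)).mono_set h3

lemma integral_arc_eq_integral_boundary {F : ℂ → ℂ} {Fb : ℝ → ℂ} {y y' : ℝ → ℝ} {M L : ℝ}
    (hF : DifferentiableOn ℂ F halfStrip)
    (hM : ∀ q ∈ halfStrip, q.re ≠ 0 → q.im ≤ 1 → ‖F q‖ ≤ M * stripWeight q.re)
    (hFb : ∀ ξ ∈ Ioo (-1 : ℝ) 1, ξ ≠ 0 →
      Tendsto (fun τ : ℝ => F (ξ + τ * Complex.I)) (𝓝[>] 0) (𝓝 (Fb ξ)))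
    (hy : ∀ ξ ∈ Ioo (-1 : ℝ) 1, HasDerivAt y (y' ξ) ξ)
    (hy' : ContinuousOn y' (Ioo (-1) 1))
    (hL : ∀ ξ ∈ Ioo (-1 : ℝ) 1, |y' ξ| ≤ L)
    (hy0 : ∀ ξ ∈ Ioo (-1 : ℝ) 1, 0 < y ξ)
    (hy1 : ∀ ξ ∈ Ioo (-1 : ℝ) 1, y ξ ≤ 1 - ξ ^ 2) :
    IntegrableOn (fun ξ : ℝ => F (ξ + y ξ * Complex.I) * (1 + y' ξ * Complex.I)) (Ioo (-1) 1) ∧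
    IntegrableOn Fb (Ioo (-1) 1) ∧
    ∫ ξ in Ioo (-1 : ℝ) 1, F (ξ + y ξ * Complex.I) * (1 + y' ξ * Complex.I) =
      ∫ ξ in Ioo (-1 : ℝ) 1, Fb ξ := by
  obtain ⟨G, hG⟩ := convex_halfStrip.exists_forall_hasDerivWithinAt hF
  replace hG : ∀ q ∈ halfStrip, HasDerivAt G (F q) q := fun q hq =>
    (hG q hq).hasDerivAt (isOpen_halfStrip.mem_nhds hq)
  have hmem : ∀ t ∈ Ioc (0 : ℝ) 1, ∀ ξ ∈ Ioo (-1 : ℝ) 1,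
      (ξ + (t * y ξ : ℝ) * Complex.I : ℂ) ∈ halfStrip := fun t ht ξ hξ => by
    refine ⟨?_, ?_, ?_⟩ <;> simp <;> [exact hξ.1; exact hξ.2; exact mul_pos ht.1 (hy0 ξ hξ)]
  have hle : ∀ t ∈ Ioc (0 : ℝ) 1, ∀ ξ ∈ Ioo (-1 : ℝ) 1, t * y ξ ≤ 1 - ξ ^ 2 := fun t ht ξ hξ =>
    (mul_le_of_le_one_left (hy0 ξ hξ).le ht.2).trans (hy1 ξ hξ)
  have hbd : ∀ t ∈ Ioc (0 : ℝ) 1, ∀ ξ ∈ Ioo (-1 : ℝ) 1, ξ ≠ 0 →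
      ‖F (ξ + (t * y ξ : ℝ) * Complex.I)‖ ≤ M * stripWeight ξ := fun t ht ξ hξ h0 => by
    have := hM _ (hmem t ht ξ hξ) (by simpa using h0)
      (by simpa using (hle t ht ξ hξ).trans (by nlinarith))
    simpa using this
  -- the integrand along the arc scaled vertically by `t`
  set Φ : ℝ → ℝ → ℂ := fun t ξ =>
    F (ξ + (t * y ξ : ℝ) * Complex.I) * (1 + (t * y' ξ : ℝ) * Complex.I) with hΦ
  have hcurve : ∀ t : ℝ, ∀ ξ ∈ Ioo (-1 : ℝ) 1,
      HasDerivAt (fun ξ : ℝ => (ξ + (t * y ξ : ℝ) * Complex.I : ℂ))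
        (1 + (t * y' ξ : ℝ) * Complex.I) ξ := fun t ξ hξ =>
    (HasDerivAt.ofReal_comp (hasDerivAt_id ξ)).add
      (((hy ξ hξ).const_mul t).ofReal_comp.mul_const Complex.I)
  have hyc : ContinuousOn y (Ioo (-1) 1) := fun ξ hξ => (hy ξ hξ).continuousAt.continuousWithinAt
  have hΦc : ∀ t ∈ Ioc (0 : ℝ) 1, ContinuousOn (Φ t) (Ioo (-1) 1) := fun t ht => by
    refine ContinuousOn.mul (hF.continuousOn.comp ?_ (hmem t ht)) ?_
    · exact fun ξ hξ => (hcurve t ξ hξ).continuousAt.continuousWithinAt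
    · exact continuousOn_const.add ((Complex.continuous_ofReal.comp_continuousOn
        (continuousOn_const.mul hy')).mul continuousOn_const)
  have hΦbd : ∀ t ∈ Ioc (0 : ℝ) 1, ∀ ξ ∈ Ioo (-1 : ℝ) 1, ξ ≠ 0 →
      ‖Φ t ξ‖ ≤ M * stripWeight ξ * (1 + L) := fun t ht ξ hξ h0 => by
    rw [hΦ, norm_mul]
    refine mul_le_mul (hbd t ht ξ hξ h0) ?_ (norm_nonneg _)
      ((norm_nonneg _).trans (hbd t ht ξ hξ h0))
    refine (norm_add_le _ _).trans ?_
    rw [norm_one, norm_mul, Complex.norm_I, mul_one, Complex.norm_real, Real.norm_eq_abs, abs_mul,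
      abs_of_pos ht.1]
    have := mul_le_of_le_one_left (abs_nonneg (y' ξ)) ht.2
    linarith [hL ξ hξ]
  have hdom : IntegrableOn (fun ξ => M * stripWeight ξ * (1 + L)) (Ioo (-1) 1) :=
    (integrableOn_stripWeight.const_mul M).mul_const _
  have hae0 : ∀ᵐ ξ ∂(volume.restrict (Ioo (-1 : ℝ) 1)), ξ ∈ Ioo (-1 : ℝ) 1 ∧ ξ ≠ 0 := by
    filter_upwards [ae_restrict_mem measurableSet_Ioo,
      ae_restrict_of_ae (Measure.ae_ne volume (0 : ℝ))] with ξ h1 h2 using ⟨h1, h2⟩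
  have hΦi : ∀ t ∈ Ioc (0 : ℝ) 1, IntegrableOn (Φ t) (Ioo (-1) 1) := fun t ht =>
    Integrable.mono' hdom ((hΦc t ht).aestronglyMeasurable measurableSet_Ioo) (by
      filter_upwards [hae0] with ξ hξ using hΦbd t ht ξ hξ.1 hξ.2)
  have hΦ1 : (fun ξ : ℝ => F (ξ + y ξ * Complex.I) * (1 + y' ξ * Complex.I)) = Φ 1 := by
    funext ξ; simp [hΦ]
  have hlim : ∀ ξ ∈ Ioo (-1 : ℝ) 1, ξ ≠ 0 →
      Tendsto (fun n : ℕ => Φ (1 / (n + 1 : ℝ)) ξ) atTop (𝓝 (Fb ξ)) := fun ξ hξ h0 => by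
    have ht := tendsto_one_div_add_atTop_nhds_zero_nat (𝕜 := ℝ)
    have h1 : Tendsto (fun n : ℕ => (1 / (n + 1 : ℝ)) * y ξ) atTop (𝓝[>] 0) := by
      refine tendsto_nhdsWithin_iff.2 ⟨by simpa using ht.mul_const (y ξ), ?_⟩
      exact Eventually.of_forall fun n => mul_pos (by positivity) (hy0 ξ hξ)
    have h2 := (hFb ξ hξ h0).comp h1
    have h3 : Tendsto (fun n : ℕ => (1 + ((1 / (n + 1 : ℝ)) * y' ξ : ℝ) * Complex.I : ℂ)) atTop
        (𝓝 (1 + ((0 * y' ξ : ℝ) : ℂ) * Complex.I)) :=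
      tendsto_const_nhds.add (((Complex.continuous_ofReal.tendsto _).comp
        (ht.mul_const (y' ξ))).mul_const _)
    simpa [hΦ, Function.comp_def] using h2.mul h3
  have htn : ∀ n : ℕ, (1 / (n + 1 : ℝ)) ∈ Ioc (0 : ℝ) 1 := fun n =>
    ⟨by positivity, by rw [div_le_one (by positivity)]; linarith [n.cast_nonneg (α := ℝ)]⟩
  have hFbm : AEStronglyMeasurable Fb (volume.restrict (Ioo (-1 : ℝ) 1)) :=
    aestronglyMeasurable_of_tendsto_ae atTop (fun n => (hΦi _ (htn n)).aestronglyMeasurable) (by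
      filter_upwards [hae0] with ξ hξ using hlim ξ hξ.1 hξ.2)
  have hFbbd : ∀ ξ ∈ Ioo (-1 : ℝ) 1, ξ ≠ 0 → ‖Fb ξ‖ ≤ M * stripWeight ξ * (1 + L) :=
    fun ξ hξ h0 => le_of_tendsto' (hlim ξ hξ h0).norm fun n => hΦbd _ (htn n) ξ hξ h0
  have hFbi : IntegrableOn Fb (Ioo (-1) 1) :=
    Integrable.mono' hdom hFbm (by filter_upwards [hae0] with ξ hξ using hFbbd ξ hξ.1 hξ.2)
  rw [hΦ1]
  refine ⟨hΦi 1 ⟨one_pos, le_rfl⟩, hFbi, ?_⟩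
  have hvert : ∀ ξ ∈ Ioo (-1 : ℝ) 1, ξ ≠ 0 → ∀ t ∈ Ioc (0 : ℝ) 1,
      ‖G (ξ + ((1 : ℝ) * y ξ : ℝ) * Complex.I) - G (ξ + (t * y ξ : ℝ) * Complex.I)‖ ≤
        M * stripWeight ξ * (1 - ξ ^ 2) := fun ξ hξ h0 t ht => by
    have hd : ∀ s ∈ Ioc (0 : ℝ) 1, HasDerivWithinAt
        (fun s : ℝ => G (ξ + (s * y ξ : ℝ) * Complex.I))
        (F (ξ + (s * y ξ : ℝ) * Complex.I) * ((1 * y ξ : ℝ) * Complex.I)) (Ioc 0 1) s :=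
      fun s hs => ((hG _ (hmem s hs ξ hξ)).comp s
        ((((hasDerivAt_id s).mul_const (y ξ)).ofReal_comp.mul_const Complex.I).const_add
          (ξ : ℂ))).hasDerivWithinAt
    have hM0 := (norm_nonneg _).trans (hbd t ht ξ hξ h0)
    have := Convex.norm_image_sub_le_of_norm_hasDerivWithin_le
      (C := M * stripWeight ξ * (1 - ξ ^ 2))
      hd (fun s hs => by
        rw [norm_mul, norm_mul, Complex.norm_I, mul_one, Complex.norm_real, one_mul,
          Real.norm_of_nonneg (hy0 ξ hξ).le]
        exact mul_le_mul (hbd s hs ξ hξ h0) (hy1 ξ hξ) (hy0 ξ hξ).le hM0) (convex_Ioc 0 1) ht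
        ⟨one_pos, le_rfl⟩
    refine this.trans (mul_le_of_le_one_right (mul_nonneg hM0 ?_) ?_)
    · linarith [hy0 ξ hξ, hy1 ξ hξ]
    · rw [Real.norm_of_nonneg (by linarith [ht.2])]; linarith [ht.1]
  have hftc : ∀ b ∈ Ioo (0 : ℝ) 1, ∀ t ∈ Ioc (0 : ℝ) 1, ∫ ξ in Ioo (-b) b, Φ t ξ =
      G (b + (t * y b : ℝ) * Complex.I) - G ((-b : ℝ) + (t * y (-b) : ℝ) * Complex.I) :=
    fun b hb t ht => by
    have hsub : uIcc (-b) b ⊆ Ioo (-1) 1 := by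
      rw [uIcc_of_le (by linarith [hb.1])]
      exact fun ξ hξ => ⟨by linarith [hξ.1, hb.2], by linarith [hξ.2, hb.2]⟩
    rw [← integral_Ioc_eq_integral_Ioo, ← intervalIntegral.integral_of_le (by linarith [hb.1])]
    exact intervalIntegral.integral_eq_sub_of_hasDerivAt
      (f := fun ξ : ℝ => G (ξ + (t * y ξ : ℝ) * Complex.I))
      (fun ξ hξ => (hG _ (hmem t ht ξ (hsub hξ))).comp ξ (hcurve t ξ (hsub hξ)))
      ((hΦc t ht).mono hsub).intervalIntegrable
  have hIoo : ∀ b ∈ Ioo (0 : ℝ) 1, Ioo (-b) b ⊆ Ioo (-1 : ℝ) 1 := fun b hb ξ hξ =>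
    ⟨by linarith [hξ.1, hb.2], by linarith [hξ.2, hb.2]⟩
  have hb1 : ∀ b ∈ Ioo (0 : ℝ) 1,
      ‖(∫ ξ in Ioo (-b) b, Φ 1 ξ) - ∫ ξ in Ioo (-b) b, Fb ξ‖ ≤
        2 * (M * stripWeight b * (1 - b ^ 2)) := fun b hb => by
    have hb' : b ∈ Ioo (-1 : ℝ) 1 := ⟨by linarith [hb.1], hb.2⟩
    have hb'' : -b ∈ Ioo (-1 : ℝ) 1 := ⟨by linarith [hb.2], by linarith [hb.1]⟩
    have hl : Tendsto (fun n : ℕ => ∫ ξ in Ioo (-b) b, Φ (1 / (n + 1 : ℝ)) ξ) atTop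
        (𝓝 (∫ ξ in Ioo (-b) b, Fb ξ)) := by
      refine tendsto_integral_of_dominated_convergence _
        (fun n => ((hΦi _ (htn n)).mono_set (hIoo b hb)).aestronglyMeasurable)
        (hdom.mono_set (hIoo b hb)) (fun n => ?_) ?_
      · filter_upwards [ae_restrict_of_ae_restrict_of_subset (hIoo b hb) hae0] with ξ hξ
          using hΦbd _ (htn n) ξ hξ.1 hξ.2
      · filter_upwards [ae_restrict_of_ae_restrict_of_subset (hIoo b hb) hae0] with ξ hξ
          using hlim ξ hξ.1 hξ.2
    refine le_of_tendsto' (tendsto_const_nhds.sub hl).norm fun n => ?_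
    rw [hftc b hb _ ⟨one_pos, le_rfl⟩, hftc b hb _ (htn n)]
    have e1 := hvert b hb' hb.1.ne' _ (htn n)
    have e2 := hvert (-b) hb'' (neg_ne_zero.2 hb.1.ne') _ (htn n)
    have e3 : stripWeight (-b) = stripWeight b := by simp [stripWeight]
    rw [e3, neg_sq] at e2
    calc _ = ‖(G (b + ((1 : ℝ) * y b : ℝ) * Complex.I) -
            G (b + ((1 / (n + 1 : ℝ)) * y b : ℝ) * Complex.I)) -
          (G ((-b : ℝ) + ((1 : ℝ) * y (-b) : ℝ) * Complex.I) -
            G ((-b : ℝ) + ((1 / (n + 1 : ℝ)) * y (-b) : ℝ) * Complex.I))‖ := by congr 1; ring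
      _ ≤ _ := (norm_sub_le _ _).trans (by linarith)
  have hbn : Tendsto (fun n : ℕ => 1 - 1 / ((n : ℝ) + 1 + 1)) atTop (𝓝 1) := by
    have := (tendsto_one_div_add_atTop_nhds_zero_nat (𝕜 := ℝ)).comp (tendsto_add_atTop_nat 1)
    simpa [Function.comp_def] using this.const_sub 1
  have hbnm : ∀ n : ℕ, 1 - 1 / ((n : ℝ) + 1 + 1) ∈ Ioo (0 : ℝ) 1 := fun n => by
    have h2 : 1 / ((n : ℝ) + 1 + 1) < 1 := by
      rw [div_lt_one (by positivity)]; linarith [n.cast_nonneg (α := ℝ)]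
    have h3 : 0 < 1 / ((n : ℝ) + 1 + 1) := by positivity
    exact ⟨by linarith, by linarith⟩
  have hcov := aecover_Ioo_of_Ioo (μ := volume) (a := fun n : ℕ => -(1 - 1 / ((n : ℝ) + 1 + 1)))
    (b := fun n : ℕ => 1 - 1 / ((n : ℝ) + 1 + 1)) (A := -1) (B := 1) hbn.neg hbn
  have hres : ∀ (f : ℝ → ℂ) (n : ℕ),
      ∫ ξ in Ioo (-(1 - 1 / ((n : ℝ) + 1 + 1))) (1 - 1 / ((n : ℝ) + 1 + 1)), f ξ
        ∂(volume.restrict (Ioo (-1 : ℝ) 1)) =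
      ∫ ξ in Ioo (-(1 - 1 / ((n : ℝ) + 1 + 1))) (1 - 1 / ((n : ℝ) + 1 + 1)), f ξ := fun f n => by
    rw [Measure.restrict_restrict measurableSet_Ioo, inter_eq_left.2 (hIoo _ (hbnm n))]
  have l1 := hcov.integral_tendsto_of_countably_generated (hΦi 1 ⟨one_pos, le_rfl⟩)
  have l2 := hcov.integral_tendsto_of_countably_generated hFbi
  simp only [hres] at l1 l2
  have hw : Tendsto (fun b : ℝ => 2 * (M * (b ^ (-(15 / 16) : ℝ) * (1 - b) ^ (1 / 16 : ℝ) *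
      (1 + b)))) (𝓝 1) (𝓝 (2 * (M * ((1 : ℝ) ^ (-(15 / 16) : ℝ) * (1 - 1) ^ (1 / 16 : ℝ) *
      (1 + 1))))) := by
    refine ContinuousAt.tendsto (x := (1 : ℝ)) ?_
    have h1 : ContinuousAt (fun b : ℝ => b ^ (-(15 / 16) : ℝ)) 1 :=
      continuousAt_id.rpow_const (Or.inl one_ne_zero)
    have h2 : ContinuousAt (fun b : ℝ => (1 - b) ^ (1 / 16 : ℝ)) 1 :=
      (continuousAt_const.sub continuousAt_id).rpow_const (Or.inr (by norm_num))
    exact ((h1.mul h2).mul (continuousAt_const.add continuousAt_id)).const_mul M |>.const_mul 2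
  rw [sub_self, Real.zero_rpow (by norm_num)] at hw
  simp only [mul_zero, zero_mul] at hw
  have hfin := le_of_tendsto_of_tendsto' (l1.sub l2).norm (hw.comp hbn) fun n => by
    refine (hb1 _ (hbnm n)).trans_eq ?_
    obtain ⟨h0, h1⟩ := hbnm n
    simp only [Function.comp]
    generalize 1 - 1 / ((n : ℝ) + 1 + 1) = b at h0 h1
    have h3 : (1 - b) ^ (1 / 16 : ℝ) = (1 - b) ^ (-(15 / 16) : ℝ) * (1 - b) := by
      rw [← Real.rpow_add_one (by linarith)]; norm_num
    rw [stripWeight, abs_of_pos h0, Real.mul_rpow h0.le (by linarith), h3]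
    ring
  exact sub_eq_zero.1 (norm_le_zero_iff.1 hfin)

/-- The complex continuation of `w ↦ ellInt 1 w` to the slit plane. -/
noncomputable def ellIntC (w : ℂ) : ℂ :=
  (1 / Real.pi : ℝ) * ∫ u in Ioi (0 : ℝ), ((√(u * (u + 1)))⁻¹ : ℝ) * (u + w) ^ ((-(1 / 2) : ℝ) : ℂ)

lemma ellIntC_ofReal {w : ℝ} (hw : 0 < w) : ellIntC w = ellInt 1 w := by
  rw [ellIntC, ellInt, Complex.ofReal_mul, ← integral_complex_ofReal]
  congr 1
  refine setIntegral_congr_fun measurableSet_Ioi fun u hu => ?_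
  have hu : (0 : ℝ) < u := hu
  rw [← Complex.ofReal_add, ← Complex.ofReal_cpow (by positivity), ← Complex.ofReal_mul,
    Real.rpow_neg (by positivity), ← Real.sqrt_eq_rpow, ← mul_inv, ← Real.sqrt_mul (by positivity)]

lemma integrableOn_rpow_mul_abs_sub_one_rpow :
    IntegrableOn (fun s : ℝ => s ^ (-(9 / 16) : ℝ) * |s - 1| ^ (-(1 / 2) : ℝ)) (Ioi 0) := by
  have h1 : IntegrableOn (fun s : ℝ => s ^ (-(9 / 16) : ℝ) * |s - 1| ^ (-(1 / 2) : ℝ))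
      (Ioo 0 1) := by
    refine (integrableOn_rpow_mul_one_sub_rpow (a := -(9 / 16)) (b := -(1 / 2))
      (by norm_num) (by norm_num)).congr_fun (fun s hs => ?_) measurableSet_Ioo
    simp only
    rw [abs_of_neg (by linarith [hs.2]), neg_sub]
  have hm : Measurable fun s : ℝ => s ^ (-(9 / 16) : ℝ) * |s - 1| ^ (-(1 / 2) : ℝ) := by
    refine (measurable_id.pow_const _).mul ?_
    exact (by fun_prop : Measurable fun s : ℝ => |s - 1|).pow_const _
  have h2 : IntegrableOn (fun s : ℝ => s ^ (-(9 / 16) : ℝ) * |s - 1| ^ (-(1 / 2) : ℝ))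
      (Ioc 1 2) := by
    have : IntegrableOn (fun s : ℝ => (s - 1) ^ (-(1 / 2) : ℝ)) (Ioc 1 2) := by
      have h := (intervalIntegral.intervalIntegrable_rpow' (a := 0) (b := 1)
        (r := -(1 / 2)) (by norm_num)).comp_sub_right 1
      norm_num at h
      rwa [intervalIntegrable_iff_integrableOn_Ioc_of_le (by norm_num)] at h
    refine this.mono' hm.aestronglyMeasurable ?_
    filter_upwards [ae_restrict_mem measurableSet_Ioc] with s hs
    have h0 : 0 < s - 1 := by linarith [hs.1]
    rw [Real.norm_of_nonneg (by have := hs.1; positivity), abs_of_pos h0]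
    refine mul_le_of_le_one_left (by positivity) ?_
    exact Real.rpow_le_one_of_one_le_of_nonpos hs.1.le (by norm_num)
  have h3 : IntegrableOn (fun s : ℝ => s ^ (-(9 / 16) : ℝ) * |s - 1| ^ (-(1 / 2) : ℝ)) (Ioi 2) := by
    refine ((integrableOn_Ioi_rpow_of_lt (a := -(17 / 16)) (c := 2) (by norm_num)
      (by norm_num)).const_mul (2 ^ (1 / 2 : ℝ))).mono' hm.aestronglyMeasurable ?_
    filter_upwards [ae_restrict_mem measurableSet_Ioi] with s hs
    have hs : (2 : ℝ) < s := hs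
    have h0 : 0 < s - 1 := by linarith
    rw [Real.norm_of_nonneg (by positivity), abs_of_pos h0,
      show (-(17 / 16) : ℝ) = -(9 / 16) + -(1 / 2) by norm_num, Real.rpow_add (by linarith)]
    have : (s - 1) ^ (-(1 / 2) : ℝ) ≤ (s / 2) ^ (-(1 / 2) : ℝ) :=
      Real.rpow_le_rpow_of_nonpos (by linarith) (by linarith) (by norm_num)
    rw [Real.div_rpow (by linarith) (by norm_num), Real.rpow_neg (by norm_num : (0 : ℝ) ≤ 2),
      div_inv_eq_mul] at this
    calc _ ≤ s ^ (-(9 / 16) : ℝ) * (s ^ (-(1 / 2) : ℝ) * 2 ^ (1 / 2 : ℝ)) := by gcongr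
      _ = _ := by ring
  have h4 : IntegrableOn (fun s : ℝ => s ^ (-(9 / 16) : ℝ) * |s - 1| ^ (-(1 / 2) : ℝ)) {1} := by
    simp [IntegrableOn, Measure.restrict_singleton]
  refine ((h1.union h4).union (h2.union h3)).mono_set ?_
  intro s hs
  have hs : (0 : ℝ) < s := hs
  rcases lt_trichotomy s 1 with h | h | h
  · exact Or.inl (Or.inl ⟨hs, h⟩)
  · exact Or.inl (Or.inr h)
  · rcases le_or_gt s 2 with h' | h'
    · exact Or.inr (Or.inl ⟨h, h'⟩)
    · exact Or.inr (Or.inr h')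

lemma ofReal_mul_cpow {r : ℝ} (hr : 0 < r) (z e : ℂ) :
    ((r : ℂ) * z) ^ e = (r : ℂ) ^ e * z ^ e := by
  rcases eq_or_ne z 0 with rfl | hz
  · rcases eq_or_ne e 0 with rfl | he
    · simp
    · simp [Complex.zero_cpow he]
  · have hr' : (r : ℂ) ≠ 0 := by exact_mod_cast hr.ne'
    rw [Complex.cpow_def_of_ne_zero (mul_ne_zero hr' hz), Complex.cpow_def_of_ne_zero hr',
      Complex.cpow_def_of_ne_zero hz, Complex.log_ofReal_mul hr hz, ← Complex.exp_add,
      Complex.ofReal_log hr.le, add_mul]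

lemma ellIntC_eq_integral_scaled {w : ℂ} (hw : w ≠ 0) :
    ellIntC w = (1 / Real.pi : ℝ) * ∫ s in Ioi (0 : ℝ),
      ((√(s * (‖w‖ * s + 1)))⁻¹ : ℝ) * (s + w / ‖w‖) ^ ((-(1 / 2) : ℝ) : ℂ) := by
  have hn : 0 < ‖w‖ := norm_pos_iff.2 hw
  have h := integral_comp_mul_left_Ioi (fun u : ℝ => (((√(u * (u + 1)))⁻¹ : ℝ) : ℂ) *
    (u + w) ^ ((-(1 / 2) : ℝ) : ℂ)) 0 hn
  rw [mul_zero, eq_comm, inv_smul_eq_iff₀ hn.ne', ← integral_smul] at h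
  rw [ellIntC, h]
  congr 1
  refine setIntegral_congr_fun measurableSet_Ioi fun s hs => ?_
  have hs : (0 : ℝ) < s := hs
  have hn' : (‖w‖ : ℂ) ≠ 0 := by exact_mod_cast hn.ne'
  simp only [Complex.real_smul]
  rw [show ((‖w‖ * s : ℝ) : ℂ) + w = (‖w‖ : ℝ) * (s + w / ‖w‖) by push_cast; field_simp,
    ofReal_mul_cpow hn, ← Complex.ofReal_cpow hn.le, mul_assoc ‖w‖ s, Real.sqrt_mul hn.le,
    Real.rpow_neg hn.le, ← Real.sqrt_eq_rpow, ← mul_assoc, ← mul_assoc, ← Complex.ofReal_mul,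
    ← Complex.ofReal_mul]
  congr 2
  have := Real.sq_sqrt hn.le
  have h0 := Real.sqrt_pos.2 hn
  field_simp
  linarith

lemma abs_sub_one_le_norm_add_div_norm (w : ℂ) {s : ℝ} (hs : 0 < s) :
    |s - 1| ≤ ‖(s : ℂ) + w / ‖w‖‖ ∨ w = 0 := by
  rcases eq_or_ne w 0 with h | h
  · exact Or.inr h
  · have hn : ‖w‖ ≠ 0 := norm_ne_zero_iff.2 h
    have := abs_norm_sub_norm_le (s : ℂ) (-(w / ‖w‖))
    rw [sub_neg_eq_add, norm_neg, norm_div, Complex.norm_real, Complex.norm_real, norm_norm,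
      div_self hn, Real.norm_of_nonneg hs.le] at this
    exact Or.inl this

/-- A pointwise bound of the rescaled integrand. -/
lemma norm_scaled_integrand_le {w : ℂ} (hw : w ≠ 0) {s : ℝ} (hs : 0 < s) (hs1 : s ≠ 1) :
    ‖(((√(s * (‖w‖ * s + 1)))⁻¹ : ℝ) : ℂ) * (s + w / ‖w‖) ^ ((-(1 / 2) : ℝ) : ℂ)‖ ≤
      ‖w‖ ^ (-(1 / 16) : ℝ) * (s ^ (-(9 / 16) : ℝ) * |s - 1| ^ (-(1 / 2) : ℝ)) := by
  have hn : 0 < ‖w‖ := norm_pos_iff.2 hw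
  have h1 := (abs_sub_one_le_norm_add_div_norm w hs).resolve_right hw
  have h2 : 0 < |s - 1| := abs_pos.2 (sub_ne_zero.2 hs1)
  rw [norm_mul, Complex.norm_cpow_real, Complex.norm_real, Real.norm_of_nonneg (by positivity),
    ← mul_assoc]
  refine mul_le_mul ?_ (Real.rpow_le_rpow_of_nonpos h2 h1 (by norm_num)) (by positivity)
    (by positivity)
  have h3 : (‖w‖ * s) ^ (1 / 8 : ℝ) ≤ ‖w‖ * s + 1 := by
    calc _ ≤ (‖w‖ * s + 1) ^ (1 / 8 : ℝ) := by gcongr; linarith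
      _ ≤ (‖w‖ * s + 1) ^ (1 : ℝ) :=
        Real.rpow_le_rpow_of_exponent_le (by have := mul_pos hn hs; linarith) (by norm_num)
      _ = _ := Real.rpow_one _
  rw [Real.sqrt_eq_rpow, ← Real.rpow_neg (by positivity), Real.mul_rpow hs.le (by positivity)]
  calc _ ≤ s ^ (-(1 / 2) : ℝ) * ((‖w‖ * s) ^ (1 / 8 : ℝ)) ^ (-(1 / 2) : ℝ) := by
        gcongr ?_ * ?_
        exact Real.rpow_le_rpow_of_nonpos (by positivity) h3 (by norm_num)
    _ = _ := by
      rw [← Real.rpow_mul (by positivity), Real.mul_rpow hn.le hs.le,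
        mul_left_comm, ← Real.rpow_add hs]
      norm_num

lemma exists_norm_ellIntC_le : ∃ C : ℝ, 0 ≤ C ∧
    ∀ w : ℂ, w ≠ 0 → ‖ellIntC w‖ ≤ C * ‖w‖ ^ (-(1 / 16) : ℝ) := by
  refine ⟨1 / Real.pi * ∫ s in Ioi (0 : ℝ), s ^ (-(9 / 16) : ℝ) * |s - 1| ^ (-(1 / 2) : ℝ),
    mul_nonneg (by positivity) (setIntegral_nonneg measurableSet_Ioi fun s hs => ?_),
    fun w hw => ?_⟩
  · have hs : (0 : ℝ) < s := hs
    positivity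
  rw [ellIntC_eq_integral_scaled hw, norm_mul, Complex.norm_real,
    Real.norm_of_nonneg (by positivity),
    mul_assoc]
  gcongr
  rw [mul_comm, ← integral_const_mul]
  refine norm_integral_le_of_norm_le (integrableOn_rpow_mul_abs_sub_one_rpow.const_mul _) ?_
  have : ∀ᵐ s : ℝ, s ≠ 1 := by simp [ae_iff]
  filter_upwards [ae_restrict_mem measurableSet_Ioi, ae_restrict_of_ae this] with s hs hs1
  exact norm_scaled_integrand_le hw hs hs1

lemma ofReal_add_mem_slitPlane {w : ℂ} (hw : w ∈ Complex.slitPlane) {u : ℝ} (hu : 0 < u) :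
    (u : ℂ) + w ∈ Complex.slitPlane := by
  rw [Complex.mem_slitPlane_iff] at hw ⊢
  simp only [Complex.add_re, Complex.ofReal_re, Complex.add_im, Complex.ofReal_im, zero_add]
  exact hw.imp (fun h => by linarith) id

lemma exists_mul_le_norm_ofReal_add {w : ℂ} (hw : w ∈ Complex.slitPlane) :
    ∃ c : ℝ, 0 < c ∧ ∀ u : ℝ, 0 < u → c * (u + 1) ≤ ‖(u : ℂ) + w‖ := by
  have hc : IsCompact (segment ℝ 1 w) := by
    rw [segment_eq_image]
    exact isCompact_Icc.image (by fun_prop)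
  obtain ⟨z, hz, hmin⟩ := hc.exists_isMinOn ⟨1, left_mem_segment ℝ 1 w⟩ continuous_norm.continuousOn
  have hsub : segment ℝ 1 w ⊆ Complex.slitPlane :=
    Complex.starConvex_one_slitPlane.segment_subset hw
  refine ⟨‖z‖, norm_pos_iff.2 (Complex.slitPlane_ne_zero (hsub hz)), fun u hu => ?_⟩
  have h1 : (0 : ℝ) < u + 1 := by positivity
  have h1' : ((u : ℂ) + 1) ≠ 0 := by exact_mod_cast h1.ne'
  have hmem : ((u : ℂ) + w) / (u + 1) ∈ segment ℝ 1 w := by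
    refine ⟨u / (u + 1), 1 / (u + 1), by positivity, by positivity, by field_simp, ?_⟩
    simp only [Complex.real_smul]
    push_cast
    field_simp
  have := hmin hmem
  simp only [mem_ofPred_eq, norm_div] at this
  rw [show (u : ℂ) + 1 = ((u + 1 : ℝ) : ℂ) by push_cast; ring, Complex.norm_real,
    Real.norm_of_nonneg h1.le, le_div_iff₀ h1] at this
  exact this

lemma integrableOn_ellIntC_integrand_one :
    IntegrableOn (fun u : ℝ => (√(u * (u + 1)))⁻¹ * (u + 1) ^ (-(1 / 2) : ℝ)) (Ioi 0) := by
  refine integrableOn_rpow_mul_abs_sub_one_rpow.mono' ?_ ?_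
  · refine Measurable.aestronglyMeasurable (Measurable.mul (by fun_prop) ?_)
    exact (by fun_prop : Measurable fun s : ℝ => s + 1).pow_const _
  have : ∀ᵐ s : ℝ, s ≠ 1 := by simp [ae_iff]
  filter_upwards [ae_restrict_mem measurableSet_Ioi, ae_restrict_of_ae this] with s hs hs1
  have hs : (0 : ℝ) < s := hs
  have := norm_scaled_integrand_le (w := 1) one_ne_zero hs hs1
  rw [norm_mul, Complex.norm_cpow_real] at this
  simp only [norm_one, one_mul, Complex.ofReal_one, div_one, Complex.norm_real,
    Real.one_rpow] at this
  rw [show (s : ℂ) + 1 = ((s + 1 : ℝ) : ℂ) by push_cast; ring, Complex.norm_real,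
    Real.norm_of_nonneg (by positivity : (0 : ℝ) ≤ s + 1)] at this
  rw [norm_mul, Real.norm_of_nonneg (by positivity : (0 : ℝ) ≤ (s + 1) ^ (-(1 / 2) : ℝ))]
  exact this

lemma differentiableAt_ellIntC {w : ℂ} (hw : w ∈ Complex.slitPlane) :
    DifferentiableAt ℂ ellIntC w := by
  obtain ⟨c, hc, hcw⟩ := exists_mul_le_norm_ofReal_add hw
  obtain ⟨ε, hε, hball⟩ := Metric.isOpen_iff.1 Complex.isOpen_slitPlane w hw
  set δ := min ε (c / 2) with hδ
  have hδ0 : 0 < δ := lt_min hε (by positivity)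
  have hlow : ∀ z ∈ Metric.ball w δ, ∀ u : ℝ, 0 < u → c / 2 * (u + 1) ≤ ‖(u : ℂ) + z‖ := by
    intro z hz u hu
    have h1 := hcw u hu
    have h2 : ‖z - w‖ < c / 2 := (mem_ball_iff_norm.1 hz).trans_le (min_le_right _ _)
    have h3 : ‖(u : ℂ) + w‖ ≤ ‖(u : ℂ) + z‖ + ‖z - w‖ := by
      calc _ = ‖((u : ℂ) + z) - (z - w)‖ := by ring_nf
        _ ≤ _ := norm_sub_le _ _
    nlinarith
  have hslit : ∀ z ∈ Metric.ball w δ, z ∈ Complex.slitPlane := fun z hz =>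
    hball (Metric.ball_subset_ball (min_le_left _ _) hz)
  have hmeas : ∀ (z : ℂ) (e : ℝ), AEStronglyMeasurable
      (fun u : ℝ => (((√(u * (u + 1)))⁻¹ : ℝ) : ℂ) * (u + z) ^ (e : ℂ))
      (volume.restrict (Ioi 0)) := fun z e => by
    refine Measurable.aestronglyMeasurable (Measurable.mul (by fun_prop) ?_)
    exact (by fun_prop : Measurable fun u : ℝ => (u : ℂ) + z).pow_const _
  have key := hasDerivAt_integral_of_dominated_loc_of_deriv_le (𝕜 := ℂ)
    (μ := volume.restrict (Ioi (0 : ℝ)))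
    (F := fun z (u : ℝ) => (((√(u * (u + 1)))⁻¹ : ℝ) : ℂ) * (u + z) ^ ((-(1 / 2) : ℝ) : ℂ))
    (F' := fun z (u : ℝ) => (((√(u * (u + 1)))⁻¹ : ℝ) : ℂ) *
      (((-(1 / 2) : ℝ) : ℂ) * (u + z) ^ ((-(3 / 2) : ℝ) : ℂ)))
    (x₀ := w) (s := Metric.ball w δ)
    (bound := fun u => 1 / 2 * (c / 2) ^ (-(3 / 2) : ℝ) *
      ((√(u * (u + 1)))⁻¹ * (u + 1) ^ (-(1 / 2) : ℝ)))
    (Metric.ball_mem_nhds w hδ0) (Eventually.of_forall fun z => hmeas z _) ?_ ?_ ?_ ?_ ?_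
  · exact (key.2.differentiableAt.const_mul _)
  · refine (integrableOn_ellIntC_integrand_one.const_mul ((c / 2) ^ (-(1 / 2) : ℝ))).mono'
      (hmeas w _) ?_
    filter_upwards [ae_restrict_mem measurableSet_Ioi] with u hu
    have hu : (0 : ℝ) < u := hu
    rw [norm_mul, Complex.norm_cpow_real, Complex.norm_real, Real.norm_of_nonneg (by positivity),
      mul_left_comm, ← Real.mul_rpow (by positivity) (by positivity)]
    gcongr ?_ * ?_
    exact Real.rpow_le_rpow_of_nonpos (by positivity)
      (hlow w (Metric.mem_ball_self hδ0) u hu) (by norm_num)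
  · have := (hmeas w (-(3 / 2))).const_mul ((-(1 / 2) : ℝ) : ℂ)
    refine this.congr (Eventually.of_forall fun u => ?_)
    simp only
    ring
  · filter_upwards [ae_restrict_mem measurableSet_Ioi] with u hu z hz
    have hu : (0 : ℝ) < u := hu
    rw [norm_mul, norm_mul, Complex.norm_cpow_real, Complex.norm_real, Complex.norm_real,
      Real.norm_of_nonneg (by positivity), norm_neg, Real.norm_of_nonneg (by norm_num)]
    have h1 : ‖(u : ℂ) + z‖ ^ (-(3 / 2) : ℝ) ≤ (c / 2 * (u + 1)) ^ (-(3 / 2) : ℝ) :=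
      Real.rpow_le_rpow_of_nonpos (by positivity) (hlow z hz u hu) (by norm_num)
    have h2 : (u + 1) ^ (-(3 / 2) : ℝ) ≤ (u + 1) ^ (-(1 / 2) : ℝ) :=
      Real.rpow_le_rpow_of_exponent_le (by linarith) (by norm_num)
    rw [Real.mul_rpow (by positivity) (by positivity)] at h1
    calc _ ≤ (√(u * (u + 1)))⁻¹ * (1 / 2 * ((c / 2) ^ (-(3 / 2) : ℝ) *
          (u + 1) ^ (-(1 / 2) : ℝ))) := by
          gcongr
          exact h1.trans (by gcongr)
      _ = _ := by ring
  · exact integrableOn_ellIntC_integrand_one.const_mul _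
  · filter_upwards [ae_restrict_mem measurableSet_Ioi] with u hu z hz
    have h1 := ((hasDerivAt_id z).const_add (u : ℂ)).cpow_const
      (c := ((-(1 / 2) : ℝ) : ℂ)) (ofReal_add_mem_slitPlane (hslit z hz) hu)
    have h2 := h1.const_mul (((√(u * (u + 1)))⁻¹ : ℝ) : ℂ)
    refine h2.congr_deriv ?_
    rw [mul_one, id, show ((-(1 / 2) : ℝ) : ℂ) - 1 = ((-(3 / 2) : ℝ) : ℂ) by push_cast; norm_num]

lemma tendsto_cpow_nhdsWithin_im_neg {x : ℝ} (hx : x < 0) (e : ℝ) :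
    Tendsto (fun z : ℂ => z ^ (e : ℂ)) (𝓝[{z | z.im < 0}] (x : ℂ))
      (𝓝 (((-x) ^ e : ℝ) * Complex.exp (-(Real.pi * e * Complex.I)))) := by
  have h := Complex.tendsto_log_nhdsWithin_im_neg_of_re_neg_of_im_zero (z := (x : ℂ))
    (by simpa using hx) (by simp)
  have h2 := (Complex.continuous_exp.tendsto _).comp (h.mul_const (e : ℂ))
  rw [Complex.norm_real, Real.norm_of_nonpos hx.le] at h2
  have h3 : Complex.exp ((Real.log (-x) - Real.pi * Complex.I) * e) =
      ((-x) ^ e : ℝ) * Complex.exp (-(Real.pi * e * Complex.I)) := by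
    rw [Real.rpow_def_of_pos (by linarith), Complex.ofReal_exp, ← Complex.exp_add]
    congr 1; push_cast; ring
  rw [h3] at h2
  refine h2.congr' ?_
  filter_upwards [self_mem_nhdsWithin] with z hz
  have : z ≠ 0 := by rintro rfl; exact lt_irrefl (0 : ℝ) hz
  rw [Complex.cpow_def_of_ne_zero this]; rfl

lemma tendsto_cpow_nhdsWithin_im_pos {x : ℝ} (hx : x < 0) (e : ℝ) :
    Tendsto (fun z : ℂ => z ^ (e : ℂ)) (𝓝[{z | 0 < z.im}] (x : ℂ))
      (𝓝 (((-x) ^ e : ℝ) * Complex.exp (Real.pi * e * Complex.I))) := by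
  have h := (Complex.tendsto_log_nhdsWithin_im_nonneg_of_re_neg_of_im_zero (z := (x : ℂ))
    (by simpa using hx) (by simp)).mono_left
      (nhdsWithin_mono _ fun z (hz : 0 < z.im) => (hz.le : 0 ≤ z.im))
  have h2 := (Complex.continuous_exp.tendsto _).comp (h.mul_const (e : ℂ))
  rw [Complex.norm_real, Real.norm_of_nonpos hx.le] at h2
  have h3 : Complex.exp ((Real.log (-x) + Real.pi * Complex.I) * e) =
      ((-x) ^ e : ℝ) * Complex.exp (Real.pi * e * Complex.I) := by
    rw [Real.rpow_def_of_pos (by linarith), Complex.ofReal_exp, ← Complex.exp_add]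
    congr 1; push_cast; ring
  rw [h3] at h2
  refine h2.congr' ?_
  filter_upwards [self_mem_nhdsWithin] with z hz
  have : z ≠ 0 := by rintro rfl; exact lt_irrefl (0 : ℝ) hz
  rw [Complex.cpow_def_of_ne_zero this]; rfl

lemma integrableOn_boundary_integrand {ρ : ℝ} (hρ : 0 < ρ) :
    IntegrableOn (fun s : ℝ => (√(s * (ρ * s + 1)))⁻¹ * |s - 1| ^ (-(1 / 2) : ℝ)) (Ioi 0) := by
  refine (integrableOn_rpow_mul_abs_sub_one_rpow.const_mul (ρ ^ (-(1 / 16) : ℝ))).mono' ?_ ?_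
  · refine Measurable.aestronglyMeasurable (Measurable.mul (by fun_prop) ?_)
    exact (by fun_prop : Measurable fun s : ℝ => |s - 1|).pow_const _
  have : ∀ᵐ s : ℝ, s ≠ 1 := by simp [ae_iff]
  filter_upwards [ae_restrict_mem measurableSet_Ioi, ae_restrict_of_ae this] with s hs hs1
  have hs : (0 : ℝ) < s := hs
  have h := norm_scaled_integrand_le (w := -(ρ : ℂ)) (by simpa using hρ.ne') hs hs1
  have h1 : (s : ℂ) + -(ρ : ℂ) / ρ = ((s - 1 : ℝ) : ℂ) := by
    have : (ρ : ℂ) ≠ 0 := by exact_mod_cast hρ.ne'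
    push_cast; field_simp; ring
  rw [norm_neg, Complex.norm_real, Real.norm_of_nonneg hρ.le, h1, norm_mul, Complex.norm_cpow_real,
    Complex.norm_real, Complex.norm_real, Real.norm_eq_abs (s - 1)] at h
  rwa [norm_mul, Real.norm_of_nonneg (by positivity : (0 : ℝ) ≤ |s - 1| ^ (-(1 / 2) : ℝ))]

lemma integral_boundary_Ioi {ρ : ℝ} (hρ : 0 < ρ) :
    1 / Real.pi * ∫ s in Ioi (1 : ℝ), (√(s * (ρ * s + 1)))⁻¹ * |s - 1| ^ (-(1 / 2) : ℝ) =
      ellInt ρ (1 + ρ) := by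
  rw [ellInt]
  congr 1
  have himg : (fun s : ℝ => ρ * (s - 1)) '' Ioi 1 = Ioi 0 := by
    ext u
    constructor
    · rintro ⟨s, hs, rfl⟩
      have hs : (1 : ℝ) < s := hs
      exact mul_pos hρ (by linarith)
    · intro hu
      have hu : (0 : ℝ) < u := hu
      refine ⟨u / ρ + 1, ?_, by field_simp; ring⟩
      have : 0 < u / ρ := by positivity
      simpa using this
  rw [← himg, integral_image_eq_integral_abs_deriv_smul measurableSet_Ioi (f' := fun _ => ρ)
    (fun s _ => by
      simpa using (((hasDerivAt_id s).sub_const 1).const_mul ρ).hasDerivWithinAt)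
    (fun s _ t _ h => by
      have := mul_left_cancel₀ hρ.ne' h
      linarith)]
  refine setIntegral_congr_fun measurableSet_Ioi fun s hs => ?_
  have hs : (1 : ℝ) < s := hs
  have h1 : 0 < s - 1 := by linarith
  simp only [smul_eq_mul]
  rw [abs_of_pos h1, abs_of_pos hρ, Real.rpow_neg h1.le, ← Real.sqrt_eq_rpow, ← mul_inv,
    ← Real.sqrt_mul (by positivity),
    show ρ * (s - 1) * (ρ * (s - 1) + ρ) * (ρ * (s - 1) + (1 + ρ)) =
      ρ ^ 2 * (s * (ρ * s + 1) * (s - 1)) by ring, Real.sqrt_mul (sq_nonneg ρ),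
    Real.sqrt_sq hρ.le, mul_inv, mul_inv_cancel_left₀ hρ.ne']

lemma integral_boundary_Ioo {ρ : ℝ} (hρ : 0 < ρ) :
    1 / Real.pi * ∫ s in Ioo (0 : ℝ) 1, (√(s * (ρ * s + 1)))⁻¹ * |s - 1| ^ (-(1 / 2) : ℝ) =
      ellInt 1 (1 + ρ) := by
  rw [ellInt]
  congr 1
  have himg : (fun u : ℝ => u / (u + 1 + ρ)) '' Ioi 0 = Ioo 0 1 := by
    ext s
    constructor
    · rintro ⟨u, hu, rfl⟩
      have hu : (0 : ℝ) < u := hu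
      exact ⟨by positivity, by rw [div_lt_one (by positivity)]; linarith⟩
    · rintro ⟨h0, h1⟩
      have h1' : 0 < 1 - s := by linarith
      refine ⟨s * (1 + ρ) / (1 - s), by simp only [mem_Ioi]; positivity, ?_⟩
      simp only
      rw [div_eq_iff (by positivity)]
      field_simp
      ring
  rw [← himg, integral_image_eq_integral_abs_deriv_smul measurableSet_Ioi
    (f' := fun u => (1 + ρ) / (u + 1 + ρ) ^ 2)
    (fun u hu => by
      have hu : (0 : ℝ) < u := hu
      have h := (hasDerivAt_id u).div (((hasDerivAt_id u).add_const 1).add_const ρ)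
        (by simp only [id]; positivity)
      refine (h.congr_deriv ?_).hasDerivWithinAt
      simp only [id]
      ring)
    (fun u hu t ht h => by
      have hu : (0 : ℝ) < u := hu
      have ht : (0 : ℝ) < t := ht
      have h : u / (u + 1 + ρ) = t / (t + 1 + ρ) := h
      rw [div_eq_div_iff (by positivity) (by positivity)] at h
      have h2 : (u - t) * (1 + ρ) = 0 := by linarith
      rcases mul_eq_zero.1 h2 with h3 | h3 <;> linarith)]
  refine setIntegral_congr_fun measurableSet_Ioi fun u hu => ?_
  have hu : (0 : ℝ) < u := hu
  have h1 : 1 - u / (u + 1 + ρ) = (1 + ρ) / (u + 1 + ρ) := by field_simp; ring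
  simp only [smul_eq_mul]
  rw [abs_sub_comm, h1, abs_of_pos (by positivity), abs_of_pos (by positivity),
    Real.rpow_neg (by positivity), ← Real.sqrt_eq_rpow, ← mul_inv, ← Real.sqrt_mul (by positivity),
    show u / (u + 1 + ρ) * (ρ * (u / (u + 1 + ρ)) + 1) * ((1 + ρ) / (u + 1 + ρ)) =
      ((1 + ρ) / (u + 1 + ρ) ^ 2) ^ 2 * (u * (u + 1) * (u + (1 + ρ))) by field_simp; ring,
    Real.sqrt_mul (sq_nonneg ((1 + ρ) / (u + 1 + ρ) ^ 2)), Real.sqrt_sq (by positivity), mul_inv,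
    mul_inv_cancel_left₀ (by positivity)]

lemma tendsto_ellIntC_nhdsWithin_im_neg {ρ : ℝ} (hρ : 0 < ρ) :
    Tendsto ellIntC (𝓝[{w | w.im < 0}] (-ρ : ℂ))
      (𝓝 (ellInt ρ (1 + ρ) + Complex.I * ellInt 1 (1 + ρ))) := by
  set g : ℝ → ℝ := fun s => (√(s * (ρ * s + 1)))⁻¹ * |s - 1| ^ (-(1 / 2) : ℝ) with hg
  have hgi : IntegrableOn g (Ioi 0) := integrableOn_boundary_integrand hρ
  set f : ℝ → ℂ := fun s => g s * (if 1 < s then 1 else Complex.I) with hf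
  have hval : (1 / Real.pi : ℝ) * ∫ s in Ioi (0 : ℝ), f s =
      ellInt ρ (1 + ρ) + Complex.I * ellInt 1 (1 + ρ) := by
    have hfi : ∀ S ⊆ Ioi (0 : ℝ), IntegrableOn f S := fun S hS => by
      refine (hgi.mono_set hS).norm.mono' ?_ (Eventually.of_forall fun s => ?_)
      · refine ((hgi.mono_set hS).aestronglyMeasurable.aemeasurable.complex_ofReal.mul
          (Measurable.aemeasurable ?_)).aestronglyMeasurable
        exact Measurable.ite measurableSet_Ioi measurable_const measurable_const
      · rw [hf]; simp only [norm_mul, Complex.norm_real]; split_ifs <;> simp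
    have hsplit : Ioi (0 : ℝ) = Ioc 0 1 ∪ Ioi 1 := (Ioc_union_Ioi_eq_Ioi zero_le_one).symm
    have hdisj : Disjoint (Ioc (0 : ℝ) 1) (Ioi 1) := disjoint_left.2 fun s h1 h2 => not_lt.2 h1.2 h2
    rw [hsplit, setIntegral_union hdisj measurableSet_Ioi (hfi _ fun s h => h.1)
        (hfi _ fun s h => zero_lt_one.trans (show 1 < s from h)),
      integral_Ioc_eq_integral_Ioo, ← integral_boundary_Ioi hρ, ← integral_boundary_Ioo hρ]
    have h1 : ∫ s in Ioi (1 : ℝ), f s = ((∫ s in Ioi (1 : ℝ), g s : ℝ) : ℂ) := by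
      rw [← integral_complex_ofReal]
      exact setIntegral_congr_fun measurableSet_Ioi fun s (hs : 1 < s) => by simp [hf, hs]
    have h2 : ∫ s in Ioo (0 : ℝ) 1, f s = Complex.I * ((∫ s in Ioo (0 : ℝ) 1, g s : ℝ) : ℂ) := by
      rw [← integral_complex_ofReal, ← integral_const_mul]
      exact setIntegral_congr_fun measurableSet_Ioo fun s hs => by
        simp [hf, hs.2.le.not_gt, mul_comm]
    rw [h1, h2]
    push_cast
    ring
  rw [← hval]
  have hne : ∀ᶠ w in 𝓝[{w : ℂ | w.im < 0}] (-ρ : ℂ), w ≠ 0 := by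
    filter_upwards [self_mem_nhdsWithin] with w hw
    rintro rfl; simp at hw
  have hnorm : Tendsto (fun w : ℂ => ‖w‖) (𝓝[{w : ℂ | w.im < 0}] (-ρ : ℂ)) (𝓝 ρ) := by
    have h : Tendsto (fun w : ℂ => ‖w‖) (𝓝 (-ρ : ℂ)) (𝓝 ‖(-ρ : ℂ)‖) := continuous_norm.tendsto _
    rw [norm_neg, Complex.norm_real, Real.norm_of_nonneg hρ.le] at h
    exact h.mono_left nhdsWithin_le_nhds
  refine Tendsto.congr' (hne.mono fun w hw => (ellIntC_eq_integral_scaled hw).symm) ?_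
  refine Tendsto.const_mul _ ?_
  have hae : ∀ᵐ s ∂(volume.restrict (Ioi (0 : ℝ))), 0 < s ∧ s ≠ 1 := by
    have : ∀ᵐ s : ℝ, s ≠ 1 := by simp [ae_iff]
    filter_upwards [ae_restrict_mem measurableSet_Ioi, ae_restrict_of_ae this] with s h1 h2
    exact ⟨h1, h2⟩
  refine tendsto_integral_filter_of_dominated_convergence
    (fun s => (ρ / 2) ^ (-(1 / 16) : ℝ) * (s ^ (-(9 / 16) : ℝ) * |s - 1| ^ (-(1 / 2) : ℝ)))
    ?_ ?_ (integrableOn_rpow_mul_abs_sub_one_rpow.const_mul _) ?_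
  · refine Eventually.of_forall fun w =>
      Measurable.aestronglyMeasurable (Measurable.mul (by fun_prop) ?_)
    exact (by fun_prop : Measurable fun u : ℝ => (u : ℂ) + w / ‖w‖).pow_const _
  · filter_upwards [hne, hnorm.eventually (lt_mem_nhds (by linarith : ρ / 2 < ρ))] with w hw hw2
    filter_upwards [hae] with s hs
    refine (norm_scaled_integrand_le hw hs.1 hs.2).trans ?_
    have : 0 ≤ s := hs.1.le
    gcongr ?_ * _
    exact Real.rpow_le_rpow_of_nonpos (by positivity) hw2.le (by norm_num)
  · filter_upwards [hae] with s hs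
    have h1 : Tendsto (fun w : ℂ => (((√(s * (‖w‖ * s + 1)))⁻¹ : ℝ) : ℂ))
        (𝓝[{w : ℂ | w.im < 0}] (-ρ : ℂ)) (𝓝 (((√(s * (ρ * s + 1)))⁻¹ : ℝ) : ℂ)) := by
      refine (Complex.continuous_ofReal.tendsto _).comp (Tendsto.inv₀ ?_ ?_)
      · exact (Real.continuous_sqrt.tendsto _).comp
          (((hnorm.mul_const s).add_const 1).const_mul s)
      · have := hs.1
        positivity
    have h2 : Tendsto (fun w : ℂ => (s : ℂ) + w / ‖w‖) (𝓝[{w : ℂ | w.im < 0}] (-ρ : ℂ))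
        (𝓝[{w : ℂ | w.im < 0}] ((s - 1 : ℝ) : ℂ)) := by
      refine tendsto_nhdsWithin_iff.2 ⟨?_, ?_⟩
      · have h3 : Tendsto (fun w : ℂ => (s : ℂ) + w / (‖w‖ : ℂ)) (𝓝[{w : ℂ | w.im < 0}] (-ρ : ℂ))
            (𝓝 ((s : ℂ) + (-ρ : ℂ) / (ρ : ℂ))) :=
          ((tendsto_id.mono_left (nhdsWithin_le_nhds (s := {w : ℂ | w.im < 0})
          (a := (-ρ : ℂ)))).div ((Complex.continuous_ofReal.tendsto _).comp hnorm)
          (by exact_mod_cast hρ.ne')).const_add (s : ℂ)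
        convert h3 using 2
        have : (ρ : ℂ) ≠ 0 := by exact_mod_cast hρ.ne'
        push_cast
        field_simp
        ring
      · filter_upwards [self_mem_nhdsWithin, hne] with w hw hw0
        have h3 : (w / ‖w‖).im = w.im / ‖w‖ := Complex.div_ofReal_im _ _
        simp only [Complex.add_im, Complex.ofReal_im, zero_add, h3]
        exact div_neg_of_neg_of_pos hw (norm_pos_iff.2 hw0)
    rcases lt_or_gt_of_ne hs.2 with h | h
    · have h3 := h1.mul ((tendsto_cpow_nhdsWithin_im_neg (x := s - 1) (by linarith)
        (-(1 / 2))).comp h2)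
      have h4 : Complex.exp (-(Real.pi * ((-(1 / 2) : ℝ) : ℂ) * Complex.I)) = Complex.I := by
        rw [show -(Real.pi * ((-(1 / 2) : ℝ) : ℂ) * Complex.I) = Real.pi / 2 * Complex.I by
          push_cast; ring, Complex.exp_pi_div_two_mul_I]
      rw [h4] at h3
      rw [show f s = (((√(s * (ρ * s + 1)))⁻¹ : ℝ) : ℂ) *
        (((-(s - 1)) ^ (-(1 / 2) : ℝ) : ℝ) * Complex.I) by
          simp [hf, hg, h.le.not_gt, abs_of_neg (by linarith : s - 1 < 0), mul_assoc]]
      exact h3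
    · have h5 : ContinuousAt (fun z : ℂ => z ^ ((-(1 / 2) : ℝ) : ℂ)) ((s - 1 : ℝ) : ℂ) :=
        continuousAt_cpow_const (Complex.ofReal_mem_slitPlane.2 (by linarith))
      have h3 := h1.mul ((h5.tendsto.mono_left nhdsWithin_le_nhds).comp h2)
      rw [← Complex.ofReal_cpow (by linarith)] at h3
      rw [show f s = (((√(s * (ρ * s + 1)))⁻¹ : ℝ) : ℂ) * (((s - 1) ^ (-(1 / 2) : ℝ) : ℝ) : ℂ) by
          simp [hf, hg, h, abs_of_pos (by linarith : 0 < s - 1)]]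
      exact h3

/-- The ratio `β / (1 - β)` as a function of `q`. -/
noncomputable def modRatio {K : Type*} [Field K] (q : K) : K :=
  (q - 1) ^ 3 * (q + 3) / ((q + 1) ^ 3 * (3 - q))

lemma halfStrip_ne {q : ℂ} (hq : q ∈ halfStrip) (x : ℝ) : q ≠ x := by
  rintro rfl
  simpa using hq.2.2

lemma modBeta_re_im {q : ℂ} (hq : q ∈ halfStrip) :
    (modBeta q).re = 1 / 2 + q.re * (4 * q.re ^ 2 - 3 * Complex.normSq q - 6 -
      3 / Complex.normSq q) / 16 ∧
    (modBeta q).im = q.im * (4 * q.re ^ 2 - Complex.normSq q - 6 + 3 / Complex.normSq q) / 16 := by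
  have h0 : q ≠ 0 := by simpa using halfStrip_ne hq 0
  have h1 : modBeta q = (q ^ 3 - 6 * q + 8 - 3 * q⁻¹) / (16 : ℝ) := by
    rw [modBeta]; push_cast; field_simp; ring
  have hn : Complex.normSq q = q.re ^ 2 + q.im ^ 2 := by rw [Complex.normSq_apply]; ring
  have h3 : q ^ 3 = ((q.re ^ 3 - 3 * q.re * q.im ^ 2 : ℝ) : ℂ) +
      ((3 * q.re ^ 2 * q.im - q.im ^ 3 : ℝ) : ℂ) * Complex.I := by
    conv_lhs => rw [← Complex.re_add_im q]
    push_cast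
    linear_combination (3 * (q.re : ℂ) * (q.im : ℂ) ^ 2 + (q.im : ℂ) ^ 3 * Complex.I) * Complex.I_sq
  have hn0 : q.re ^ 2 + q.im ^ 2 ≠ 0 := by rw [← hn]; exact (Complex.normSq_pos.2 h0).ne'
  rw [h1, Complex.div_ofReal_re, Complex.div_ofReal_im, h3]
  simp only [Complex.sub_re, Complex.add_re, Complex.sub_im, Complex.add_im, Complex.mul_re,
    Complex.mul_im, Complex.inv_re, Complex.inv_im, Complex.ofReal_re, Complex.ofReal_im,
    Complex.I_re, Complex.I_im, Complex.re_ofNat, Complex.im_ofNat, hn]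
  constructor <;> field_simp <;> ring

lemma modBeta_re_mem_Ioo {q : ℂ} (hq : q ∈ halfStrip) (h : (modBeta q).im = 0) :
    (modBeta q).re ∈ Ioo 0 1 := by
  obtain ⟨hre, him⟩ := modBeta_re_im hq
  have h0 : q ≠ 0 := by simpa using halfStrip_ne hq 0
  set N := Complex.normSq q with hN
  have hN0 : 0 < N := Complex.normSq_pos.2 h0
  have h1 : 4 * q.re ^ 2 = N + 6 - 3 / N := by
    rw [him] at h
    have := hq.2.2
    have h2 : q.im * (4 * q.re ^ 2 - N - 6 + 3 / N) = 0 := by linarith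
    rcases mul_eq_zero.1 h2 with h3 | h3 <;> linarith
  set T := N + 3 / N with hT
  have hre' : (modBeta q).re = 1 / 2 - q.re * T / 8 := by
    rw [hre, h1, hT]; ring
  have hT2 : T ^ 2 = 16 * (q.re ^ 4 - 3 * q.re ^ 2 + 3) := by
    have h4 : T ^ 2 = (N - 3 / N) ^ 2 + 12 := by rw [hT]; field_simp; ring
    rw [h4, show N - 3 / N = 4 * q.re ^ 2 - 6 by linarith]
    ring
  have hx : q.re ^ 2 < 1 := by have := hq.1; have := hq.2.1; nlinarith
  have h5 : (q.re * T) ^ 2 < 4 ^ 2 := by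
    rw [mul_pow, hT2]
    nlinarith [pow_pos (by linarith : 0 < 1 - q.re ^ 2) 3]
  have h6 := abs_lt.1 (abs_lt_of_sq_lt_sq h5 (by norm_num))
  rw [hre']
  constructor <;> linarith [h6.1, h6.2]

lemma one_sub_modBeta_mem_slitPlane {q : ℂ} (hq : q ∈ halfStrip) :
    1 - modBeta q ∈ Complex.slitPlane := by
  rw [Complex.mem_slitPlane_iff]
  by_contra! h
  have him : (modBeta q).im = 0 := by simpa using h.2
  have := modBeta_re_mem_Ioo hq him
  have h1 : 1 - (modBeta q).re ≤ 0 := by simpa using h.1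
  linarith [this.2]

lemma one_sub_modBeta_eq {q : ℂ} (h0 : q ≠ 0) :
    1 - modBeta q = (1 + q) ^ 3 * (3 - q) / (16 * q) := by
  rw [modBeta]; field_simp; ring

lemma modRatio_eq {q : ℂ} (h0 : q ≠ 0) : modRatio q = modBeta q / (1 - modBeta q) := by
  rw [one_sub_modBeta_eq h0, modBeta, modRatio, div_div_div_cancel_right₀ (by simpa using h0),
    add_comm 1 q]

lemma modRatio_mem_slitPlane {q : ℂ} (hq : q ∈ halfStrip) : modRatio q ∈ Complex.slitPlane := by
  have h0 : q ≠ 0 := by simpa using halfStrip_ne hq 0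
  have hw := Complex.slitPlane_ne_zero (one_sub_modBeta_mem_slitPlane hq)
  rw [Complex.mem_slitPlane_iff]
  by_contra! h
  set r := (modRatio q).re with hr
  have h1 : modRatio q = r := Complex.ext (by simp [hr]) (by simpa using h.2)
  rw [modRatio_eq h0, div_eq_iff hw] at h1
  have h3 : (1 + r : ℝ) * modBeta q = (r : ℂ) := by push_cast; linear_combination h1
  have h4 : (1 + r : ℝ) ≠ 0 := by
    intro h5
    rw [h5] at h3
    have h6 : (r : ℝ) = 0 := by
      have h6 : (r : ℂ) = 0 := by rw [← h3]; simp
      exact_mod_cast h6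
    linarith
  have him : (modBeta q).im = 0 := by
    have := congrArg Complex.im h3
    rw [Complex.im_ofReal_mul, Complex.ofReal_im] at this
    exact (mul_eq_zero.1 this).resolve_left h4
  have hre : (1 + r) * (modBeta q).re = r := by
    have := congrArg Complex.re h3
    rwa [Complex.re_ofReal_mul, Complex.ofReal_re] at this
  have h5 := modBeta_re_mem_Ioo hq him
  nlinarith [h5.1, h5.2, h.1]

lemma eventually_halfStrip {ξ : ℝ} (hξ : ξ ∈ Ioo (-1) 1) :
    ∀ᶠ τ : ℝ in 𝓝[>] 0, (ξ + τ * Complex.I : ℂ) ∈ halfStrip := by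
  filter_upwards [self_mem_nhdsWithin] with τ hτ
  exact ⟨by simpa using hξ.1, by simpa using hξ.2, by simpa using hτ⟩

lemma tendsto_vertical (ξ : ℝ) :
    Tendsto (fun τ : ℝ => (ξ + τ * Complex.I : ℂ)) (𝓝[>] 0) (𝓝 (ξ : ℂ)) := by
  have : Continuous fun τ : ℝ => (ξ + τ * Complex.I : ℂ) := by fun_prop
  have h := this.tendsto 0
  simp only [Complex.ofReal_zero, zero_mul, add_zero] at h
  exact h.mono_left nhdsWithin_le_nhds

lemma modBeta_ofReal (ξ : ℝ) : modBeta (ξ : ℂ) = (modBeta ξ : ℝ) := by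
  simp [modBeta]

lemma modRatio_ofReal (ξ : ℝ) : modRatio (ξ : ℂ) = (modRatio ξ : ℝ) := by
  simp [modRatio]

lemma eventually_modBeta_im_pos {ξ : ℝ} (hξ : ξ ∈ Ioo (-1) 1) (h0 : ξ ≠ 0) :
    ∀ᶠ τ : ℝ in 𝓝[>] 0, 0 < (modBeta (ξ + τ * Complex.I : ℂ)).im := by
  have hN : Tendsto (fun τ : ℝ => Complex.normSq (ξ + τ * Complex.I)) (𝓝[>] 0) (𝓝 (ξ ^ 2)) := by
    have := (Complex.continuous_normSq.tendsto _).comp (tendsto_vertical ξ)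
    rwa [Complex.normSq_ofReal, ← sq] at this
  have h1 : Tendsto (fun τ : ℝ => 4 * ξ ^ 2 - Complex.normSq (ξ + τ * Complex.I) - 6 +
      3 / Complex.normSq (ξ + τ * Complex.I)) (𝓝[>] 0) (𝓝 (4 * ξ ^ 2 - ξ ^ 2 - 6 + 3 / ξ ^ 2)) :=
    ((hN.const_sub _).sub_const _).add (tendsto_const_nhds.div hN (by positivity))
  have h2 : 0 < 4 * ξ ^ 2 - ξ ^ 2 - 6 + 3 / ξ ^ 2 := by
    have h3 : 4 * ξ ^ 2 - ξ ^ 2 - 6 + 3 / ξ ^ 2 = 3 * (1 - ξ ^ 2) ^ 2 / ξ ^ 2 := by field_simp; ring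
    have h4 : 0 < 1 - ξ ^ 2 := by have := hξ.1; have := hξ.2; nlinarith
    rw [h3]; positivity
  filter_upwards [eventually_halfStrip hξ, h1.eventually (lt_mem_nhds h2), self_mem_nhdsWithin]
    with τ hq h3 hτ
  rw [(modBeta_re_im hq).2]
  have hτ : 0 < τ := hτ
  simp only [Complex.add_re, Complex.ofReal_re, Complex.mul_re, Complex.I_re, mul_zero,
    Complex.ofReal_im, Complex.I_im, mul_one, sub_self, add_zero, Complex.add_im, Complex.mul_im,
    zero_add]
  positivity

lemma tendsto_one_sub_modBeta {ξ : ℝ} (hξ : ξ ∈ Ioo (-1) 1) (h0 : ξ ≠ 0) :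
    Tendsto (fun τ : ℝ => 1 - modBeta (ξ + τ * Complex.I : ℂ)) (𝓝[>] 0)
      (𝓝[{w | w.im < 0}] ((1 - modBeta ξ : ℝ) : ℂ)) := by
  refine tendsto_nhdsWithin_iff.2 ⟨?_, ?_⟩
  · have h : ContinuousAt (fun q : ℂ => 1 - modBeta q) (ξ : ℂ) := by
      have : (ξ : ℂ) ≠ 0 := by exact_mod_cast h0
      unfold modBeta
      fun_prop (disch := simpa using h0)
    have h1 := h.tendsto.comp (tendsto_vertical ξ)
    simp only [modBeta_ofReal] at h1
    push_cast
    exact h1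
  · filter_upwards [eventually_modBeta_im_pos hξ h0] with τ hτ
    simpa using hτ

lemma tendsto_modRatio {ξ : ℝ} (hξ : ξ ∈ Ioo (-1) 1) (h0 : ξ ≠ 0) :
    Tendsto (fun τ : ℝ => modRatio (ξ + τ * Complex.I : ℂ)) (𝓝[>] 0)
      (𝓝[{w | 0 < w.im}] ((modRatio ξ : ℝ) : ℂ)) := by
  refine tendsto_nhdsWithin_iff.2 ⟨?_, ?_⟩
  · have h2 : (ξ : ℂ) + 1 ≠ 0 := by exact_mod_cast (by linarith [hξ.1] : ξ + 1 ≠ 0)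
    have h3 : 3 - (ξ : ℂ) ≠ 0 := by exact_mod_cast (by linarith [hξ.2] : 3 - ξ ≠ 0)
    have h : ContinuousAt (fun q : ℂ => modRatio q) (ξ : ℂ) := by
      unfold modRatio
      refine ContinuousAt.div (by fun_prop) (by fun_prop) (mul_ne_zero (pow_ne_zero 3 h2) h3)
    rw [← modRatio_ofReal]
    exact h.tendsto.comp (tendsto_vertical ξ)
  · filter_upwards [eventually_modBeta_im_pos hξ h0, eventually_halfStrip hξ] with τ hτ hq
    have hq0 : (ξ + τ * Complex.I : ℂ) ≠ 0 := by simpa using halfStrip_ne hq 0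
    have hw := Complex.slitPlane_ne_zero (one_sub_modBeta_mem_slitPlane hq)
    rw [modRatio_eq hq0]
    set b := modBeta (ξ + τ * Complex.I : ℂ)
    have h1 : b / (1 - b) = (1 - b)⁻¹ - 1 := by field_simp; ring
    rw [h1]
    simp only [Complex.sub_im, Complex.inv_im, Complex.one_im, zero_sub, neg_neg,
      sub_zero]
    exact div_pos hτ (Complex.normSq_pos.2 hw)

/-- The integrand `(β / (1 - β)) ^ e * ellInt 1 (1 - β) * R` on the half strip. -/
noncomputable def hyperForm (e : ℝ) (R : ℂ → ℂ) (q : ℂ) : ℂ :=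
  modRatio q ^ (e : ℂ) * ellIntC (1 - modBeta q) * R q

lemma modBeta_ne_zero_add_one {q : ℂ} (hq : q ∈ halfStrip) :
    q - 1 ≠ 0 ∧ q + 1 ≠ 0 ∧ q ≠ 0 ∧ q + 3 ≠ 0 ∧ 3 - q ≠ 0 := by
  refine ⟨?_, ?_, ?_, ?_, ?_⟩ <;> intro h <;> have h1 := congrArg Complex.im h <;>
    simp at h1 <;> exact hq.2.2.ne' h1

lemma rpow_le_mul_rpow_of_le {t A B : ℝ} (ht : 0 < t) (ht3 : t ≤ 3) (h : B ≤ A) :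
    t ^ A ≤ 3 ^ (A - B) * t ^ B := by
  calc t ^ A = t ^ (A - B) * t ^ B := by rw [← Real.rpow_add ht, sub_add_cancel]
    _ ≤ _ := by
      gcongr ?_ * _
      exact Real.rpow_le_rpow ht.le ht3 (sub_nonneg.2 h)

lemma norm_rpow_mul_le_stripWeight {A B D : ℝ} (hA : -(15 / 16) ≤ A) (hB : -(15 / 16) ≤ B)
    (hD : -(15 / 16) ≤ D) {q : ℂ} (hq : q ∈ halfStrip) (h0 : q.re ≠ 0) (h1 : q.im ≤ 1) :
    ‖q - 1‖ ^ A * ‖q + 1‖ ^ B * ‖q‖ ^ D ≤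
      3 ^ (A - -(15 / 16)) * 3 ^ (B - -(15 / 16)) * 3 ^ (D - -(15 / 16)) * stripWeight q.re := by
  obtain ⟨hm, hp, hz, -, -⟩ := modBeta_ne_zero_add_one hq
  have hn : ‖q‖ ≤ 2 := (Complex.norm_le_abs_re_add_abs_im q).trans (by
    have := abs_le.2 ⟨hq.1.le, hq.2.1.le⟩
    rw [abs_of_pos hq.2.2]; linarith)
  have hm3 : ‖q - 1‖ ≤ 3 := (norm_sub_le _ _).trans (by rw [norm_one]; linarith)
  have hp3 : ‖q + 1‖ ≤ 3 := (norm_add_le _ _).trans (by rw [norm_one]; linarith)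
  have e1 : 1 - q.re ≤ ‖q - 1‖ := by
    have := Complex.abs_re_le_norm (q - 1)
    rw [Complex.sub_re, Complex.one_re] at this
    linarith [neg_le_abs (q.re - 1)]
  have e2 : 1 + q.re ≤ ‖q + 1‖ := by
    have := Complex.abs_re_le_norm (q + 1)
    rw [Complex.add_re, Complex.one_re] at this
    linarith [le_abs_self (q.re + 1)]
  have e3 : |q.re| ≤ ‖q‖ := Complex.abs_re_le_norm q
  have hre : |q.re| < 1 := abs_lt.2 ⟨hq.1, hq.2.1⟩
  have hprod : |q.re| * (1 - |q.re|) ≤ ‖q - 1‖ * ‖q + 1‖ * ‖q‖ := by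
    rw [mul_comm]
    refine mul_le_mul ?_ e3 (abs_nonneg _) (by positivity)
    rcases le_total 0 q.re with h | h
    · rw [abs_of_nonneg h]
      nlinarith [norm_nonneg (q - 1)]
    · rw [abs_of_nonpos h]
      nlinarith [norm_nonneg (q + 1)]
  have hpos : 0 < |q.re| * (1 - |q.re|) := mul_pos (abs_pos.2 h0) (by linarith)
  calc _ ≤ (3 ^ (A - -(15 / 16)) * ‖q - 1‖ ^ (-(15 / 16) : ℝ)) *
        (3 ^ (B - -(15 / 16)) * ‖q + 1‖ ^ (-(15 / 16) : ℝ)) *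
        (3 ^ (D - -(15 / 16)) * ‖q‖ ^ (-(15 / 16) : ℝ)) := by
        gcongr
        · exact rpow_le_mul_rpow_of_le (norm_pos_iff.2 hm) hm3 hA
        · exact rpow_le_mul_rpow_of_le (norm_pos_iff.2 hp) hp3 hB
        · exact rpow_le_mul_rpow_of_le (norm_pos_iff.2 hz) (by linarith) hD
    _ = 3 ^ (A - -(15 / 16)) * 3 ^ (B - -(15 / 16)) * 3 ^ (D - -(15 / 16)) *
        (‖q - 1‖ * ‖q + 1‖ * ‖q‖) ^ (-(15 / 16) : ℝ) := by
        rw [Real.mul_rpow (by positivity) (by positivity),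
          Real.mul_rpow (by positivity) (by positivity)]
        ring
    _ ≤ _ := by
        unfold stripWeight
        gcongr ?_ * ?_
        exact Real.rpow_le_rpow_of_nonpos hpos hprod (by norm_num)

lemma norm_modRatio_rpow_le {e : ℝ} (he : |e| ≤ 1) {q : ℂ} (hq : q ∈ halfStrip) (h1 : q.im ≤ 1) :
    ‖modRatio q‖ ^ e ≤ 5 / 2 * (‖q - 1‖ ^ (3 * e) * ‖q + 1‖ ^ (-(3 * e))) := by
  obtain ⟨hm, hp, hz, hp3, hm3⟩ := modBeta_ne_zero_add_one hq
  have hn : ‖q‖ ≤ 2 := (Complex.norm_le_abs_re_add_abs_im q).trans (by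
    have := abs_le.2 ⟨hq.1.le, hq.2.1.le⟩
    rw [abs_of_pos hq.2.2]; linarith)
  have a1 : ‖q + 3‖ ≤ 5 := (norm_add_le _ _).trans (by rw [Complex.norm_ofNat]; linarith)
  have a2 : ‖3 - q‖ ≤ 5 := (norm_sub_le _ _).trans (by rw [Complex.norm_ofNat]; linarith)
  have a3 : 2 ≤ ‖q + 3‖ := by
    have := Complex.re_le_norm (q + 3)
    rw [Complex.add_re, Complex.re_ofNat] at this
    linarith [hq.1]
  have a4 : 2 ≤ ‖3 - q‖ := by
    have := Complex.re_le_norm (3 - q)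
    rw [Complex.sub_re, Complex.re_ofNat] at this
    linarith [hq.2.1]
  have e1 : ‖modRatio q‖ = ‖q - 1‖ ^ 3 * (‖q + 1‖⁻¹) ^ 3 * (‖q + 3‖ / ‖3 - q‖) := by
    rw [modRatio, norm_div, norm_mul, norm_mul, norm_pow, norm_pow]
    field_simp
  have e2 : (‖q + 3‖ / ‖3 - q‖) ^ e ≤ 5 / 2 := by
    have b1 : ‖q + 3‖ / ‖3 - q‖ ≤ 5 / 2 := div_le_div₀ (by norm_num) a1 (by norm_num) a4
    have b2 : (5 / 2 : ℝ)⁻¹ ≤ ‖q + 3‖ / ‖3 - q‖ := by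
      rw [le_div_iff₀ (by linarith)]; linarith
    rcases le_total 0 e with h | h
    · calc _ ≤ (5 / 2 : ℝ) ^ e := by gcongr
        _ ≤ (5 / 2 : ℝ) ^ (1 : ℝ) :=
          Real.rpow_le_rpow_of_exponent_le (by norm_num) (abs_le.1 he).2
        _ = _ := Real.rpow_one _
    · calc _ ≤ ((5 / 2 : ℝ)⁻¹) ^ e := Real.rpow_le_rpow_of_nonpos (by norm_num) b2 h
        _ = (5 / 2 : ℝ) ^ (-e) := by rw [Real.inv_rpow (by norm_num), Real.rpow_neg (by norm_num)]
        _ ≤ (5 / 2 : ℝ) ^ (1 : ℝ) :=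
          Real.rpow_le_rpow_of_exponent_le (by norm_num) (by linarith [(abs_le.1 he).1])
        _ = _ := Real.rpow_one _
  rw [e1, Real.mul_rpow (by positivity) (by positivity),
    Real.mul_rpow (by positivity) (by positivity), ← Real.rpow_natCast, ← Real.rpow_natCast,
    ← Real.rpow_mul (by positivity), ← Real.rpow_mul (by positivity), Real.inv_rpow (by positivity),
    ← Real.rpow_neg (by positivity), mul_comm]
  push_cast
  gcongr

lemma norm_one_sub_modBeta_rpow_le {q : ℂ} (hq : q ∈ halfStrip) :
    ‖1 - modBeta q‖ ^ (-(1 / 16) : ℝ) ≤ 2 * (‖q + 1‖ ^ (-(3 / 16) : ℝ) * ‖q‖ ^ (1 / 16 : ℝ)) := by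
  obtain ⟨hm, hp, hz, hp3, hm3⟩ := modBeta_ne_zero_add_one hq
  have a4 : 2 ≤ ‖3 - q‖ := by
    have := Complex.re_le_norm (3 - q)
    rw [Complex.sub_re, Complex.re_ofNat] at this
    linarith [hq.2.1]
  have e1 : ‖1 - modBeta q‖ = ‖q + 1‖ ^ 3 * ‖q‖⁻¹ * (‖3 - q‖ / 16) := by
    rw [one_sub_modBeta_eq hz, norm_div, norm_mul, norm_mul, norm_pow, Complex.norm_ofNat,
      add_comm 1 q]
    field_simp
  have e2 : (‖3 - q‖ / 16) ^ (-(1 / 16) : ℝ) ≤ 2 := by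
    calc _ ≤ (1 / 8 : ℝ) ^ (-(1 / 16) : ℝ) :=
          Real.rpow_le_rpow_of_nonpos (by norm_num) (by linarith) (by norm_num)
      _ ≤ (1 / 8 : ℝ) ^ (-(1 / 3) : ℝ) :=
        Real.rpow_le_rpow_of_exponent_ge (by norm_num) (by norm_num) (by norm_num)
      _ = 2 := by
        rw [show (1 / 8 : ℝ) = 2 ^ (-3 : ℝ) by
          rw [Real.rpow_neg (by norm_num)]; norm_num, ← Real.rpow_mul (by norm_num)]
        norm_num
  rw [e1, Real.mul_rpow (by positivity) (by positivity),
    Real.mul_rpow (by positivity) (by positivity), ← Real.rpow_natCast,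
    ← Real.rpow_mul (by positivity), Real.inv_rpow (by positivity),
    ← Real.rpow_neg (by positivity), mul_comm]
  norm_num at e2 ⊢
  gcongr

lemma exists_norm_hyperForm_le {e a b d c : ℝ} {R : ℂ → ℂ} (he : |e| ≤ 1)
    (hR : ∀ q ∈ halfStrip, q.im ≤ 1 → ‖R q‖ ≤ c * (‖q - 1‖ ^ a * ‖q + 1‖ ^ b * ‖q‖ ^ d))
    (ha : -(15 / 16) ≤ 3 * e + a) (hb : -(15 / 16) ≤ -(3 * e) + -(3 / 16) + b)
    (hd : -(15 / 16) ≤ 1 / 16 + d) :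
    ∃ M : ℝ, ∀ q ∈ halfStrip, q.re ≠ 0 → q.im ≤ 1 →
      ‖hyperForm e R q‖ ≤ M * stripWeight q.re := by
  obtain ⟨C, hC, hκ⟩ := exists_norm_ellIntC_le
  refine ⟨5 * C * |c| * (3 ^ (3 * e + a - -(15 / 16)) *
    3 ^ (-(3 * e) + -(3 / 16) + b - -(15 / 16)) *
    3 ^ (1 / 16 + d - -(15 / 16))), fun q hq h0 h1 => ?_⟩
  obtain ⟨hm, hp, hz, hp3, hm3⟩ := modBeta_ne_zero_add_one hq
  have hw := Complex.slitPlane_ne_zero (one_sub_modBeta_mem_slitPlane hq)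
  have hm' := norm_pos_iff.2 hm
  have hp' := norm_pos_iff.2 hp
  have hz' := norm_pos_iff.2 hz
  rw [hyperForm, norm_mul, norm_mul, Complex.norm_cpow_real]
  calc _ ≤ (5 / 2 * (‖q - 1‖ ^ (3 * e) * ‖q + 1‖ ^ (-(3 * e)))) *
        (C * (2 * (‖q + 1‖ ^ (-(3 / 16) : ℝ) * ‖q‖ ^ (1 / 16 : ℝ)))) *
        (|c| * (‖q - 1‖ ^ a * ‖q + 1‖ ^ b * ‖q‖ ^ d)) := by
        gcongr
        · exact norm_modRatio_rpow_le he hq h1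
        · exact (hκ _ hw).trans (by gcongr; exact norm_one_sub_modBeta_rpow_le hq)
        · exact (hR q hq h1).trans (by gcongr; exact le_abs_self c)
    _ = 5 * C * |c| * (‖q - 1‖ ^ (3 * e + a) * ‖q + 1‖ ^ (-(3 * e) + -(3 / 16) + b) *
        ‖q‖ ^ (1 / 16 + d)) := by
        rw [Real.rpow_add hm', Real.rpow_add hp', Real.rpow_add hp', Real.rpow_add hz']
        ring
    _ ≤ 5 * C * |c| * (3 ^ (3 * e + a - -(15 / 16)) *
        3 ^ (-(3 * e) + -(3 / 16) + b - -(15 / 16)) * 3 ^ (1 / 16 + d - -(15 / 16)) *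
        stripWeight q.re) := by
        refine mul_le_mul_of_nonneg_left ?_ (by positivity)
        exact norm_rpow_mul_le_stripWeight ha hb hd hq h0 h1
    _ = _ := by ring

lemma differentiableOn_hyperForm (e : ℝ) {R : ℂ → ℂ} (hR : DifferentiableOn ℂ R halfStrip) :
    DifferentiableOn ℂ (hyperForm e R) halfStrip := by
  intro q hq
  obtain ⟨hm, hp, hz, hp3, hm3⟩ := modBeta_ne_zero_add_one hq
  have h1 : DifferentiableAt ℂ modRatio q := by
    unfold modRatio
    exact DifferentiableAt.div (by fun_prop) (by fun_prop) (mul_ne_zero (pow_ne_zero 3 hp) hm3)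
  have h2 : DifferentiableAt ℂ (fun q : ℂ => 1 - modBeta q) q := by
    unfold modBeta
    exact (DifferentiableAt.div (by fun_prop) (by fun_prop) (by simpa using hz)).const_sub 1
  have h3 := h1.cpow_const (c := (e : ℂ)) (modRatio_mem_slitPlane hq)
  have h4 := (differentiableAt_ellIntC (one_sub_modBeta_mem_slitPlane hq)).comp q h2
  exact (h3.mul h4).differentiableWithinAt.mul (hR q hq)

noncomputable def arcS (ξ : ℝ) : ℝ := √(ξ ^ 4 - 3 * ξ ^ 2 + 3)

noncomputable def arcD (ξ : ℝ) : ℝ := √(2 * arcS ξ + 3 - ξ ^ 2)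

/-- The imaginary part of the point with real part `ξ` on the arc on which `modBeta` is real. -/
noncomputable def arcIm (ξ : ℝ) : ℝ := (1 - ξ ^ 2) * √3 / arcD ξ

noncomputable def arcPoint (ξ : ℝ) : ℂ := ξ + arcIm ξ * Complex.I

noncomputable def arcBeta (ξ : ℝ) : ℝ := (1 - ξ * arcS ξ) / 2

lemma arcS_arg_pos (ξ : ℝ) : 0 < ξ ^ 4 - 3 * ξ ^ 2 + 3 := by nlinarith [sq_nonneg (ξ ^ 2 - 3 / 2)]

lemma arcS_pos (ξ : ℝ) : 0 < arcS ξ := Real.sqrt_pos.2 (arcS_arg_pos ξ)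

lemma arcS_sq (ξ : ℝ) : arcS ξ ^ 2 = ξ ^ 4 - 3 * ξ ^ 2 + 3 := Real.sq_sqrt (arcS_arg_pos ξ).le

lemma arcD_arg_pos (ξ : ℝ) : 0 < 2 * arcS ξ + 3 - ξ ^ 2 := by
  have h1 := arcS_pos ξ
  have h2 := arcS_sq ξ
  by_contra! h
  nlinarith [sq_nonneg (ξ ^ 2 - 1)]

lemma arcD_pos (ξ : ℝ) : 0 < arcD ξ := Real.sqrt_pos.2 (arcD_arg_pos ξ)

lemma arcD_sq (ξ : ℝ) : arcD ξ ^ 2 = 2 * arcS ξ + 3 - ξ ^ 2 := Real.sq_sqrt (arcD_arg_pos ξ).le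

lemma arcIm_sq (ξ : ℝ) : arcIm ξ ^ 2 = 2 * arcS ξ + ξ ^ 2 - 3 := by
  rw [arcIm, div_pow, mul_pow, Real.sq_sqrt (by norm_num), arcD_sq, div_eq_iff (arcD_arg_pos ξ).ne']
  linear_combination -4 * arcS_sq ξ

lemma contDiff_arcS : ContDiff ℝ 1 arcS := by
  unfold arcS
  exact ContDiff.sqrt (by fun_prop) fun ξ => (arcS_arg_pos ξ).ne'

lemma contDiff_arcD : ContDiff ℝ 1 arcD := by
  have := contDiff_arcS
  unfold arcD
  exact ContDiff.sqrt (by fun_prop) fun ξ => (arcD_arg_pos ξ).ne'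

lemma contDiff_arcIm : ContDiff ℝ 1 arcIm := by
  have := contDiff_arcD
  unfold arcIm
  exact ContDiff.div (by fun_prop) this fun ξ => (arcD_pos ξ).ne'

lemma hasDerivAt_arcIm (ξ : ℝ) : HasDerivAt arcIm (deriv arcIm ξ) ξ :=
  (contDiff_arcIm.differentiable one_ne_zero ξ).hasDerivAt

lemma hasDerivAt_arcS (ξ : ℝ) : HasDerivAt arcS ((2 * ξ ^ 3 - 3 * ξ) / arcS ξ) ξ := by
  have h : HasDerivAt (fun ξ : ℝ => ξ ^ 4 - 3 * ξ ^ 2 + 3) (4 * ξ ^ 3 - 3 * (2 * ξ)) ξ := by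
    simpa using (((hasDerivAt_pow 4 ξ).sub ((hasDerivAt_pow 2 ξ).const_mul 3)).add_const 3)
  refine (h.sqrt (arcS_arg_pos ξ).ne').congr_deriv ?_
  rw [← arcS]
  have := (arcS_pos ξ).ne'
  field_simp
  ring

lemma hasDerivAt_arcBeta (ξ : ℝ) :
    HasDerivAt arcBeta (-(3 * (1 - ξ ^ 2) ^ 2 / (2 * arcS ξ))) ξ := by
  have h := (((hasDerivAt_id ξ).mul (hasDerivAt_arcS ξ)).const_sub 1).div_const 2
  refine h.congr_deriv ?_
  have := (arcS_pos ξ).ne'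
  simp only [id]
  field_simp
  linear_combination -arcS_sq ξ

lemma one_sub_sq_pos {ξ : ℝ} (hξ : ξ ∈ Ioo (-1) 1) : 0 < 1 - ξ ^ 2 := by
  have := hξ.1; have := hξ.2; nlinarith

lemma arcIm_pos {ξ : ℝ} (hξ : ξ ∈ Ioo (-1) 1) : 0 < arcIm ξ := by
  have := one_sub_sq_pos hξ
  have := arcD_pos ξ
  unfold arcIm
  positivity

lemma arcIm_le {ξ : ℝ} (hξ : ξ ∈ Ioo (-1) 1) : arcIm ξ ≤ 1 - ξ ^ 2 := by
  have h := one_sub_sq_pos hξ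
  refine le_of_sq_le_sq ?_ h.le
  rw [arcIm_sq]
  have h1 := arcS_pos ξ
  have h2 := arcS_sq ξ
  have h3 : arcS ξ ≤ (ξ ^ 4 - 3 * ξ ^ 2 + 4) / 2 := by
    nlinarith [sq_nonneg (arcS ξ - 1)]
  nlinarith

lemma arcPoint_mem {ξ : ℝ} (hξ : ξ ∈ Ioo (-1) 1) : arcPoint ξ ∈ halfStrip := by
  refine ⟨?_, ?_, ?_⟩ <;> simp [arcPoint] <;> [exact hξ.1; exact hξ.2; exact arcIm_pos hξ]

lemma arcPoint_re (ξ : ℝ) : (arcPoint ξ).re = ξ := by simp [arcPoint]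

lemma arcPoint_im (ξ : ℝ) : (arcPoint ξ).im = arcIm ξ := by simp [arcPoint]

lemma modBeta_arcPoint {ξ : ℝ} (hξ : ξ ∈ Ioo (-1) 1) : modBeta (arcPoint ξ) = arcBeta ξ := by
  have hN : Complex.normSq (arcPoint ξ) = 2 * arcS ξ + 2 * ξ ^ 2 - 3 := by
    rw [Complex.normSq_apply, arcPoint_re, arcPoint_im]
    linear_combination arcIm_sq ξ
  have hq := arcPoint_mem hξ
  have hN0 : 0 < 2 * arcS ξ + 2 * ξ ^ 2 - 3 := by
    rw [← hN]
    exact Complex.normSq_pos.2 (by simpa using halfStrip_ne hq 0)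
  have hN3 : 3 / Complex.normSq (arcPoint ξ) = 2 * arcS ξ - 2 * ξ ^ 2 + 3 := by
    rw [hN, div_eq_iff hN0.ne']
    linear_combination -4 * arcS_sq ξ
  obtain ⟨h1, h2⟩ := modBeta_re_im hq
  apply Complex.ext
  · rw [h1, hN3, hN, arcPoint_re, Complex.ofReal_re, arcBeta]; ring
  · rw [h2, hN3, hN, arcPoint_re, Complex.ofReal_im]; ring

lemma arcBeta_mem {ξ : ℝ} (hξ : ξ ∈ Ioo (-1) 1) : arcBeta ξ ∈ Ioo 0 1 := by
  have := modBeta_re_mem_Ioo (arcPoint_mem hξ) (by rw [modBeta_arcPoint hξ]; simp)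
  rwa [modBeta_arcPoint hξ] at this

lemma hasDerivAt_arcPoint (ξ : ℝ) :
    HasDerivAt arcPoint (1 + (deriv arcIm ξ : ℝ) * Complex.I) ξ :=
  (HasDerivAt.ofReal_comp (hasDerivAt_id ξ)).add ((hasDerivAt_arcIm ξ).ofReal_comp.mul_const _)

lemma hasDerivAt_modBeta {K : Type*} [NontriviallyNormedField K] {q : K} (h2 : (2 : K) ≠ 0)
    (hq : q ≠ 0) :
    HasDerivAt modBeta (3 * (q ^ 2 - 1) ^ 2 / (16 * q ^ 2)) q := by
  have h16 : (16 : K) ≠ 0 := by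
    rw [show (16 : K) = 2 ^ 4 by norm_num]; exact pow_ne_zero 4 h2
  have h := ((((hasDerivAt_id q).sub_const 1).pow 3).mul ((hasDerivAt_id q).add_const 3)).div
    ((hasDerivAt_id q).const_mul 16) (mul_ne_zero h16 hq)
  refine h.congr_deriv ?_
  simp only [id, Pi.pow_apply, Pi.mul_apply]
  field_simp
  ring

lemma arcPoint_deriv_eq {ξ : ℝ} (hξ : ξ ∈ Ioo (-1) 1) :
    3 * (arcPoint ξ ^ 2 - 1) ^ 2 / (16 * arcPoint ξ ^ 2) * (1 + (deriv arcIm ξ : ℝ) * Complex.I) =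
      ((-(3 * (1 - ξ ^ 2) ^ 2 / (2 * arcS ξ)) : ℝ) : ℂ) := by
  have h0 : arcPoint ξ ≠ 0 := by simpa using halfStrip_ne (arcPoint_mem hξ) 0
  have h1 : HasDerivAt (fun ξ => modBeta (arcPoint ξ)) _ ξ :=
    (hasDerivAt_modBeta two_ne_zero h0).comp ξ (hasDerivAt_arcPoint ξ)
  have h2 : HasDerivAt (fun ξ : ℝ => (arcBeta ξ : ℂ)) _ ξ := (hasDerivAt_arcBeta ξ).ofReal_comp
  refine h1.unique (h2.congr_of_eventuallyEq ?_)
  filter_upwards [Ioo_mem_nhds hξ.1 hξ.2] with t ht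
  exact modBeta_arcPoint ht

lemma modBeta_neg_of_mem {ξ : ℝ} (h : ξ ∈ Ioo (0 : ℝ) 1) : modBeta ξ < 0 := by
  obtain ⟨h0, h1⟩ := h
  rw [modBeta]
  refine div_neg_of_neg_of_pos (mul_neg_of_neg_of_pos ?_ (by linarith)) (by linarith)
  exact Odd.pow_neg (by decide) (by linarith)

lemma one_lt_modBeta_of_mem {ξ : ℝ} (h : ξ ∈ Ioo (-1 : ℝ) 0) : 1 < modBeta ξ := by
  have := modBeta_neg_of_mem (ξ := -ξ) ⟨by linarith [h.2], by linarith [h.1]⟩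
  rw [modBeta_neg h.2.ne] at this
  linarith

lemma modRatio_neg_of_mem {ξ : ℝ} (h : ξ ∈ Ioo (-1 : ℝ) 1) : modRatio ξ < 0 := by
  obtain ⟨h0, h1⟩ := h
  have : 0 < (ξ + 1) ^ 3 := pow_pos (by linarith) 3
  rw [modRatio]
  refine div_neg_of_neg_of_pos (mul_neg_of_neg_of_pos ?_ (by linarith))
    (mul_pos this (by linarith))
  exact Odd.pow_neg (by decide) (by linarith)

lemma tendsto_hyperForm_of_pos {e : ℝ} {R : ℂ → ℂ} {ξ : ℝ} (h : ξ ∈ Ioo (0 : ℝ) 1)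
    (hR : ContinuousAt R ξ) :
    Tendsto (fun τ : ℝ => hyperForm e R (ξ + τ * Complex.I)) (𝓝[>] 0)
      (𝓝 (Complex.exp (Real.pi * e * Complex.I) *
        (((-modRatio ξ) ^ e * ellInt 1 (1 - modBeta ξ) : ℝ) * R ξ))) := by
  have hm : ξ ∈ Ioo (-1 : ℝ) 1 := ⟨by linarith [h.1], h.2⟩
  have h1 := (tendsto_cpow_nhdsWithin_im_pos (modRatio_neg_of_mem hm) e).comp
    (tendsto_modRatio hm h.1.ne')
  have hpos : 0 < 1 - modBeta ξ := by linarith [modBeta_neg_of_mem h]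
  have hc : ContinuousAt ellIntC ((1 - modBeta ξ : ℝ) : ℂ) :=
    (differentiableAt_ellIntC (Or.inl (by simpa using hpos))).continuousAt
  have h2 := hc.tendsto.comp
    ((tendsto_one_sub_modBeta hm h.1.ne').mono_right nhdsWithin_le_nhds)
  have h3 := hR.tendsto.comp (tendsto_vertical ξ)
  rw [ellIntC_ofReal hpos] at h2
  convert (h1.mul h2).mul h3 using 2
  · rfl
  · push_cast
    ring

lemma tendsto_hyperForm_of_neg {e : ℝ} {R : ℂ → ℂ} {ξ : ℝ} (h : ξ ∈ Ioo (-1 : ℝ) 0)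
    (hR : ContinuousAt R ξ) :
    Tendsto (fun τ : ℝ => hyperForm e R (ξ + τ * Complex.I)) (𝓝[>] 0)
      (𝓝 (Complex.exp (Real.pi * e * Complex.I) *
        ((((-modRatio ξ) ^ e : ℝ) * (ellInt (modBeta ξ - 1) (modBeta ξ) +
          Complex.I * ellInt 1 (modBeta ξ))) * R ξ))) := by
  have hm : ξ ∈ Ioo (-1 : ℝ) 1 := ⟨h.1, by linarith [h.2]⟩
  have h1 := (tendsto_cpow_nhdsWithin_im_pos (modRatio_neg_of_mem hm) e).comp
    (tendsto_modRatio hm h.2.ne)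
  have hpos : 0 < modBeta ξ - 1 := by linarith [one_lt_modBeta_of_mem h]
  have h2 := tendsto_ellIntC_nhdsWithin_im_neg hpos
  rw [show (-(modBeta ξ - 1 : ℝ) : ℂ) = ((1 - modBeta ξ : ℝ) : ℂ) by push_cast; ring,
    add_sub_cancel] at h2
  have h2 := h2.comp (tendsto_one_sub_modBeta hm h.2.ne)
  have h3 := hR.tendsto.comp (tendsto_vertical ξ)
  convert (h1.mul h2).mul h3 using 2
  · rfl
  · ring

/-- The integrand on the arc, on which `modBeta` takes the real values `arcBeta`. -/
noncomputable def arcForm (e : ℝ) (R : ℂ → ℂ) (ξ : ℝ) : ℂ :=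
  ((arcBeta ξ / (1 - arcBeta ξ)) ^ e * ellInt 1 (1 - arcBeta ξ) : ℝ) *
    (R (arcPoint ξ) * (1 + deriv arcIm ξ * Complex.I))

lemma hyperForm_arcPoint (e : ℝ) (R : ℂ → ℂ) {ξ : ℝ} (h : ξ ∈ Ioo (-1 : ℝ) 1) :
    hyperForm e R (arcPoint ξ) = ((arcBeta ξ / (1 - arcBeta ξ)) ^ e *
      ellInt 1 (1 - arcBeta ξ) : ℝ) * R (arcPoint ξ) := by
  have hb := arcBeta_mem h
  have h1 : 0 < 1 - arcBeta ξ := by linarith [hb.2]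
  have h0 := (modBeta_ne_zero_add_one (arcPoint_mem h)).2.2.1
  rw [hyperForm, modRatio_eq h0, modBeta_arcPoint h]
  norm_cast
  rw [ellIntC_ofReal h1, ← Complex.ofReal_cpow (div_pos hb.1 h1).le]
  norm_cast

lemma integral_arcForm {e M : ℝ} {R : ℂ → ℂ} {Rr : ℝ → ℝ} (hR : DifferentiableOn ℂ R halfStrip)
    (hM : ∀ q ∈ halfStrip, q.re ≠ 0 → q.im ≤ 1 → ‖hyperForm e R q‖ ≤ M * stripWeight q.re)
    (hc : ∀ ξ ∈ Ioo (-1 : ℝ) 1, ξ ≠ 0 → ContinuousAt R ξ ∧ R ξ = Rr ξ) :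
    IntegrableOn (arcForm e R) (Ioo (-1) 1) ∧
    ∫ ξ in Ioo (-1 : ℝ) 1, arcForm e R ξ = Complex.exp (Real.pi * e * Complex.I) *
      (((∫ ξ in Ioo (0 : ℝ) 1, (-modRatio ξ) ^ e * ellInt 1 (1 - modBeta ξ) * Rr ξ) +
        ∫ ξ in Ioo (-1 : ℝ) 0, (-modRatio ξ) ^ e * ellInt (modBeta ξ - 1) (modBeta ξ) * Rr ξ : ℝ) +
        Complex.I *
          (∫ ξ in Ioo (-1 : ℝ) 0, (-modRatio ξ) ^ e * ellInt 1 (modBeta ξ) * Rr ξ : ℝ)) := by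
  set f1 : ℝ → ℝ := fun ξ => (-modRatio ξ) ^ e * ellInt 1 (1 - modBeta ξ) * Rr ξ
  set f2 : ℝ → ℝ := fun ξ => (-modRatio ξ) ^ e * ellInt (modBeta ξ - 1) (modBeta ξ) * Rr ξ
  set f3 : ℝ → ℝ := fun ξ => (-modRatio ξ) ^ e * ellInt 1 (modBeta ξ) * Rr ξ
  set u : ℂ := Complex.exp (Real.pi * e * Complex.I) with hu
  have hu0 : u ≠ 0 := Complex.exp_ne_zero _
  set Fb : ℝ → ℂ := fun ξ => if 0 < ξ then u * f1 ξ else u * (f2 ξ + Complex.I * f3 ξ) with hFbdef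
  obtain ⟨L, hL⟩ : ∃ L, ∀ ξ ∈ Icc (-1 : ℝ) 1, ‖deriv arcIm ξ‖ ≤ L :=
    isCompact_Icc.exists_bound_of_continuousOn
      (contDiff_arcIm.continuous_deriv le_rfl).continuousOn
  have hFb : ∀ ξ ∈ Ioo (-1 : ℝ) 1, ξ ≠ 0 →
      Tendsto (fun τ : ℝ => hyperForm e R (ξ + τ * Complex.I)) (𝓝[>] 0) (𝓝 (Fb ξ)) := by
    intro ξ hξ h0
    obtain ⟨hRc, hRr⟩ := hc ξ hξ h0
    rcases h0.lt_or_gt with h | h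
    · convert tendsto_hyperForm_of_neg (e := e) ⟨hξ.1, h⟩ hRc using 2
      simp only [hFbdef, h.le.not_gt, if_false, hRr, f2, f3]
      push_cast
      ring
    · convert tendsto_hyperForm_of_pos (e := e) ⟨h, hξ.2⟩ hRc using 2
      simp only [hFbdef, h, if_true, hRr, f1]
      push_cast
      ring
  obtain ⟨h1, h2, h3⟩ := integral_arc_eq_integral_boundary (differentiableOn_hyperForm e hR) hM hFb
    (fun ξ _ => hasDerivAt_arcIm ξ) (contDiff_arcIm.continuous_deriv le_rfl).continuousOn
    (fun ξ hξ => hL ξ (Ioo_subset_Icc_self hξ)) (fun ξ hξ => arcIm_pos hξ)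
    (fun ξ hξ => arcIm_le hξ)
  have hcongr : EqOn (fun ξ : ℝ => hyperForm e R (ξ + arcIm ξ * Complex.I) *
      (1 + deriv arcIm ξ * Complex.I)) (arcForm e R) (Ioo (-1) 1) := by
    intro ξ hξ
    simp only
    rw [← arcPoint, hyperForm_arcPoint e R hξ, arcForm, mul_assoc]
  refine ⟨h1.congr_fun hcongr measurableSet_Ioo, ?_⟩
  rw [← setIntegral_congr_fun measurableSet_Ioo hcongr, h3]
  have hsub0 : Ioo (-1 : ℝ) 0 ⊆ Ioo (-1) 1 := Ioo_subset_Ioo_right zero_le_one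
  have hsub1 : Ioo (0 : ℝ) 1 ⊆ Ioo (-1) 1 := Ioo_subset_Ioo_left (by norm_num)
  have hneg : IntegrableOn (fun ξ : ℝ => (f2 ξ : ℂ) + Complex.I * f3 ξ) (Ioo (-1) 0) := by
    refine IntegrableOn.congr_fun ((h2.mono_set hsub0).const_mul u⁻¹) (fun ξ hξ => ?_)
      measurableSet_Ioo
    simp only [hFbdef, hξ.2.le.not_gt, if_false]
    rw [inv_mul_cancel_left₀ hu0]
  have h2' : IntegrableOn f2 (Ioo (-1) 0) := by
    simpa [IntegrableOn] using hneg.re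
  have h3' : IntegrableOn f3 (Ioo (-1) 0) := by
    simpa [IntegrableOn] using hneg.im
  have hpos : ∫ ξ in Ioo (0 : ℝ) 1, Fb ξ = u * (∫ ξ in Ioo (0 : ℝ) 1, f1 ξ : ℝ) := by
    rw [← integral_complex_ofReal, ← integral_const_mul]
    refine setIntegral_congr_fun measurableSet_Ioo fun ξ hξ => ?_
    simp only [hFbdef, hξ.1, if_true]
  have hneg' : ∫ ξ in Ioo (-1 : ℝ) 0, Fb ξ = u * ((∫ ξ in Ioo (-1 : ℝ) 0, f2 ξ : ℝ) +
      Complex.I * (∫ ξ in Ioo (-1 : ℝ) 0, f3 ξ : ℝ)) := by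
    rw [← integral_complex_ofReal, ← integral_complex_ofReal, ← integral_const_mul,
      ← integral_add h2'.ofReal (h3'.ofReal.const_mul _), ← integral_const_mul]
    refine setIntegral_congr_fun measurableSet_Ioo fun ξ hξ => ?_
    simp only [hFbdef, hξ.2.le.not_gt, if_false]
  have hsplit : ∫ ξ in Ioo (-1 : ℝ) 1, Fb ξ =
      (∫ ξ in Ioo (-1 : ℝ) 0, Fb ξ) + ∫ ξ in Ioo (0 : ℝ) 1, Fb ξ := by
    rw [← integral_Ioc_eq_integral_Ioo (y := 0), ← setIntegral_union _ measurableSet_Ioo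
      ((h2.mono_set hsub0).congr_set_ae Ioo_ae_eq_Ioc.symm) (h2.mono_set hsub1),
      Ioc_union_Ioo_eq_Ioo (by norm_num) one_pos]
    exact disjoint_left.2 fun x h h' => absurd h'.1 h.2.not_gt
  rw [hsplit, hpos, hneg']
  push_cast
  ring

/-- The Euler type integral of the value `₃F₂(1/2, 1/2, r; 1, 1; 1)`. -/
noncomputable def intA (r : ℝ) : ℝ :=
  ∫ x in Ioo (0 : ℝ) 1, x ^ (r - 1) * (1 - x) ^ (-r) * ellInt 1 (1 - x)

/-- The Euler type integral of the value `₃F₂(1/2, 1/2, r; 1, r + 1/2; 1)`. -/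
noncomputable def intB (r : ℝ) : ℝ :=
  ∫ x in Ioo (0 : ℝ) 1, x ^ (r - 1) * (1 - x) ^ (-(1 / 2) : ℝ) * ellInt 1 (1 - x)

/-- The Euler type integral of the value `₃F₂(1/2, 1/2, 1/2; 1, 3/2 - r; 1)`. -/
noncomputable def intX (r : ℝ) : ℝ :=
  ∫ x in Ioo (0 : ℝ) 1, x ^ (-(1 / 2) : ℝ) * (1 - x) ^ (-r) * ellInt 1 (1 - x)

lemma continuousOn_ellInt_one_sub : ContinuousOn (fun x : ℝ => ellInt 1 (1 - x)) (Ioo 0 1) := by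
  have h : ContinuousOn (fun x : ℝ => (ellIntC ((1 - x : ℝ) : ℂ)).re) (Ioo 0 1) := by
    refine Complex.continuous_re.comp_continuousOn fun x hx => ?_
    have h1 : ContinuousAt ellIntC ((1 - x : ℝ) : ℂ) :=
      (differentiableAt_ellIntC (Or.inl (by simpa using hx.2))).continuousAt
    have h2 : ContinuousAt (fun x : ℝ => ((1 - x : ℝ) : ℂ)) x := by fun_prop
    exact (ContinuousAt.comp (f := fun x : ℝ => ((1 - x : ℝ) : ℂ)) h1 h2).continuousWithinAt
  refine h.congr fun x hx => ?_
  simp only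
  rw [ellIntC_ofReal (by linarith [hx.2]), Complex.ofReal_re]

lemma integrableOn_intA {r : ℝ} (h0 : 0 < r) (h1 : r < 15 / 16) :
    IntegrableOn (fun x : ℝ => x ^ (r - 1) * (1 - x) ^ (-r) * ellInt 1 (1 - x)) (Ioo 0 1) := by
  obtain ⟨C, hC0, hC⟩ := exists_norm_ellIntC_le
  have h := (integrableOn_rpow_mul_one_sub_rpow (a := r - 1) (b := -r + -(1 / 16))
    (by linarith) (by linarith)).mul_const C
  refine Integrable.mono' h ?_ ?_
  · refine ContinuousOn.aestronglyMeasurable ?_ measurableSet_Ioo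
    refine ContinuousOn.mul (ContinuousOn.mul ?_ ?_) continuousOn_ellInt_one_sub
    · exact continuousOn_id.rpow_const fun x hx => Or.inl hx.1.ne'
    · exact ContinuousOn.rpow_const (by fun_prop) fun x hx => Or.inl (by linarith [hx.2])
  · filter_upwards [ae_restrict_mem measurableSet_Ioo] with x hx
    have hx1 : 0 < 1 - x := by linarith [hx.2]
    have hx0 := hx.1
    have := hC ((1 - x : ℝ) : ℂ) (by exact_mod_cast hx1.ne')
    rw [ellIntC_ofReal hx1, Complex.norm_real, Complex.norm_real,
      Real.norm_of_nonneg hx1.le] at this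
    rw [norm_mul, Real.norm_of_nonneg (by positivity), Real.rpow_add hx1]
    calc _ ≤ x ^ (r - 1) * (1 - x) ^ (-r) * (C * (1 - x) ^ (-(1 / 16) : ℝ)) := by gcongr
      _ = _ := by ring

lemma ellInt_one_div (x : ℝ) {c : ℝ} (hc : 0 < c) :
    ellInt x (1 / c) = √c * ellInt 1 (c * x) := by
  have := ellInt_mul_mul (inv_pos.2 hc) (c * x) 1
  rw [inv_mul_cancel_left₀ hc.ne', mul_one, Real.sqrt_inv, inv_inv] at this
  rw [one_div, this, ellInt_comm 1]

lemma integral_comp_eq_neg_intB {y y' : ℝ → ℝ} (r : ℝ) (hc : ContinuousOn y (Icc 0 1))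
    (hd : ∀ x ∈ Ioo (0 : ℝ) 1, HasDerivAt y (y' x) x) (hn : ∀ x ∈ Ioo (0 : ℝ) 1, y' x < 0)
    (h0 : y 0 = 1) (h1 : y 1 = 0) (hm : ∀ x ∈ Ioo (0 : ℝ) 1, y x ∈ Ioo (0 : ℝ) 1) :
    ∫ ξ in Ioo (0 : ℝ) 1, y ξ ^ r * ellInt 1 (1 / (1 - y ξ)) * (y' ξ / (y ξ * (1 - y ξ))) =
      -intB r := by
  have h := integral_Ioo_comp_mul_deriv_of_neg zero_le_one hc hd hn
    fun x : ℝ => x ^ (r - 1) * (1 - x) ^ (-(1 / 2) : ℝ) * ellInt 1 (1 - x)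
  rw [h0, h1] at h
  rw [intB, h, neg_neg]
  refine setIntegral_congr_fun measurableSet_Ioo fun ξ hξ => ?_
  obtain ⟨hy0, hy1⟩ := hm ξ hξ
  have hy1' : 0 < 1 - y ξ := by linarith
  simp only [smul_eq_mul]
  rw [ellInt_one_div _ hy1', mul_one, Real.rpow_sub_one hy0.ne', Real.rpow_neg hy1'.le,
    ← Real.sqrt_eq_rpow]
  have hs := Real.sq_sqrt hy1'.le
  have := (Real.sqrt_pos.2 hy1').ne'
  field_simp
  rw [hs]

lemma integral_comp_eq_neg_intX {x x' : ℝ → ℝ} (r : ℝ) (hc : ContinuousOn x (Icc (-1) 0))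
    (hd : ∀ t ∈ Ioo (-1 : ℝ) 0, HasDerivAt x (x' t) t) (hn : ∀ t ∈ Ioo (-1 : ℝ) 0, x' t < 0)
    (h0 : x (-1) = 1) (h1 : x 0 = 0) (hm : ∀ t ∈ Ioo (-1 : ℝ) 0, x t ∈ Ioo (0 : ℝ) 1) :
    ∫ ξ in Ioo (-1 : ℝ) 0, (1 / (1 - x ξ)) ^ r * ellInt (1 / x ξ - 1) (1 / x ξ) * (x' ξ / x ξ) =
      -intX r := by
  have h := integral_Ioo_comp_mul_deriv_of_neg (by norm_num) hc hd hn
    fun x : ℝ => x ^ (-(1 / 2) : ℝ) * (1 - x) ^ (-r) * ellInt 1 (1 - x)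
  rw [h0, h1] at h
  rw [intX, h, neg_neg]
  refine setIntegral_congr_fun measurableSet_Ioo fun ξ hξ => ?_
  obtain ⟨hy0, hy1⟩ := hm ξ hξ
  have hy1' : 0 < 1 - x ξ := by linarith
  simp only [smul_eq_mul]
  rw [ellInt_one_div _ hy0, mul_sub, mul_one_div_cancel hy0.ne', mul_one, Real.rpow_neg hy1'.le,
    Real.rpow_neg hy0.le, ← Real.sqrt_eq_rpow, one_div, Real.inv_rpow hy1'.le]
  have hs := Real.sq_sqrt hy0.le
  have := (Real.sqrt_pos.2 hy0).ne'
  field_simp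
  rw [hs]

lemma integral_comp_eq_neg_intB' {x x' : ℝ → ℝ} (r : ℝ) (hc : ContinuousOn x (Icc (-1) 0))
    (hd : ∀ t ∈ Ioo (-1 : ℝ) 0, HasDerivAt x (x' t) t) (hn : ∀ t ∈ Ioo (-1 : ℝ) 0, x' t < 0)
    (h0 : x (-1) = 1) (h1 : x 0 = 0) (hm : ∀ t ∈ Ioo (-1 : ℝ) 0, x t ∈ Ioo (0 : ℝ) 1) :
    ∫ ξ in Ioo (-1 : ℝ) 0, (1 / (1 - x ξ)) ^ r * ellInt 1 (1 / x ξ) * (x' ξ / x ξ) =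
      -intB (1 - r) := by
  have h := integral_Ioo_comp_mul_deriv_of_pos (f := fun t => 1 - x t) (f' := fun t => -x' t)
    (by norm_num : (-1 : ℝ) ≤ 0) (continuousOn_const.sub hc) (fun t ht => (hd t ht).const_sub 1)
    (fun t ht => neg_pos.2 (hn t ht))
    fun x : ℝ => x ^ (1 - r - 1) * (1 - x) ^ (-(1 / 2) : ℝ) * ellInt 1 (1 - x)
  simp only [h0, h1, sub_self, sub_zero] at h
  rw [intB, h, ← integral_neg]
  refine setIntegral_congr_fun measurableSet_Ioo fun ξ hξ => ?_
  obtain ⟨hy0, hy1⟩ := hm ξ hξ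
  have hy1' : 0 < 1 - x ξ := by linarith
  simp only [smul_eq_mul, sub_sub_cancel]
  rw [ellInt_one_div _ hy0, mul_one, sub_sub_cancel_left, Real.rpow_neg hy1'.le,
    Real.rpow_neg hy0.le, ← Real.sqrt_eq_rpow, one_div, Real.inv_rpow hy1'.le]
  have hs := Real.sq_sqrt hy0.le
  have := (Real.sqrt_pos.2 hy0).ne'
  field_simp
  rw [hs]

lemma integral_comp_eq_neg_intA {m m' : ℝ → ℝ} {r : ℝ} (hr0 : 0 < r) (hr1 : r < 15 / 16)
    (hc : ContinuousOn m (Icc (-1) 1))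
    (hd : ∀ t ∈ Ioo (-1 : ℝ) 1, HasDerivAt m (m' t) t) (hn : ∀ t ∈ Ioo (-1 : ℝ) 1, m' t < 0)
    (h0 : m (-1) = 1) (h1 : m 1 = 0) (hm : ∀ t ∈ Ioo (-1 : ℝ) 1, m t ∈ Ioo (0 : ℝ) 1) :
    IntegrableOn (fun ξ => (m ξ / (1 - m ξ)) ^ r * ellInt 1 (1 - m ξ) * (m' ξ / m ξ))
      (Ioo (-1) 1) ∧
    ∫ ξ in Ioo (-1 : ℝ) 1, (m ξ / (1 - m ξ)) ^ r * ellInt 1 (1 - m ξ) * (m' ξ / m ξ) =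
      -intA r := by
  have h := integral_Ioo_comp_mul_deriv_of_neg (by norm_num) hc hd hn
    fun x : ℝ => x ^ (r - 1) * (1 - x) ^ (-r) * ellInt 1 (1 - x)
  have h' := integrableOn_Ioo_comp_mul_deriv_of_neg (by norm_num) hc hd hn
    fun x : ℝ => x ^ (r - 1) * (1 - x) ^ (-r) * ellInt 1 (1 - x)
  rw [h0, h1] at h h'
  have he : EqOn (fun ξ => m' ξ • (m ξ ^ (r - 1) * (1 - m ξ) ^ (-r) * ellInt 1 (1 - m ξ)))
      (fun ξ => (m ξ / (1 - m ξ)) ^ r * ellInt 1 (1 - m ξ) * (m' ξ / m ξ)) (Ioo (-1) 1) := by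
    intro ξ hξ
    obtain ⟨hy0, hy1⟩ := hm ξ hξ
    have hy1' : 0 < 1 - m ξ := by linarith
    simp only [smul_eq_mul]
    rw [Real.div_rpow hy0.le hy1'.le, Real.rpow_sub_one hy0.ne', Real.rpow_neg hy1'.le]
    field_simp
  refine ⟨(h'.2 (integrableOn_intA hr0 hr1)).congr_fun he measurableSet_Ioo, ?_⟩
  rw [intA, h, neg_neg]
  exact (setIntegral_congr_fun measurableSet_Ioo he).symm

/-- The quotient `α / (1 - α)` for `α = modAlpha q`. -/
noncomputable def modRatioAlpha (q : ℝ) : ℝ := (q - 1) * (q + 3) ^ 3 / ((q + 1) * (3 - q) ^ 3)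

lemma hasDerivAt_modRatio {q : ℝ} (h1 : q + 1 ≠ 0) (h3 : 3 - q ≠ 0) :
    HasDerivAt modRatio (48 * (q - 1) ^ 2 / ((q + 1) ^ 4 * (3 - q) ^ 2)) q := by
  have hn := (((hasDerivAt_id q).sub_const 1).pow 3).mul ((hasDerivAt_id q).add_const 3)
  have hd := (((hasDerivAt_id q).add_const 1).pow 3).mul ((hasDerivAt_id q).const_sub 3)
  refine (hn.div hd (mul_ne_zero (pow_ne_zero 3 h1) h3)).congr_deriv ?_
  simp only [id, Pi.mul_apply, Pi.pow_apply]
  field_simp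
  ring

lemma hasDerivAt_modRatioAlpha {q : ℝ} (h1 : q + 1 ≠ 0) (h3 : 3 - q ≠ 0) :
    HasDerivAt modRatioAlpha (16 * q ^ 2 * (q + 3) ^ 2 / ((q + 1) ^ 2 * (3 - q) ^ 4)) q := by
  have hn := ((hasDerivAt_id q).sub_const 1).mul (((hasDerivAt_id q).add_const 3).pow 3)
  have hd := ((hasDerivAt_id q).add_const 1).mul (((hasDerivAt_id q).const_sub 3).pow 3)
  refine (hn.div hd (mul_ne_zero h1 (pow_ne_zero 3 h3))).congr_deriv ?_
  simp only [id, Pi.mul_apply, Pi.pow_apply]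
  field_simp
  ring

lemma hasDerivAt_inv_modBeta {q : ℝ} (h1 : q - 1 ≠ 0) (h3 : q + 3 ≠ 0) :
    HasDerivAt (fun q : ℝ => 16 * q / ((q - 1) ^ 3 * (q + 3)))
      (-(48 * (q + 1) ^ 2 / ((q - 1) ^ 4 * (q + 3) ^ 2))) q := by
  have hn := (hasDerivAt_id q).const_mul 16
  have hd := (((hasDerivAt_id q).sub_const 1).pow 3).mul ((hasDerivAt_id q).add_const 3)
  refine (hn.div hd (mul_ne_zero (pow_ne_zero 3 h1) h3)).congr_deriv ?_
  simp only [id, Pi.mul_apply, Pi.pow_apply]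
  field_simp
  ring

lemma hasDerivAt_inv_modAlpha {q : ℝ} (h1 : q - 1 ≠ 0) (h3 : q + 3 ≠ 0) :
    HasDerivAt (fun q : ℝ => 16 * q ^ 3 / ((q - 1) * (q + 3) ^ 3))
      (-(16 * q ^ 2 * (3 - q) ^ 2 / ((q - 1) ^ 2 * (q + 3) ^ 4))) q := by
  have hn := ((hasDerivAt_id q).pow 3).const_mul 16
  have hd := ((hasDerivAt_id q).sub_const 1).mul (((hasDerivAt_id q).add_const 3).pow 3)
  refine (hn.div hd (mul_ne_zero h1 (pow_ne_zero 3 h3))).congr_deriv ?_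
  simp only [id, Pi.mul_apply, Pi.pow_apply]
  field_simp
  ring

lemma integral_modRatio_Ioo_zero_one (r : ℝ) :
    ∫ ξ in Ioo (0 : ℝ) 1, (-modRatio ξ) ^ r * ellInt 1 (1 - modBeta ξ) *
      (3 * (1 + ξ) ^ 2 / ((ξ - 1) * (ξ + 3) * ξ)) = -intB r := by
  have hd : ∀ x ∈ Icc (0 : ℝ) 1, HasDerivAt (fun q : ℝ => -modRatio q)
      (-(48 * (x - 1) ^ 2 / ((x + 1) ^ 4 * (3 - x) ^ 2))) x := fun x hx =>
    (hasDerivAt_modRatio (by linarith [hx.1]) (by linarith [hx.2])).neg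
  have hm : ∀ x ∈ Ioo (0 : ℝ) 1, -modRatio x ∈ Ioo (0 : ℝ) 1 := by
    rintro x ⟨h0, h1⟩
    refine ⟨neg_pos.2 (modRatio_neg_of_mem ⟨by linarith, h1⟩), ?_⟩
    rw [modRatio, neg_lt, lt_div_iff₀ (mul_pos (by positivity) (by linarith))]
    linarith
  have hn : ∀ x ∈ Ioo (0 : ℝ) 1, -(48 * (x - 1) ^ 2 / ((x + 1) ^ 4 * (3 - x) ^ 2)) < 0 := by
    rintro x ⟨h0, h1⟩
    have : 0 < (x - 1) ^ 2 := by nlinarith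
    have : 0 < 3 - x := by linarith
    rw [neg_lt_zero]; positivity
  rw [← integral_comp_eq_neg_intB r (fun x hx => (hd x hx).continuousAt.continuousWithinAt)
    (fun x hx => hd x (Ioo_subset_Icc_self hx)) hn (by norm_num [modRatio])
    (by norm_num [modRatio]) hm]
  refine setIntegral_congr_fun measurableSet_Ioo fun x hx => ?_
  obtain ⟨h0, h1⟩ := hx
  have e1 : x - 1 ≠ 0 := by linarith
  have e2 : 3 - x ≠ 0 := by linarith
  have e3 : x + 3 ≠ 0 := by linarith
  have e5 : 1 + x ≠ 0 := by linarith
  have e4 : 1 - -modRatio x = 16 * x / ((1 + x) ^ 3 * (3 - x)) := by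
    rw [modRatio, add_comm x 1]; field_simp; ring
  rw [e4, one_div_div, ← one_sub_modBeta h0.ne', modRatio, add_comm x 1]
  congr 1
  field_simp
  norm_num

lemma integral_modRatioAlpha_Ioo_zero_one (r : ℝ) :
    ∫ ξ in Ioo (0 : ℝ) 1, (-modRatioAlpha ξ) ^ r * ellInt 1 (1 - modAlpha ξ) *
      ((3 - ξ) ^ 2 / ((ξ - 1) * (ξ + 3) * ξ)) = -intB r := by
  have hd : ∀ x ∈ Icc (0 : ℝ) 1, HasDerivAt (fun q : ℝ => -modRatioAlpha q)
      (-(16 * x ^ 2 * (x + 3) ^ 2 / ((x + 1) ^ 2 * (3 - x) ^ 4))) x := fun x hx =>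
    (hasDerivAt_modRatioAlpha (by linarith [hx.1]) (by linarith [hx.2])).neg
  have hm : ∀ x ∈ Ioo (0 : ℝ) 1, -modRatioAlpha x ∈ Ioo (0 : ℝ) 1 := by
    rintro x ⟨h0, h1⟩
    have h3 : 0 < 3 - x := by linarith
    refine ⟨?_, ?_⟩
    · rw [modRatioAlpha, neg_pos]
      exact div_neg_of_neg_of_pos (mul_neg_of_neg_of_pos (by linarith) (by positivity))
        (by positivity)
    · rw [modRatioAlpha, neg_lt, lt_div_iff₀ (by positivity)]
      nlinarith [pow_pos h0 3]
  have hn : ∀ x ∈ Ioo (0 : ℝ) 1,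
      -(16 * x ^ 2 * (x + 3) ^ 2 / ((x + 1) ^ 2 * (3 - x) ^ 4)) < 0 := by
    rintro x ⟨h0, h1⟩
    have : 0 < 3 - x := by linarith
    rw [neg_lt_zero]; positivity
  rw [← integral_comp_eq_neg_intB r (fun x hx => (hd x hx).continuousAt.continuousWithinAt)
    (fun x hx => hd x (Ioo_subset_Icc_self hx)) hn (by norm_num [modRatioAlpha])
    (by norm_num [modRatioAlpha]) hm]
  refine setIntegral_congr_fun measurableSet_Ioo fun x hx => ?_
  obtain ⟨h0, h1⟩ := hx
  have e1 : x - 1 ≠ 0 := by linarith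
  have e2 : 3 - x ≠ 0 := by linarith
  have e3 : x + 3 ≠ 0 := by linarith
  have e5 : 1 + x ≠ 0 := by linarith
  have e4 : 1 - -modRatioAlpha x = 16 * x ^ 3 / ((1 + x) * (3 - x) ^ 3) := by
    rw [modRatioAlpha, add_comm x 1]; field_simp; ring
  rw [e4, one_div_div, ← one_sub_modAlpha h0.ne', modRatioAlpha, add_comm x 1]
  congr 1
  field_simp

section Negative

variable {x : ℝ}

lemma inv_modBeta_mem (hx : x ∈ Ioo (-1 : ℝ) 0) :
    16 * x / ((x - 1) ^ 3 * (x + 3)) ∈ Ioo (0 : ℝ) 1 := by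
  obtain ⟨h0, h1⟩ := hx
  have h3 : 0 < x + 3 := by linarith
  have h5 : (x - 1) ^ 3 * (x + 3) < 0 :=
    mul_neg_of_neg_of_pos (Odd.pow_neg (by decide) (by linarith)) h3
  refine ⟨div_pos_of_neg_of_neg (by linarith) h5, ?_⟩
  rw [div_lt_one_of_neg h5]
  nlinarith [mul_pos (pow_pos (by linarith : 0 < x + 1) 3) (by linarith : 0 < 3 - x)]

lemma inv_modAlpha_mem (hx : x ∈ Ioo (-1 : ℝ) 0) :
    16 * x ^ 3 / ((x - 1) * (x + 3) ^ 3) ∈ Ioo (0 : ℝ) 1 := by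
  obtain ⟨h0, h1⟩ := hx
  have h3 : 0 < x + 3 := by linarith
  have h5 : (x - 1) * (x + 3) ^ 3 < 0 := mul_neg_of_neg_of_pos (by linarith) (by positivity)
  have h6 : x ^ 3 < 0 := Odd.pow_neg (by decide) h1
  refine ⟨div_pos_of_neg_of_neg (by linarith) h5, ?_⟩
  rw [div_lt_one_of_neg h5]
  nlinarith [mul_pos (by linarith : 0 < x + 1) (pow_pos (by linarith : 0 < 3 - x) 3)]

lemma inv_modBeta_deriv_neg (hx : x ∈ Ioo (-1 : ℝ) 0) :
    -(48 * (x + 1) ^ 2 / ((x - 1) ^ 4 * (x + 3) ^ 2)) < 0 := by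
  obtain ⟨h0, h1⟩ := hx
  have : 0 < x + 3 := by linarith
  have : 0 < x + 1 := by linarith
  have : 0 < (x - 1) ^ 4 := Even.pow_pos (by decide) (by linarith)
  rw [neg_lt_zero]; positivity

lemma inv_modAlpha_deriv_neg (hx : x ∈ Ioo (-1 : ℝ) 0) :
    -(16 * x ^ 2 * (3 - x) ^ 2 / ((x - 1) ^ 2 * (x + 3) ^ 4)) < 0 := by
  obtain ⟨h0, h1⟩ := hx
  have : 0 < x + 3 := by linarith
  have : 0 < 3 - x := by linarith
  have : 0 < (x - 1) ^ 2 := by nlinarith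
  have : 0 < x ^ 2 := by nlinarith
  rw [neg_lt_zero]; positivity

lemma integral_modRatio_Ioo_neg_one_zero (r : ℝ) :
    ∫ ξ in Ioo (-1 : ℝ) 0, (-modRatio ξ) ^ r * ellInt (modBeta ξ - 1) (modBeta ξ) *
      (3 * (1 + ξ) ^ 2 / ((ξ - 1) * (ξ + 3) * ξ)) = intX r ∧
    ∫ ξ in Ioo (-1 : ℝ) 0, (-modRatio ξ) ^ r * ellInt 1 (modBeta ξ) *
      (3 * (1 + ξ) ^ 2 / ((ξ - 1) * (ξ + 3) * ξ)) = intB (1 - r) := by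
  have hd : ∀ x ∈ Icc (-1 : ℝ) 0, HasDerivAt (fun q : ℝ => 16 * q / ((q - 1) ^ 3 * (q + 3)))
      (-(48 * (x + 1) ^ 2 / ((x - 1) ^ 4 * (x + 3) ^ 2))) x := fun x hx =>
    hasDerivAt_inv_modBeta (by linarith [hx.2]) (by linarith [hx.1])
  have hc : ContinuousOn (fun q : ℝ => 16 * q / ((q - 1) ^ 3 * (q + 3))) (Icc (-1) 0) :=
    fun x hx => (hd x hx).continuousAt.continuousWithinAt
  have hd' := fun x (hx : x ∈ Ioo (-1 : ℝ) 0) => hd x (Ioo_subset_Icc_self hx)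
  have key : ∀ x ∈ Ioo (-1 : ℝ) 0,
      1 / (16 * x / ((x - 1) ^ 3 * (x + 3))) = modBeta x ∧
      1 / (1 - 16 * x / ((x - 1) ^ 3 * (x + 3))) = -modRatio x ∧
      3 * (1 + x) ^ 2 / ((x - 1) * (x + 3) * x) =
        -(-(48 * (x + 1) ^ 2 / ((x - 1) ^ 4 * (x + 3) ^ 2)) /
          (16 * x / ((x - 1) ^ 3 * (x + 3)))) := by
    rintro x ⟨h0, h1⟩
    have e1 : x - 1 ≠ 0 := by linarith
    have e2 : 3 - x ≠ 0 := by linarith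
    have e3 : x + 3 ≠ 0 := by linarith
    have e5 : x + 1 ≠ 0 := by linarith
    have e6 : x ≠ 0 := h1.ne
    refine ⟨one_div_div _ _, ?_, ?_⟩
    · have : 1 - 16 * x / ((x - 1) ^ 3 * (x + 3)) =
          -((x + 1) ^ 3 * (3 - x)) / ((x - 1) ^ 3 * (x + 3)) := by
        field_simp; ring
      rw [this, one_div_div, modRatio, div_neg]
    · field_simp
      ring
  constructor
  · rw [← neg_neg (intX r), ← integral_comp_eq_neg_intX r hc hd' (fun x => inv_modBeta_deriv_neg)
      (by norm_num) (by norm_num) (fun x => inv_modBeta_mem), ← integral_neg]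
    refine setIntegral_congr_fun measurableSet_Ioo fun x hx => ?_
    obtain ⟨e1, e2, e3⟩ := key x hx
    rw [e1, e2, e3, mul_neg]
  · rw [← neg_neg (intB _), ← integral_comp_eq_neg_intB' r hc hd' (fun x => inv_modBeta_deriv_neg)
      (by norm_num) (by norm_num) (fun x => inv_modBeta_mem), ← integral_neg]
    refine setIntegral_congr_fun measurableSet_Ioo fun x hx => ?_
    obtain ⟨e1, e2, e3⟩ := key x hx
    rw [e1, e2, e3, mul_neg]

lemma integral_modRatioAlpha_Ioo_neg_one_zero (r : ℝ) :
    ∫ ξ in Ioo (-1 : ℝ) 0, (-modRatioAlpha ξ) ^ r * ellInt (modAlpha ξ - 1) (modAlpha ξ) *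
      ((3 - ξ) ^ 2 / ((ξ - 1) * (ξ + 3) * ξ)) = intX r ∧
    ∫ ξ in Ioo (-1 : ℝ) 0, (-modRatioAlpha ξ) ^ r * ellInt 1 (modAlpha ξ) *
      ((3 - ξ) ^ 2 / ((ξ - 1) * (ξ + 3) * ξ)) = intB (1 - r) := by
  have hd : ∀ x ∈ Icc (-1 : ℝ) 0, HasDerivAt (fun q : ℝ => 16 * q ^ 3 / ((q - 1) * (q + 3) ^ 3))
      (-(16 * x ^ 2 * (3 - x) ^ 2 / ((x - 1) ^ 2 * (x + 3) ^ 4))) x := fun x hx =>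
    hasDerivAt_inv_modAlpha (by linarith [hx.2]) (by linarith [hx.1])
  have hc : ContinuousOn (fun q : ℝ => 16 * q ^ 3 / ((q - 1) * (q + 3) ^ 3)) (Icc (-1) 0) :=
    fun x hx => (hd x hx).continuousAt.continuousWithinAt
  have hd' := fun x (hx : x ∈ Ioo (-1 : ℝ) 0) => hd x (Ioo_subset_Icc_self hx)
  have key : ∀ x ∈ Ioo (-1 : ℝ) 0,
      1 / (16 * x ^ 3 / ((x - 1) * (x + 3) ^ 3)) = modAlpha x ∧
      1 / (1 - 16 * x ^ 3 / ((x - 1) * (x + 3) ^ 3)) = -modRatioAlpha x ∧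
      (3 - x) ^ 2 / ((x - 1) * (x + 3) * x) =
        -(-(16 * x ^ 2 * (3 - x) ^ 2 / ((x - 1) ^ 2 * (x + 3) ^ 4)) /
          (16 * x ^ 3 / ((x - 1) * (x + 3) ^ 3))) := by
    rintro x ⟨h0, h1⟩
    have e1 : x - 1 ≠ 0 := by linarith
    have e2 : 3 - x ≠ 0 := by linarith
    have e3 : x + 3 ≠ 0 := by linarith
    have e5 : x + 1 ≠ 0 := by linarith
    have e6 : x ≠ 0 := h1.ne
    refine ⟨one_div_div _ _, ?_, ?_⟩
    · have : 1 - 16 * x ^ 3 / ((x - 1) * (x + 3) ^ 3) =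
          -((x + 1) * (3 - x) ^ 3) / ((x - 1) * (x + 3) ^ 3) := by
        field_simp; ring
      rw [this, one_div_div, modRatioAlpha, div_neg]
    · field_simp
  constructor
  · rw [← neg_neg (intX r), ← integral_comp_eq_neg_intX r hc hd' (fun x => inv_modAlpha_deriv_neg)
      (by norm_num) (by norm_num) (fun x => inv_modAlpha_mem), ← integral_neg]
    refine setIntegral_congr_fun measurableSet_Ioo fun x hx => ?_
    obtain ⟨e1, e2, e3⟩ := key x hx
    rw [e1, e2, e3, mul_neg]
  · rw [← neg_neg (intB _), ← integral_comp_eq_neg_intB' r hc hd' (fun x => inv_modAlpha_deriv_neg)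
      (by norm_num) (by norm_num) (fun x => inv_modAlpha_mem), ← integral_neg]
    refine setIntegral_congr_fun measurableSet_Ioo fun x hx => ?_
    obtain ⟨e1, e2, e3⟩ := key x hx
    rw [e1, e2, e3, mul_neg]

end Negative

section Forms

variable {K : Type*} [Field K]

/-- The logarithmic derivative of `modBeta`. -/
def logForm (q : K) : K := 3 * (1 + q) ^ 2 / ((q - 1) * (q + 3) * q)

/-- The form `q * dα / α` for `α = modAlpha q`, relative to `(α / (1 - α)) ^ (3 / 8)` and
`(β / (1 - β)) ^ (1 / 8)`. -/
def traceForm (q : K) : K := (3 - q) / (q - 1)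

/-- The form `q * dα / α` for `α = modAlpha q`, relative to `(α / (1 - α)) ^ (5 / 8)` and
`(β / (1 - β)) ^ (7 / 8)`. -/
def traceForm' (q : K) : K := (q + 1) ^ 2 * (3 - q) / (q - 1) ^ 3

end Forms

lemma rpow_three_eighths {s t c : ℝ} (hs : 0 < s) (ht : 0 < t) (hc : 0 < c)
    (h : t ^ 3 = s * c ^ 8) : t ^ (3 / 8 : ℝ) = s ^ (1 / 8 : ℝ) * c := by
  have h1 : (t ^ 3) ^ (1 / 8 : ℝ) = (s * c ^ 8) ^ (1 / 8 : ℝ) := by rw [h]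
  rw [Real.mul_rpow hs.le (by positivity), ← Real.rpow_natCast, ← Real.rpow_natCast,
    ← Real.rpow_mul ht.le, ← Real.rpow_mul hc.le] at h1
  norm_num at h1 ⊢
  exact h1

lemma rpow_five_eighths {s t c : ℝ} (hs : 0 < s) (ht : 0 < t) (hc : 0 < c)
    (h : t ^ 5 = s ^ 7 * c ^ 8) : t ^ (5 / 8 : ℝ) = s ^ (7 / 8 : ℝ) * c := by
  have h1 : (t ^ 5) ^ (1 / 8 : ℝ) = (s ^ 7 * c ^ 8) ^ (1 / 8 : ℝ) := by rw [h]
  rw [Real.mul_rpow (by positivity) (by positivity), ← Real.rpow_natCast, ← Real.rpow_natCast,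
    ← Real.rpow_natCast, ← Real.rpow_mul ht.le, ← Real.rpow_mul hc.le, ← Real.rpow_mul hs.le] at h1
  norm_num at h1 ⊢
  exact h1

lemma modRatioAlpha_pow_three {q : ℝ} (h1 : q + 1 ≠ 0) (h3 : 3 - q ≠ 0) :
    modRatioAlpha q ^ 3 = modRatio q * ((q + 3) / (3 - q)) ^ 8 := by
  rw [modRatioAlpha, modRatio]
  field_simp

lemma modRatioAlpha_pow_five {q : ℝ} (h1 : q + 1 ≠ 0) (h3 : 3 - q ≠ 0) (h : q - 1 ≠ 0) :
    modRatioAlpha q ^ 5 =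
      modRatio q ^ 7 * ((q + 1) ^ 2 * (q + 3) / ((q - 1) ^ 2 * (3 - q))) ^ 8 := by
  rw [modRatioAlpha, modRatio]
  field_simp

lemma modRatioAlpha_neg_of_mem {q : ℝ} (h : q ∈ Ioo (-1 : ℝ) 1) : modRatioAlpha q < 0 := by
  obtain ⟨h0, h1⟩ := h
  have : 0 < 3 - q := by linarith
  have : 0 < q + 3 := by linarith
  have : 0 < q + 1 := by linarith
  exact div_neg_of_neg_of_pos (mul_neg_of_neg_of_pos (by linarith) (by positivity))
    (by positivity)

lemma neg_modRatio_rpow_mul_traceForm {q : ℝ} (h : q ∈ Ioo (-1 : ℝ) 1) (h0 : q ≠ 0) :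
    (-modRatio q) ^ (1 / 8 : ℝ) * traceForm q =
      (-modRatioAlpha q) ^ (3 / 8 : ℝ) * (q * ((3 - q) ^ 2 / ((q - 1) * (q + 3) * q))) ∧
    (-modRatio q) ^ (7 / 8 : ℝ) * traceForm' q =
      (-modRatioAlpha q) ^ (5 / 8 : ℝ) * (q * ((3 - q) ^ 2 / ((q - 1) * (q + 3) * q))) := by
  have e1 : 0 < 3 - q := by linarith [h.2]
  have e2 : 0 < q + 3 := by linarith [h.1]
  have e3 : 0 < q + 1 := by linarith [h.1]
  have e4 : q - 1 ≠ 0 := by linarith [h.2]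
  have hv := neg_pos.2 (modRatio_neg_of_mem h)
  have hu := neg_pos.2 (modRatioAlpha_neg_of_mem h)
  constructor
  · rw [rpow_three_eighths hv hu (div_pos e2 e1), traceForm]
    · field_simp
    · linear_combination -modRatioAlpha_pow_three e3.ne' e1.ne'
  · rw [rpow_five_eighths hv hu (c := (q + 1) ^ 2 * (q + 3) / ((q - 1) ^ 2 * (3 - q)))
      (by positivity), traceForm']
    · field_simp
    · linear_combination -modRatioAlpha_pow_five e3.ne' e1.ne' e4

lemma ellInt_one_modAlpha_of_neg {q : ℝ} (h : q ∈ Ioo (-1 : ℝ) 0) :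
    ellInt 1 (modAlpha q) = -q * ellInt 1 (modBeta q) := by
  have := ellInt_one_sub_modAlpha (q := -q) (by linarith [h.2]) (by linarith [h.1])
  rwa [modAlpha_neg h.2.ne, modBeta_neg h.2.ne, sub_sub_cancel, sub_sub_cancel] at this

lemma ellInt_modAlpha_sub_one_of_neg {q : ℝ} (h : q ∈ Ioo (-1 : ℝ) 0) :
    ellInt (modAlpha q - 1) (modAlpha q) = -q / 3 * ellInt (modBeta q - 1) (modBeta q) := by
  have := ellInt_neg_modAlpha (q := -q) (by linarith [h.2]) (by linarith [h.1])
  rwa [modAlpha_neg h.2.ne, modBeta_neg h.2.ne, sub_sub_cancel, sub_sub_cancel, neg_sub,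
    neg_sub] at this

/-- The integrals on the real axis of a form `(β / (1 - β)) ^ e * R`, which pulls back to
`q * (α / (1 - α)) ^ r * dα / α`. -/
lemma integral_real_axis_of_eq {e r : ℝ} {R : ℝ → ℝ}
    (h : ∀ q ∈ Ioo (-1 : ℝ) 1, q ≠ 0 → (-modRatio q) ^ e * R q =
      (-modRatioAlpha q) ^ r * (q * ((3 - q) ^ 2 / ((q - 1) * (q + 3) * q)))) :
    ∫ ξ in Ioo (0 : ℝ) 1, (-modRatio ξ) ^ e * ellInt 1 (1 - modBeta ξ) * R ξ = -intB r ∧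
    ∫ ξ in Ioo (-1 : ℝ) 0, (-modRatio ξ) ^ e * ellInt (modBeta ξ - 1) (modBeta ξ) * R ξ =
      -(3 * intX r) ∧
    ∫ ξ in Ioo (-1 : ℝ) 0, (-modRatio ξ) ^ e * ellInt 1 (modBeta ξ) * R ξ = -intB (1 - r) := by
  obtain ⟨h1, h2⟩ := integral_modRatioAlpha_Ioo_neg_one_zero r
  refine ⟨?_, ?_, ?_⟩
  · rw [← integral_modRatioAlpha_Ioo_zero_one r]
    refine setIntegral_congr_fun measurableSet_Ioo fun q hq => ?_
    have := h q ⟨by linarith [hq.1], hq.2⟩ hq.1.ne'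
    rw [ellInt_one_sub_modAlpha hq.1 (by linarith [hq.2])]
    linear_combination ellInt 1 (1 - modBeta q) * this
  · rw [← h1, ← integral_const_mul, ← integral_neg]
    refine setIntegral_congr_fun measurableSet_Ioo fun q hq => ?_
    have := h q ⟨hq.1, by linarith [hq.2]⟩ hq.2.ne
    rw [ellInt_modAlpha_sub_one_of_neg hq]
    linear_combination ellInt (modBeta q - 1) (modBeta q) * this
  · rw [← h2, ← integral_neg]
    refine setIntegral_congr_fun measurableSet_Ioo fun q hq => ?_
    have := h q ⟨hq.1, by linarith [hq.2]⟩ hq.2.ne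
    rw [ellInt_one_modAlpha_of_neg hq]
    linear_combination ellInt 1 (modBeta q) * this

lemma integral_arcForm_logForm {r : ℝ} (h0 : 1 / 8 ≤ r) (h1 : r ≤ 7 / 8) :
    ∫ ξ in Ioo (-1 : ℝ) 1, arcForm r logForm ξ = Complex.exp (Real.pi * r * Complex.I) *
      ((-intB r + intX r : ℝ) + Complex.I * (intB (1 - r) : ℝ)) := by
  obtain ⟨M, hM⟩ := exists_norm_hyperForm_le (R := logForm) (e := r) (a := -1) (b := 2) (d := -1)
    (c := 3 / 2) (abs_le.2 ⟨by linarith, by linarith⟩) (fun q hq _ => by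
      obtain ⟨hm, hp, hz, hp3, hm3⟩ := modBeta_ne_zero_add_one hq
      have h2 : 2 ≤ ‖q + 3‖ := by
        refine le_trans ?_ (Complex.re_le_norm _)
        simp
        linarith [hq.1]
      have := norm_pos_iff.2 hm
      have := norm_pos_iff.2 hz
      rw [logForm, norm_div, norm_mul, norm_mul, norm_mul, norm_pow, Real.rpow_neg_one,
        Real.rpow_neg_one, Real.rpow_two, add_comm 1 q, RCLike.norm_ofNat,
        div_le_iff₀ (by positivity)]
      field_simp
      nlinarith [sq_nonneg ‖q + 1‖])
    (by linarith) (by linarith) (by norm_num)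
  have hR : DifferentiableOn ℂ logForm halfStrip := fun q hq => by
    obtain ⟨hm, hp, hz, hp3, hm3⟩ := modBeta_ne_zero_add_one hq
    unfold logForm
    refine DifferentiableAt.differentiableWithinAt (DifferentiableAt.fun_div ?_ ?_ ?_)
    · fun_prop
    · fun_prop
    · exact mul_ne_zero (mul_ne_zero hm hp3) hz
  have hc : ∀ ξ ∈ Ioo (-1 : ℝ) 1, ξ ≠ 0 →
      ContinuousAt (logForm : ℂ → ℂ) ξ ∧ logForm (ξ : ℂ) = (logForm ξ : ℝ) := by
    intro ξ hξ h0
    refine ⟨?_, by simp [logForm]⟩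
    unfold logForm
    refine ContinuousAt.div₀ (by fun_prop) (by fun_prop) ?_
    norm_cast
    exact mul_ne_zero (mul_ne_zero (by linarith [hξ.2]) (by linarith [hξ.1])) h0
  obtain ⟨h2, h3⟩ := integral_modRatio_Ioo_neg_one_zero r
  rw [(integral_arcForm hR hM hc).2]
  simp only [logForm]
  rw [integral_modRatio_Ioo_zero_one, h2, h3]

lemma integral_arcForm_traceForm : IntegrableOn (arcForm (1 / 8) traceForm) (Ioo (-1) 1) ∧
    ∫ ξ in Ioo (-1 : ℝ) 1, arcForm (1 / 8) traceForm ξ =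
      Complex.exp (Real.pi * (1 / 8 : ℝ) * Complex.I) *
        ((-intB (3 / 8) - 3 * intX (3 / 8) : ℝ) - Complex.I * (intB (5 / 8) : ℝ)) := by
  obtain ⟨M, hM⟩ := exists_norm_hyperForm_le (R := traceForm) (e := 1 / 8) (a := -1) (b := 0)
    (d := 0) (c := 5) (abs_le.2 ⟨by linarith, by linarith⟩) (fun q hq h1 => by
      have h2 : ‖3 - q‖ ≤ 5 := by
        refine (Complex.norm_le_abs_re_add_abs_im _).trans ?_
        simp only [Complex.sub_re, Complex.sub_im, Complex.re_ofNat, Complex.im_ofNat, zero_sub,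
          abs_neg]
        rw [abs_of_pos hq.2.2, abs_of_pos (by linarith [hq.2.1])]
        linarith [hq.1]
      rw [traceForm, norm_div, Real.rpow_neg_one, Real.rpow_zero, Real.rpow_zero, mul_one, mul_one,
        div_eq_mul_inv]
      gcongr)
    (by norm_num) (by norm_num) (by norm_num)
  have hR : DifferentiableOn ℂ traceForm halfStrip := fun q hq => by
    unfold traceForm
    refine DifferentiableAt.differentiableWithinAt (DifferentiableAt.fun_div ?_ ?_ ?_)
    · fun_prop
    · fun_prop
    · exact (modBeta_ne_zero_add_one hq).1
  have hc : ∀ ξ ∈ Ioo (-1 : ℝ) 1, ξ ≠ 0 →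
      ContinuousAt (traceForm : ℂ → ℂ) ξ ∧ traceForm (ξ : ℂ) = (traceForm ξ : ℝ) := by
    intro ξ hξ h0
    refine ⟨?_, by simp [traceForm]⟩
    unfold traceForm
    refine ContinuousAt.div₀ (by fun_prop) (by fun_prop) ?_
    norm_cast
    linarith [hξ.2]
  obtain ⟨h1, h2⟩ := integral_arcForm hR hM hc
  obtain ⟨h3, h4, h5⟩ := integral_real_axis_of_eq
    fun q hq h0 => (neg_modRatio_rpow_mul_traceForm hq h0).1
  refine ⟨h1, ?_⟩
  rw [h2, h3, h4, h5]
  norm_num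
  ring

lemma integral_arcForm_traceForm' : IntegrableOn (arcForm (7 / 8) traceForm') (Ioo (-1) 1) ∧
    ∫ ξ in Ioo (-1 : ℝ) 1, arcForm (7 / 8) traceForm' ξ =
      Complex.exp (Real.pi * (7 / 8 : ℝ) * Complex.I) *
        ((-intB (5 / 8) - 3 * intX (5 / 8) : ℝ) - Complex.I * (intB (3 / 8) : ℝ)) := by
  obtain ⟨M, hM⟩ := exists_norm_hyperForm_le (R := traceForm') (e := 7 / 8) (a := -3) (b := 2)
    (d := 0) (c := 5) (abs_le.2 ⟨by linarith, by linarith⟩) (fun q hq h1 => by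
      have h2 : ‖3 - q‖ ≤ 5 := by
        refine (Complex.norm_le_abs_re_add_abs_im _).trans ?_
        simp only [Complex.sub_re, Complex.sub_im, Complex.re_ofNat, Complex.im_ofNat, zero_sub,
          abs_neg]
        rw [abs_of_pos hq.2.2, abs_of_pos (by linarith [hq.2.1])]
        linarith [hq.1]
      rw [traceForm', norm_div, norm_mul, norm_pow, norm_pow, Real.rpow_neg (norm_nonneg _),
        Real.rpow_zero, mul_one, Real.rpow_two, Real.rpow_ofNat, div_eq_mul_inv]
      calc _ ≤ ‖q + 1‖ ^ 2 * 5 * (‖q - 1‖ ^ 3)⁻¹ := by gcongr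
        _ = _ := by ring)
    (by norm_num) (by norm_num) (by norm_num)
  have hR : DifferentiableOn ℂ traceForm' halfStrip := fun q hq => by
    unfold traceForm'
    refine DifferentiableAt.differentiableWithinAt (DifferentiableAt.fun_div ?_ ?_ ?_)
    · fun_prop
    · fun_prop
    · exact pow_ne_zero 3 (modBeta_ne_zero_add_one hq).1
  have hc : ∀ ξ ∈ Ioo (-1 : ℝ) 1, ξ ≠ 0 →
      ContinuousAt (traceForm' : ℂ → ℂ) ξ ∧ traceForm' (ξ : ℂ) = (traceForm' ξ : ℝ) := by
    intro ξ hξ h0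
    refine ⟨?_, by simp [traceForm']⟩
    unfold traceForm'
    refine ContinuousAt.div₀ (by fun_prop) (by fun_prop) (pow_ne_zero 3 ?_)
    norm_cast
    linarith [hξ.2]
  obtain ⟨h1, h2⟩ := integral_arcForm hR hM hc
  obtain ⟨h3, h4, h5⟩ := integral_real_axis_of_eq
    fun q hq h0 => (neg_modRatio_rpow_mul_traceForm hq h0).2
  refine ⟨h1, ?_⟩
  rw [h2, h3, h4, h5]
  norm_num
  ring

lemma arcS_neg (ξ : ℝ) : arcS (-ξ) = arcS ξ := by
  unfold arcS; congr 1; ring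

lemma arcD_neg (ξ : ℝ) : arcD (-ξ) = arcD ξ := by
  rw [arcD, arcD, arcS_neg, neg_sq]

/-- The root of `modBeta q = arcBeta ξ` in the interval `(1, 3)`. -/
noncomputable def realRoot (ξ : ℝ) : ℝ := -ξ + arcD ξ

lemma neg_realRoot_neg (ξ : ℝ) : -realRoot (-ξ) = -ξ - arcD ξ := by
  rw [realRoot, arcD_neg]; ring

lemma contDiff_realRoot : ContDiff ℝ 1 realRoot := contDiff_neg.add contDiff_arcD

lemma hasDerivAt_realRoot (ξ : ℝ) : HasDerivAt realRoot (deriv realRoot ξ) ξ :=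
  (contDiff_realRoot.differentiable one_ne_zero ξ).hasDerivAt

lemma arcD_one : arcD 1 = 2 := by
  rw [arcD, arcS, show (1 : ℝ) ^ 4 - 3 * 1 ^ 2 + 3 = 1 by norm_num, Real.sqrt_one,
    show (2 : ℝ) * 1 + 3 - 1 ^ 2 = 2 ^ 2 by norm_num, Real.sqrt_sq (by norm_num)]

lemma realRoot_one : realRoot 1 = 1 := by rw [realRoot, arcD_one]; norm_num

lemma realRoot_neg_one : realRoot (-1) = 3 := by rw [realRoot, arcD_neg, arcD_one]; norm_num

lemma realRoot_mem {ξ : ℝ} (h : ξ ∈ Ioo (-1 : ℝ) 1) : realRoot ξ ∈ Ioo (1 : ℝ) 3 := by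
  have hD := arcD_sq ξ
  have hD0 := arcD_pos ξ
  have hS := arcS_sq ξ
  have hS0 := arcS_pos ξ
  obtain ⟨h0, h1⟩ := h
  have h0' : 0 < 1 + ξ := by linarith
  have h1' : 0 < 1 - ξ := by linarith
  have e1 : ξ ^ 2 + ξ - 1 < arcS ξ := by
    refine lt_of_pow_lt_pow_left₀ 2 hS0.le ?_
    nlinarith [mul_pos (mul_pos h0' h0') h1']
  have e2 : arcS ξ < 3 + 3 * ξ + ξ ^ 2 := by
    refine lt_of_pow_lt_pow_left₀ 2 (by nlinarith [sq_nonneg (ξ + 3 / 2)]) ?_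
    nlinarith [pow_pos h0' 3]
  constructor
  · have : 1 + ξ < arcD ξ := by
      refine lt_of_pow_lt_pow_left₀ 2 hD0.le ?_
      nlinarith
    rw [realRoot]; linarith
  · have : arcD ξ < 3 + ξ := by
      refine lt_of_pow_lt_pow_left₀ 2 (by linarith) ?_
      nlinarith
    rw [realRoot]; linarith

lemma modBeta_realRoot {ξ : ℝ} (h : realRoot ξ ≠ 0) : modBeta (realRoot ξ) = arcBeta ξ := by
  have hD := arcD_sq ξ
  have hS := arcS_sq ξ
  have hq : realRoot ξ ^ 2 + 2 * ξ * realRoot ξ + (2 * ξ ^ 2 - 3 - 2 * arcS ξ) = 0 := by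
    rw [realRoot]; linear_combination hD
  rw [modBeta, arcBeta, div_eq_div_iff (by simpa using h) two_ne_zero]
  linear_combination 2 * (realRoot ξ ^ 2 - 2 * ξ * realRoot ξ + (2 * arcS ξ + 2 * ξ ^ 2 - 3)) * hq +
    8 * hS

lemma arcBeta_neg (ξ : ℝ) : arcBeta (-ξ) = 1 - arcBeta ξ := by
  rw [arcBeta, arcBeta, arcS_neg]; ring

lemma modBeta_neg_realRoot_neg {ξ : ℝ} (h : realRoot (-ξ) ≠ 0) :
    modBeta (-realRoot (-ξ)) = arcBeta ξ := by
  rw [modBeta_neg h, modBeta_realRoot h, arcBeta_neg, sub_sub_cancel]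

lemma hasDerivAt_modAlpha {q : ℝ} (hq : q ≠ 0) :
    HasDerivAt modAlpha ((3 - q) ^ 2 * (q + 3) ^ 2 / (16 * q ^ 4)) q := by
  have hn := ((hasDerivAt_id q).sub_const 1).mul (((hasDerivAt_id q).add_const 3).pow 3)
  have hd := ((hasDerivAt_id q).pow 3).const_mul 16
  refine (hn.div hd (by simpa using hq)).congr_deriv ?_
  simp only [id, Pi.mul_apply, Pi.pow_apply]
  field_simp
  ring

section Branch

variable {q : ℝ}

lemma modBeta_div_one_sub_modBeta (h0 : q ≠ 0) : modBeta q / (1 - modBeta q) = modRatio q := by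
  rw [one_sub_modBeta h0, modBeta, modRatio, div_div_div_cancel_right₀ (by simpa using h0),
    add_comm 1 q]

lemma modAlpha_div_one_sub_modAlpha (h0 : q ≠ 0) :
    modAlpha q / (1 - modAlpha q) = modRatioAlpha q := by
  rw [one_sub_modAlpha h0, modAlpha, modRatioAlpha, div_div_div_cancel_right₀ (by simpa using h0),
    add_comm 1 q]

lemma modAlpha_mem_of_one_lt (h : q ∈ Ioo (1 : ℝ) 3) : modAlpha q ∈ Ioo (0 : ℝ) 1 := by
  obtain ⟨h1, h3⟩ := h
  have e1 : 0 < q - 1 := by linarith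
  have e3 : 0 < 3 - q := by linarith
  have e0 : 0 < q := by linarith
  refine ⟨?_, ?_⟩
  · rw [modAlpha]; positivity
  · rw [← sub_pos, one_sub_modAlpha e0.ne']; positivity

lemma modAlpha_neg_mem_of_one_lt (h : q ∈ Ioo (1 : ℝ) 3) : modAlpha (-q) ∈ Ioo (0 : ℝ) 1 := by
  have := modAlpha_mem_of_one_lt h
  rw [modAlpha_neg (by linarith [h.1])]
  exact ⟨by linarith [this.2], by linarith [this.1]⟩

lemma modRatio_pos (h1 : 0 < (q - 1) * (q + 1)) (h3 : 0 < (q + 3) * (3 - q)) :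
    0 < modRatio q := by
  have e1 : q + 1 ≠ 0 := by rintro h; simp [h] at h1
  have e3 : 3 - q ≠ 0 := by rintro h; simp [h] at h3
  have : modRatio q =
      ((q - 1) * (q + 1)) ^ 3 * ((q + 3) * (3 - q)) / ((q + 1) ^ 6 * (3 - q) ^ 2) := by
    rw [modRatio]; field_simp
  rw [this]
  have : 0 < (q + 1) ^ 6 := Even.pow_pos (by decide) e1
  have : 0 < (3 - q) ^ 2 := Even.pow_pos (by decide) e3
  positivity

lemma modRatioAlpha_pos (h1 : 0 < (q - 1) * (q + 1)) (h3 : 0 < (q + 3) * (3 - q)) :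
    0 < modRatioAlpha q := by
  have e1 : q + 1 ≠ 0 := by rintro h; simp [h] at h1
  have e3 : 3 - q ≠ 0 := by rintro h; simp [h] at h3
  have : modRatioAlpha q =
      (q - 1) * (q + 1) * ((q + 3) * (3 - q)) ^ 3 / ((q + 1) ^ 2 * (3 - q) ^ 6) := by
    rw [modRatioAlpha]; field_simp
  rw [this]
  have : 0 < (q + 1) ^ 2 := Even.pow_pos (by decide) e1
  have : 0 < (3 - q) ^ 6 := Even.pow_pos (by decide) e3
  positivity

lemma modRatio_rpow_mul_traceForm (h1 : 0 < (q - 1) * (q + 1)) (h3 : 0 < (q + 3) * (3 - q))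
    (h0 : q ≠ 0) :
    modRatio q ^ (1 / 8 : ℝ) * traceForm q =
      modRatioAlpha q ^ (3 / 8 : ℝ) * (q * ((3 - q) ^ 2 / ((q - 1) * (q + 3) * q))) ∧
    modRatio q ^ (7 / 8 : ℝ) * traceForm' q =
      modRatioAlpha q ^ (5 / 8 : ℝ) * (q * ((3 - q) ^ 2 / ((q - 1) * (q + 3) * q))) := by
  have e1 : q + 1 ≠ 0 := by rintro h; simp [h] at h1
  have e2 : q - 1 ≠ 0 := by rintro h; simp [h] at h1
  have e3 : 3 - q ≠ 0 := by rintro h; simp [h] at h3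
  have e4 : q + 3 ≠ 0 := by rintro h; simp [h] at h3
  have hv := modRatio_pos h1 h3
  have hu := modRatioAlpha_pos h1 h3
  have hc : 0 < (q + 3) / (3 - q) := by
    rw [div_eq_mul_inv, ← mul_pos_iff_of_pos_right (by positivity : 0 < (3 - q) ^ 2)]
    rw [mul_assoc, sq, inv_mul_cancel_left₀ e3]
    exact h3
  have hc' : 0 < (q + 1) ^ 2 * (q + 3) / ((q - 1) ^ 2 * (3 - q)) := by
    rw [mul_div_mul_comm]
    exact mul_pos (by positivity) hc
  constructor
  · rw [rpow_three_eighths hv hu hc (modRatioAlpha_pow_three e1 e3), traceForm]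
    field_simp
  · rw [rpow_five_eighths hv hu hc' (modRatioAlpha_pow_five e1 e3 e2), traceForm']
    field_simp

end Branch

/-- The integral along a real branch `q` of the inverse of `modBeta` of a form
`(β / (1 - β)) ^ e * R`, which pulls back to `q * (α / (1 - α)) ^ r * dα / α`. -/
lemma integral_branch {q q' : ℝ → ℝ} {R : ℝ → ℝ} {e r k : ℝ} (hr0 : 0 < r) (hr1 : r < 15 / 16)
    (hc : ContinuousOn q (Icc (-1) 1)) (h0 : ∀ ξ ∈ Icc (-1 : ℝ) 1, q ξ ≠ 0)
    (hd : ∀ ξ ∈ Ioo (-1 : ℝ) 1, HasDerivAt q (q' ξ) ξ) (hn : ∀ ξ ∈ Ioo (-1 : ℝ) 1, q' ξ < 0)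
    (hm0 : modAlpha (q (-1)) = 1) (hm1 : modAlpha (q 1) = 0)
    (hm : ∀ ξ ∈ Ioo (-1 : ℝ) 1, modAlpha (q ξ) ∈ Ioo (0 : ℝ) 1)
    (hk : ∀ ξ ∈ Ioo (-1 : ℝ) 1,
      q ξ * ellInt 1 (1 - modBeta (q ξ)) = k * ellInt 1 (1 - modAlpha (q ξ)))
    (h : ∀ ξ ∈ Ioo (-1 : ℝ) 1, modRatio (q ξ) ^ e * R (q ξ) =
      modRatioAlpha (q ξ) ^ r * (q ξ * ((3 - q ξ) ^ 2 / ((q ξ - 1) * (q ξ + 3) * q ξ)))) :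
    IntegrableOn (fun ξ => modRatio (q ξ) ^ e * ellInt 1 (1 - modBeta (q ξ)) * (R (q ξ) * q' ξ))
      (Ioo (-1) 1) ∧
    ∫ ξ in Ioo (-1 : ℝ) 1, modRatio (q ξ) ^ e * ellInt 1 (1 - modBeta (q ξ)) * (R (q ξ) * q' ξ) =
      -(k * intA r) := by
  have hne : ∀ ξ ∈ Ioo (-1 : ℝ) 1, q ξ - 1 ≠ 0 ∧ q ξ + 3 ≠ 0 ∧ 3 - q ξ ≠ 0 ∧ q ξ ≠ 0 := by
    intro ξ hξ
    have e0 := h0 ξ (Ioo_subset_Icc_self hξ)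
    obtain ⟨h1, h2⟩ := hm ξ hξ
    refine ⟨?_, ?_, ?_, e0⟩
    · intro h; simp [modAlpha, h] at h1
    · intro h; simp [modAlpha, h] at h1
    · intro h; rw [← sub_pos, one_sub_modAlpha e0] at h2; simp [h] at h2
  obtain ⟨h1, h2⟩ := integral_comp_eq_neg_intA (m := fun ξ => modAlpha (q ξ)) hr0 hr1
    (fun ξ hξ => (hasDerivAt_modAlpha (h0 ξ hξ)).continuousAt.comp_continuousWithinAt (hc ξ hξ))
    (fun ξ hξ => (hasDerivAt_modAlpha (h0 ξ (Ioo_subset_Icc_self hξ))).comp ξ (hd ξ hξ))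
    (fun ξ hξ => mul_neg_of_pos_of_neg (by
      obtain ⟨-, e2, e3, e0⟩ := hne ξ hξ
      have : 0 < q ξ ^ 4 := Even.pow_pos (by decide) e0
      positivity) (hn ξ hξ)) hm0 hm1 hm
  have he : EqOn (fun ξ => k * ((modAlpha (q ξ) / (1 - modAlpha (q ξ))) ^ r *
        ellInt 1 (1 - modAlpha (q ξ)) * ((3 - q ξ) ^ 2 * (q ξ + 3) ^ 2 / (16 * q ξ ^ 4) * q' ξ /
          modAlpha (q ξ))))
      (fun ξ => modRatio (q ξ) ^ e * ellInt 1 (1 - modBeta (q ξ)) * (R (q ξ) * q' ξ))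
      (Ioo (-1) 1) := by
    intro ξ hξ
    obtain ⟨e1, e2, e3, e0⟩ := hne ξ hξ
    have hlog : (3 - q ξ) ^ 2 * (q ξ + 3) ^ 2 / (16 * q ξ ^ 4) * q' ξ / modAlpha (q ξ) =
        (3 - q ξ) ^ 2 / ((q ξ - 1) * (q ξ + 3) * q ξ) * q' ξ := by
      rw [modAlpha]; field_simp
    have hξ1 := hk ξ hξ
    have hξ2 := h ξ hξ
    simp only
    rw [modAlpha_div_one_sub_modAlpha e0, hlog]
    linear_combination -(modRatioAlpha (q ξ) ^ r * ((3 - q ξ) ^ 2 /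
      ((q ξ - 1) * (q ξ + 3) * q ξ) * q' ξ)) * hξ1 - ellInt 1 (1 - modBeta (q ξ)) * q' ξ * hξ2
  refine ⟨IntegrableOn.congr_fun (h1.const_mul k) he measurableSet_Ioo, ?_⟩
  rw [← setIntegral_congr_fun measurableSet_Ioo he, integral_const_mul, h2, mul_neg]

/-- The logarithmic derivative of `arcBeta`. -/
noncomputable def arcLog (ξ : ℝ) : ℝ := -(3 * (1 - ξ ^ 2) ^ 2 / (2 * arcS ξ)) / arcBeta ξ

noncomputable def arcWeight (e ξ : ℝ) : ℝ :=
  (arcBeta ξ / (1 - arcBeta ξ)) ^ e * ellInt 1 (1 - arcBeta ξ)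

lemma arcBeta_deriv_neg {ξ : ℝ} (h : ξ ∈ Ioo (-1 : ℝ) 1) :
    -(3 * (1 - ξ ^ 2) ^ 2 / (2 * arcS ξ)) < 0 := by
  have := one_sub_sq_pos h
  have := arcS_pos ξ
  rw [neg_lt_zero]
  positivity

lemma logForm_eq {K : Type*} [Field K] {q : K} (h2 : (2 : K) ≠ 0) (h0 : q ≠ 0) (h1 : q - 1 ≠ 0)
    (h3 : q + 3 ≠ 0) : logForm q = 3 * (q ^ 2 - 1) ^ 2 / (16 * q ^ 2) / modBeta q := by
  have h16 : (16 : K) ≠ 0 := by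
    rw [show (16 : K) = 2 ^ 4 by norm_num]; exact pow_ne_zero 4 h2
  rw [logForm, modBeta]
  field_simp
  ring

lemma logForm_arcPoint {ξ : ℝ} (h : ξ ∈ Ioo (-1 : ℝ) 1) :
    logForm (arcPoint ξ) * (1 + deriv arcIm ξ * Complex.I) = arcLog ξ := by
  have hq := arcPoint_mem h
  have h0 : arcPoint ξ ≠ 0 := by simpa using halfStrip_ne hq 0
  have h1 : arcPoint ξ - 1 ≠ 0 := sub_ne_zero.2 (by simpa using halfStrip_ne hq 1)
  have h3 : arcPoint ξ + 3 ≠ 0 := by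
    rw [← sub_neg_eq_add, sub_ne_zero]
    simpa using halfStrip_ne hq (-3)
  rw [logForm_eq two_ne_zero h0 h1 h3, div_mul_eq_mul_div, arcPoint_deriv_eq h,
    modBeta_arcPoint h, arcLog]
  push_cast
  rfl

lemma integral_arcWeight_mul_arcLog {r : ℝ} (hr0 : 0 < r) (hr1 : r < 15 / 16) :
    IntegrableOn (fun ξ => arcWeight r ξ * arcLog ξ) (Ioo (-1) 1) ∧
    ∫ ξ in Ioo (-1 : ℝ) 1, arcWeight r ξ * arcLog ξ = -intA r := by
  have hS : arcS 1 = 1 := by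
    rw [arcS, show (1 : ℝ) ^ 4 - 3 * 1 ^ 2 + 3 = 1 by norm_num, Real.sqrt_one]
  exact integral_comp_eq_neg_intA hr0 hr1
    (fun ξ _ => (hasDerivAt_arcBeta ξ).continuousAt.continuousWithinAt)
    (fun ξ _ => hasDerivAt_arcBeta ξ) (fun ξ hξ => arcBeta_deriv_neg hξ)
    (by rw [arcBeta, arcS_neg, hS]; norm_num) (by rw [arcBeta, hS]; norm_num)
    (fun ξ hξ => arcBeta_mem hξ)

lemma arcForm_logForm (r : ℝ) {ξ : ℝ} (h : ξ ∈ Ioo (-1 : ℝ) 1) :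
    arcForm r logForm ξ = (arcWeight r ξ * arcLog ξ : ℝ) := by
  rw [arcForm, logForm_arcPoint h, arcWeight]
  push_cast
  rfl

lemma neg_intA_eq {r : ℝ} (h0 : 1 / 8 ≤ r) (h1 : r ≤ 7 / 8) :
    ((-intA r : ℝ) : ℂ) = Complex.exp (Real.pi * r * Complex.I) *
      ((-intB r + intX r : ℝ) + Complex.I * (intB (1 - r) : ℝ)) := by
  rw [← integral_arcForm_logForm h0 h1,
    ← (integral_arcWeight_mul_arcLog (r := r) (by linarith) (by linarith)).2,
    ← integral_complex_ofReal]
  exact setIntegral_congr_fun measurableSet_Ioo fun ξ hξ => (arcForm_logForm r hξ).symm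

lemma re_exp_mul (θ u v : ℝ) :
    (Complex.exp (θ * Complex.I) * (u + Complex.I * v)).re = Real.cos θ * u - Real.sin θ * v := by
  simp [Complex.exp_mul_I, Complex.cos_ofReal_re, Complex.sin_ofReal_re]

lemma im_exp_mul (θ u v : ℝ) :
    (Complex.exp (θ * Complex.I) * (u + Complex.I * v)).im = Real.cos θ * v + Real.sin θ * u := by
  simp [Complex.exp_mul_I, Complex.cos_ofReal_re, Complex.sin_ofReal_re]

lemma intB_one_sub_and_intX {r : ℝ} (h0 : 1 / 8 ≤ r) (h1 : r ≤ 7 / 8) :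
    intB (1 - r) = Real.sin (Real.pi * r) * intA r ∧
      intX r = intB r - Real.cos (Real.pi * r) * intA r := by
  have h := neg_intA_eq h0 h1
  rw [← Complex.ofReal_mul] at h
  have hre := congrArg Complex.re h
  have him := congrArg Complex.im h
  rw [re_exp_mul, Complex.ofReal_re] at hre
  rw [im_exp_mul, Complex.ofReal_im] at him
  have hsc := Real.sin_sq_add_cos_sq (Real.pi * r)
  constructor
  · linear_combination Real.sin (Real.pi * r) * hre - Real.cos (Real.pi * r) * him -
      intB (1 - r) * hsc
  · linear_combination -Real.cos (Real.pi * r) * hre - Real.sin (Real.pi * r) * him -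
      (-intB r + intX r) * hsc

lemma realRoot_mem_Icc {ξ : ℝ} (h : ξ ∈ Icc (-1 : ℝ) 1) : realRoot ξ ∈ Icc (1 : ℝ) 3 := by
  rcases h.1.eq_or_lt with h0 | h0
  · rw [← h0, realRoot_neg_one]; norm_num
  · rcases h.2.eq_or_lt with h1 | h1
    · rw [h1, realRoot_one]; norm_num
    · exact Ioo_subset_Icc_self (realRoot_mem ⟨h0, h1⟩)

lemma neg_mem_Ioo {ξ : ℝ} (h : ξ ∈ Ioo (-1 : ℝ) 1) : -ξ ∈ Ioo (-1 : ℝ) 1 :=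
  ⟨by linarith [h.2], by linarith [h.1]⟩

lemma neg_mem_Icc {ξ : ℝ} (h : ξ ∈ Icc (-1 : ℝ) 1) : -ξ ∈ Icc (-1 : ℝ) 1 :=
  ⟨by linarith [h.2], by linarith [h.1]⟩

lemma modBeta_deriv_mul_eq {q : ℝ → ℝ} {d ξ : ℝ} (hξ : ξ ∈ Ioo (-1 : ℝ) 1)
    (h0 : q ξ ≠ 0) (hq : HasDerivAt q d ξ) (h : ∀ t ∈ Ioo (-1 : ℝ) 1, modBeta (q t) = arcBeta t) :
    3 * (q ξ ^ 2 - 1) ^ 2 / (16 * q ξ ^ 2) * d = -(3 * (1 - ξ ^ 2) ^ 2 / (2 * arcS ξ)) := by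
  have h1 : HasDerivAt (fun ξ => modBeta (q ξ)) _ ξ :=
    (hasDerivAt_modBeta two_ne_zero h0).comp ξ hq
  refine h1.unique ((hasDerivAt_arcBeta ξ).congr_of_eventuallyEq ?_)
  filter_upwards [Ioo_mem_nhds hξ.1 hξ.2] with t ht
  exact h t ht

lemma deriv_neg_of_modBeta_eq {q : ℝ → ℝ} {d ξ : ℝ} (hξ : ξ ∈ Ioo (-1 : ℝ) 1)
    (h0 : q ξ ≠ 0) (hq : HasDerivAt q d ξ) (h : ∀ t ∈ Ioo (-1 : ℝ) 1, modBeta (q t) = arcBeta t) :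
    d < 0 := by
  have h1 := arcBeta_deriv_neg hξ
  rw [← modBeta_deriv_mul_eq hξ h0 hq h] at h1
  by_contra! hd
  exact h1.not_ge (by positivity)

/-- The integrand over a real branch `q` on which `modBeta q = arcBeta`. -/
lemma integrand_branch_eq {q : ℝ → ℝ} {d ξ e : ℝ} {R g : ℝ → ℝ} (hξ : ξ ∈ Ioo (-1 : ℝ) 1)
    (h0 : q ξ ≠ 0) (hq : HasDerivAt q d ξ) (h : ∀ t ∈ Ioo (-1 : ℝ) 1, modBeta (q t) = arcBeta t)
    (hR : R (q ξ) = g (q ξ) * logForm (q ξ)) :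
    modRatio (q ξ) ^ e * ellInt 1 (1 - modBeta (q ξ)) * (R (q ξ) * d) =
      arcWeight e ξ * arcLog ξ * g (q ξ) := by
  have hb := (arcBeta_mem hξ).1.ne'
  have h1 : q ξ - 1 ≠ 0 := by
    intro h1; rw [← h ξ hξ, modBeta, h1] at hb; simp at hb
  have h3 : q ξ + 3 ≠ 0 := by
    intro h1; rw [← h ξ hξ, modBeta, h1] at hb; simp at hb
  rw [← modBeta_div_one_sub_modBeta h0, hR, logForm_eq two_ne_zero h0 h1 h3, h ξ hξ, arcWeight,
    arcLog, ← modBeta_deriv_mul_eq hξ h0 hq h]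
  ring

section TraceRatio

variable {K : Type*} [Field K]

/-- The ratio `traceForm / logForm`. -/
def traceRatio (q : K) : K := q * (3 - q) * (q + 3) / (3 * (1 + q) ^ 2)

lemma traceForm_eq [CharZero K] {q : K} (h0 : q ≠ 0) (h1 : 1 + q ≠ 0) (h3 : q + 3 ≠ 0) :
    traceForm q = traceRatio q * logForm q := by
  rw [traceForm, traceRatio, logForm]
  field_simp

lemma traceForm'_eq [CharZero K] {q : K} (h0 : q ≠ 0) (h1 : q - 1 ≠ 0) (h3 : q + 3 ≠ 0) :
    traceForm' q = -traceRatio (-q) * logForm q := by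
  have h2 : 1 + -q ≠ 0 := by
    intro h; exact h1 (by linear_combination -h)
  rw [traceForm', traceRatio, logForm, show 1 + -q = -(q - 1) by ring]
  field_simp
  ring

lemma sum_traceRatio_eq_two [CharZero K] {a b c d : K} (h1 : a + b + c + d = 0)
    (h2 : a * b + a * c + a * d + b * c + b * d + c * d = -6) (h4 : a * b * c * d = -3)
    (ha : 1 + a ≠ 0) (hb : 1 + b ≠ 0) (hc : 1 + c ≠ 0) (hd : 1 + d ≠ 0) :
    traceRatio a + traceRatio b + traceRatio c + traceRatio d = 2 := by
  have key : ∀ x : K, 1 + x ≠ 0 →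
      traceRatio x = (-(1 + x) + 3 + 6 * (1 + x)⁻¹ - 8 * (1 + x)⁻¹ ^ 2) / 3 := by
    intro x hx
    rw [traceRatio]
    field_simp
    ring
  have s1 : (1 + a)⁻¹ + (1 + b)⁻¹ + (1 + c)⁻¹ + (1 + d)⁻¹ = 1 := by
    field_simp
    linear_combination 2 * h1 + h2 - h4
  have s2 : (1 + a)⁻¹ * (1 + b)⁻¹ + (1 + a)⁻¹ * (1 + c)⁻¹ + (1 + a)⁻¹ * (1 + d)⁻¹ +
      (1 + b)⁻¹ * (1 + c)⁻¹ + (1 + b)⁻¹ * (1 + d)⁻¹ + (1 + c)⁻¹ * (1 + d)⁻¹ = 0 := by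
    field_simp
    linear_combination 3 * h1 + h2
  rw [key a ha, key b hb, key c hc, key d hd]
  generalize (1 + a)⁻¹ = ta at *
  generalize (1 + b)⁻¹ = tb at *
  generalize (1 + c)⁻¹ = tc at *
  generalize (1 + d)⁻¹ = td at *
  linear_combination (-1 / 3) * h1 + 2 * s1 + 16 / 3 * s2 - 8 / 3 * (ta + tb + tc + td + 1) * s1

end TraceRatio

lemma realRoot_ne_zero {ξ : ℝ} (h : ξ ∈ Icc (-1 : ℝ) 1) : realRoot ξ ≠ 0 :=
  (zero_lt_one.trans_le (realRoot_mem_Icc h).1).ne'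

lemma hasDerivAt_neg_realRoot_neg (ξ : ℝ) :
    HasDerivAt (fun ξ => -realRoot (-ξ)) (deriv realRoot (-ξ)) ξ :=
  ((hasDerivAt_realRoot (-ξ)).comp ξ (hasDerivAt_neg ξ)).neg.congr_deriv (by simp)

lemma modBeta_realRoot_of_mem {ξ : ℝ} (h : ξ ∈ Ioo (-1 : ℝ) 1) :
    modBeta (realRoot ξ) = arcBeta ξ :=
  modBeta_realRoot (realRoot_ne_zero (Ioo_subset_Icc_self h))

lemma modBeta_neg_realRoot_neg_of_mem {ξ : ℝ} (h : ξ ∈ Ioo (-1 : ℝ) 1) :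
    modBeta (-realRoot (-ξ)) = arcBeta ξ :=
  modBeta_neg_realRoot_neg (realRoot_ne_zero (neg_mem_Icc (Ioo_subset_Icc_self h)))

lemma one_add_ne_zero_of_modBeta {q : ℝ} (h0 : q ≠ 0) (h : modBeta q ∈ Ioo (0 : ℝ) 1) :
    1 + q ≠ 0 ∧ q - 1 ≠ 0 ∧ q + 3 ≠ 0 := by
  obtain ⟨h1, h2⟩ := h
  rw [← sub_pos, one_sub_modBeta h0] at h2
  rw [modBeta] at h1
  refine ⟨?_, ?_, ?_⟩
  · intro h; rw [add_comm] at h; simp [h, add_comm] at h2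
  · intro h; simp [h] at h1
  · intro h; simp [h] at h1

lemma ofReal_traceRatio (q : ℝ) : ((traceRatio q : ℝ) : ℂ) = traceRatio (q : ℂ) := by
  simp [traceRatio]

lemma conj_traceRatio (q : ℂ) :
    (starRingEnd ℂ) (traceRatio q) = traceRatio ((starRingEnd ℂ) q) := by
  simp [traceRatio, map_ofNat]

/-- The roots of `modBeta q = arcBeta ξ` are `arcPoint ξ`, its conjugate and two real numbers. -/
lemma sum_traceRatio_roots {ξ : ℝ} (h : ξ ∈ Ioo (-1 : ℝ) 1) {ε : ℝ} (hε : ε ^ 2 = 1) :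
    2 * (traceRatio (ε * arcPoint ξ)).re + traceRatio (ε * realRoot ξ) +
      traceRatio (ε * -realRoot (-ξ)) = 2 := by
  have hε0 : ε = 1 ∨ ε = -1 := sq_eq_one_iff.1 hε
  set C := arcPoint ξ
  have hs : C + (starRingEnd ℂ) C = 2 * ξ := by
    rw [Complex.add_conj, arcPoint_re]; push_cast; rfl
  have hp : C * (starRingEnd ℂ) C = 2 * arcS ξ + 2 * ξ ^ 2 - 3 := by
    rw [Complex.mul_conj, Complex.normSq_apply, arcPoint_re, arcPoint_im]
    have := arcIm_sq ξ
    norm_cast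
    linear_combination this
  have hs' : (realRoot ξ : ℂ) + ((-realRoot (-ξ) : ℝ) : ℂ) = -(2 * ξ) := by
    rw [neg_realRoot_neg, realRoot]; push_cast; ring
  have hp' : (realRoot ξ : ℂ) * ((-realRoot (-ξ) : ℝ) : ℂ) = 2 * ξ ^ 2 - 3 - 2 * arcS ξ := by
    have := arcD_sq ξ
    rw [neg_realRoot_neg, realRoot]
    norm_cast
    linear_combination -this
  have hS : (arcS ξ : ℂ) ^ 2 = ξ ^ 4 - 3 * ξ ^ 2 + 3 := by exact_mod_cast arcS_sq ξ
  have hε' : (ε : ℂ) ^ 2 = 1 := by exact_mod_cast hε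
  have him : (ε * C).im ≠ 0 := by
    have : 0 < C.im := (arcPoint_mem h).2.2
    rcases hε0 with rfl | rfl <;> simp [this.ne']
  have hC : 1 + ε * C ≠ 0 := fun hC => him (by simpa using congrArg Complex.im hC)
  have hreal : ∀ q : ℝ, q ≠ 0 → modBeta q = arcBeta ξ → 1 + (ε : ℂ) * q ≠ 0 := by
    intro q h0 hq
    obtain ⟨h1, h2, -⟩ := one_add_ne_zero_of_modBeta h0 (hq ▸ arcBeta_mem h)
    rcases hε0 with rfl | rfl
    · norm_cast; simpa using h1
    · rw [Complex.ofReal_neg, Complex.ofReal_one]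
      intro h3
      have h4 : (q : ℂ) - 1 = 0 := by linear_combination -h3
      exact h2 (by exact_mod_cast h4)
  have hI := Ioo_subset_Icc_self h
  have hsum := sum_traceRatio_eq_two (a := ε * C) (b := ε * (starRingEnd ℂ) C)
    (c := ε * (realRoot ξ : ℂ)) (d := ε * ((-realRoot (-ξ) : ℝ) : ℂ))
    (by linear_combination ε * hs + ε * hs')
    (by linear_combination (ε : ℂ) ^ 2 * (hp + hp' + ((realRoot ξ : ℂ) +
      ((-realRoot (-ξ) : ℝ) : ℂ)) * hs + 2 * ξ * hs') - 6 * hε')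
    (by
      generalize (realRoot ξ : ℂ) = c at *
      generalize ((-realRoot (-ξ) : ℝ) : ℂ) = d at *
      generalize (starRingEnd ℂ) C = b at *
      linear_combination (ε : ℂ) ^ 4 * (c * d * hp + (2 * arcS ξ + 2 * ξ ^ 2 - 3) * hp' - 4 * hS) -
        3 * (ε ^ 2 + 1) * hε')
    hC
    (by
      intro h0
      apply hC
      have := congrArg (starRingEnd ℂ) h0
      simpa using this)
    (hreal _ (realRoot_ne_zero hI) (modBeta_realRoot_of_mem h))
    (hreal _ (neg_ne_zero.2 (realRoot_ne_zero (neg_mem_Icc hI)))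
      (modBeta_neg_realRoot_neg_of_mem h))
  have hb : traceRatio (ε * (starRingEnd ℂ) C) = (starRingEnd ℂ) (traceRatio (ε * C)) := by
    rw [conj_traceRatio]; simp
  rw [hb, Complex.add_conj, ← Complex.ofReal_mul, ← Complex.ofReal_mul, ← ofReal_traceRatio,
    ← ofReal_traceRatio] at hsum
  exact_mod_cast hsum

lemma arcForm_re {e : ℝ} {R : ℂ → ℂ} {g : ℂ} {ξ : ℝ} (h : ξ ∈ Ioo (-1 : ℝ) 1)
    (hR : R (arcPoint ξ) = g * logForm (arcPoint ξ)) :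
    (arcForm e R ξ).re = arcWeight e ξ * arcLog ξ * g.re := by
  rw [arcForm, hR, mul_assoc, logForm_arcPoint h, ← arcWeight, Complex.re_ofReal_mul,
    Complex.re_mul_ofReal]
  ring

/-- The trace over the four branches of the inverse of `modBeta` of a form `g * logForm`. -/
lemma trace_relation {e r k ε : ℝ} {R : ℝ → ℝ} {Rc : ℂ → ℂ} (he0 : 0 < e) (he1 : e < 15 / 16)
    (hr0 : 0 < r) (hr1 : r < 15 / 16) (hε : ε ^ 2 = 1)
    (hR : ∀ q : ℝ, q ≠ 0 → 1 + q ≠ 0 → q - 1 ≠ 0 → q + 3 ≠ 0 →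
      R q = k * traceRatio (ε * q) * logForm q)
    (hRc : ∀ q : ℂ, q ≠ 0 → 1 + q ≠ 0 → q - 1 ≠ 0 → q + 3 ≠ 0 →
      Rc q = k * traceRatio (ε * q) * logForm q)
    (hRr : ∀ q : ℝ, 0 < (q - 1) * (q + 1) → 0 < (q + 3) * (3 - q) → q ≠ 0 →
      modRatio q ^ e * R q =
        modRatioAlpha q ^ r * (q * ((3 - q) ^ 2 / ((q - 1) * (q + 3) * q))))
    (hi : IntegrableOn (arcForm e Rc) (Ioo (-1) 1)) :
    k * intA e = -(intA r + (∫ ξ in Ioo (-1 : ℝ) 1, arcForm e Rc ξ).re) := by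
  have hne := fun ξ (hξ : ξ ∈ Icc (-1 : ℝ) 1) => realRoot_ne_zero hξ
  have hne' := fun ξ (hξ : ξ ∈ Icc (-1 : ℝ) 1) => neg_ne_zero.2 (hne _ (neg_mem_Icc hξ))
  have hd := fun ξ (_ : ξ ∈ Ioo (-1 : ℝ) 1) => hasDerivAt_realRoot ξ
  have hd' := fun ξ (_ : ξ ∈ Ioo (-1 : ℝ) 1) => hasDerivAt_neg_realRoot_neg ξ
  have hb := fun ξ (hξ : ξ ∈ Ioo (-1 : ℝ) 1) => modBeta_realRoot_of_mem hξ
  have hb' := fun ξ (hξ : ξ ∈ Ioo (-1 : ℝ) 1) => modBeta_neg_realRoot_neg_of_mem hξ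
  obtain ⟨i1, v1⟩ := integral_branch (q := realRoot) (q' := deriv realRoot) (R := R) (e := e)
    (r := r) (k := 1) hr0 hr1 contDiff_realRoot.continuous.continuousOn hne hd
    (fun ξ hξ => deriv_neg_of_modBeta_eq hξ (hne ξ (Ioo_subset_Icc_self hξ)) (hd ξ hξ) hb)
    (by rw [realRoot_neg_one, modAlpha]; norm_num) (by rw [realRoot_one, modAlpha]; norm_num)
    (fun ξ hξ => modAlpha_mem_of_one_lt (realRoot_mem hξ))
    (fun ξ hξ => by
      have := realRoot_mem hξ
      rw [ellInt_one_sub_modAlpha (by linarith [this.1]) this.2, one_mul])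
    (fun ξ hξ => by
      have := realRoot_mem hξ
      exact hRr _ (mul_pos (by linarith [this.1]) (by linarith [this.1]))
        (mul_pos (by linarith [this.1]) (by linarith [this.2])) (hne ξ (Ioo_subset_Icc_self hξ)))
  obtain ⟨i2, v2⟩ := integral_branch (q := fun ξ => -realRoot (-ξ))
    (q' := fun ξ => deriv realRoot (-ξ)) (R := R) (e := e) (r := r) (k := -3) hr0 hr1
    (contDiff_realRoot.continuous.comp continuous_neg).neg.continuousOn hne' hd'
    (fun ξ hξ => deriv_neg_of_modBeta_eq hξ (hne' ξ (Ioo_subset_Icc_self hξ)) (hd' ξ hξ) hb')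
    (by simp only [neg_neg]; rw [realRoot_one, modAlpha]; norm_num)
    (by rw [realRoot_neg_one, modAlpha]; norm_num)
    (fun ξ hξ => modAlpha_neg_mem_of_one_lt (realRoot_mem (neg_mem_Ioo hξ)))
    (fun ξ hξ => by
      have := realRoot_mem (neg_mem_Ioo hξ)
      have h0 := (zero_lt_one.trans this.1).ne'
      rw [modAlpha_neg h0, modBeta_neg h0, sub_sub_cancel, sub_sub_cancel,
        ellInt_modAlpha_of_one_lt this.1]
      ring)
    (fun ξ hξ => by
      have := realRoot_mem (neg_mem_Ioo hξ)
      exact hRr _ (mul_pos_of_neg_of_neg (by linarith [this.1]) (by linarith [this.1]))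
        (mul_pos (by linarith [this.2]) (by linarith [this.1])) (hne' ξ (Ioo_subset_Icc_self hξ)))
  have v3 := (integral_arcWeight_mul_arcLog he0 he1).2
  have v4 : ∫ ξ in Ioo (-1 : ℝ) 1, (arcForm e Rc ξ).re =
      (∫ ξ in Ioo (-1 : ℝ) 1, arcForm e Rc ξ).re := integral_re hi
  have i4 : IntegrableOn (fun ξ => (arcForm e Rc ξ).re) (Ioo (-1) 1) := hi.re
  have hsum : ∫ ξ in Ioo (-1 : ℝ) 1, (2 * k) * (arcWeight e ξ * arcLog ξ) =
      2 * (∫ ξ in Ioo (-1 : ℝ) 1, arcForm e Rc ξ).re + -(1 * intA r) + -(-3 * intA r) := by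
    have i5 := integral_add ((i4.const_mul 2).add i1) i2
    simp only [Pi.add_apply] at i5
    rw [← v1, ← v2, ← v4, ← integral_const_mul 2, ← integral_add (i4.const_mul 2) i1, ← i5]
    refine setIntegral_congr_fun measurableSet_Ioo fun ξ hξ => ?_
    have hI := Ioo_subset_Icc_self hξ
    have hm := arcBeta_mem hξ
    obtain ⟨a1, a2, a3⟩ := one_add_ne_zero_of_modBeta (hne ξ hI) (hb ξ hξ ▸ hm)
    obtain ⟨b1, b2, b3⟩ := one_add_ne_zero_of_modBeta (hne' ξ hI) (hb' ξ hξ ▸ hm)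
    have hq := arcPoint_mem hξ
    have c0 : arcPoint ξ ≠ 0 := by simpa using halfStrip_ne hq 0
    have c1 : 1 + arcPoint ξ ≠ 0 := by
      rw [add_comm, ← sub_neg_eq_add, sub_ne_zero]; simpa using halfStrip_ne hq (-1)
    have c2 : arcPoint ξ - 1 ≠ 0 := sub_ne_zero.2 (by simpa using halfStrip_ne hq 1)
    have c3 : arcPoint ξ + 3 ≠ 0 := by
      rw [← sub_neg_eq_add, sub_ne_zero]; simpa using halfStrip_ne hq (-3)
    rw [integrand_branch_eq (g := fun q => k * traceRatio (ε * q)) hξ (hne ξ hI) (hd ξ hξ) hb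
        (hR _ (hne ξ hI) a1 a2 a3),
      integrand_branch_eq (q := fun ξ => -realRoot (-ξ)) (g := fun q => k * traceRatio (ε * q))
        hξ (hne' ξ hI) (hd' ξ hξ) hb' (hR _ (hne' ξ hI) b1 b2 b3),
      arcForm_re hξ (hRc _ c0 c1 c2 c3), Complex.re_ofReal_mul]
    linear_combination -(k * arcWeight e ξ * arcLog ξ) * sum_traceRatio_roots hξ hε
  rw [integral_const_mul, v3] at hsum
  linear_combination -hsum / 2

/-- Termwise integration of a power series with nonnegative coefficients against a Beta weight. -/
lemma integral_rpow_mul_one_sub_rpow_mul_tsum {a b : ℝ} (ha : 0 < a) (hb : 0 < b) {c : ℕ → ℝ}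
    (hc : ∀ k, 0 ≤ c k) (hs : ∀ x ∈ Ioo (0 : ℝ) 1, Summable fun k => c k * x ^ k) :
    ∫ x in Ioo (0 : ℝ) 1, x ^ (a - 1) * (1 - x) ^ (b - 1) * ∑' k, c k * x ^ k =
      ∑' k, c k * ProbabilityTheory.beta (a + k) b := by
  have h1 : ∀ x ∈ Ioo (0 : ℝ) 1, ENNReal.ofReal (x ^ (a - 1) * (1 - x) ^ (b - 1) *
      ∑' k, c k * x ^ k) = ∑' k, ENNReal.ofReal (c k) *
        ENNReal.ofReal (x ^ (a + k - 1) * (1 - x) ^ (b - 1)) := fun x hx => by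
    have hx1 : 0 < 1 - x := by linarith [hx.2]
    have hx0 := hx.1
    rw [← tsum_mul_left, ENNReal.ofReal_tsum_of_nonneg]
    · refine tsum_congr fun k => ?_
      rw [← ENNReal.ofReal_mul (hc k), show a + k - 1 = (a - 1) + k by ring,
        Real.rpow_add hx0, Real.rpow_natCast]
      congr 1; ring
    · intro k; have := hc k; positivity
    · exact (hs x hx).mul_left _
  have h2 : ∫ x in Ioo (0 : ℝ) 1, x ^ (a - 1) * (1 - x) ^ (b - 1) * ∑' k, c k * x ^ k =
      ∫ x in Ioo (0 : ℝ) 1, (∑' k, ENNReal.ofReal (c k) *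
        ENNReal.ofReal (x ^ (a + k - 1) * (1 - x) ^ (b - 1))).toReal := by
    refine setIntegral_congr_fun measurableSet_Ioo fun x hx => ?_
    have hx1 : 0 < 1 - x := by linarith [hx.2]
    have hx0 := hx.1
    rw [← h1 x hx, ENNReal.toReal_ofReal]
    exact mul_nonneg (by positivity) (tsum_nonneg fun k => mul_nonneg (hc k) (by positivity))
  rw [h2, integral_toReal, lintegral_tsum, ENNReal.tsum_toReal_eq]
  · refine tsum_congr fun k => ?_
    have hk : 0 < a + k := by positivity
    rw [lintegral_const_mul _ (by fun_prop), lintegral_rpow_mul_one_sub_rpow hk hb,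
      ENNReal.toReal_mul, ENNReal.toReal_ofReal (hc k),
      ENNReal.toReal_ofReal (ProbabilityTheory.beta_pos hk hb).le]
  · intro k
    rw [lintegral_const_mul _ (by fun_prop), lintegral_rpow_mul_one_sub_rpow (by positivity) hb]
    exact ENNReal.mul_ne_top ENNReal.ofReal_ne_top ENNReal.ofReal_ne_top
  · intro k; fun_prop
  · fun_prop
  · filter_upwards [ae_restrict_mem measurableSet_Ioo] with x hx
    rw [← h1 x hx]; exact ENNReal.ofReal_lt_top

lemma poch_succ (x : ℝ) (k : ℕ) : poch x (k + 1) = poch x k * (x + k) :=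
  Finset.prod_range_succ _ _

lemma poch_pos {x : ℝ} (hx : 0 < x) (k : ℕ) : 0 < poch x k :=
  Finset.prod_pos fun i _ => by positivity

lemma poch_one (k : ℕ) : poch 1 k = (Nat.factorial k : ℝ) := by
  induction k with
  | zero => simp [poch]
  | succ k ih => rw [poch_succ, ih, Nat.factorial_succ]; push_cast; ring

lemma Gamma_add_nat_eq {x : ℝ} (hx : 0 < x) (k : ℕ) :
    Real.Gamma (x + k) = poch x k * Real.Gamma x := by
  induction k with
  | zero => simp [poch]
  | succ k ih =>
    rw [Nat.cast_succ, ← add_assoc, Real.Gamma_add_one (by positivity), ih, poch_succ]; ring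

lemma multichoose_half (k : ℕ) :
    Ring.choose ((1 / 2 : ℝ) + k - 1) k = poch (1 / 2) k / (Nat.factorial k : ℝ) := by
  rw [← Ring.multichoose_eq, eq_div_iff (by positivity)]
  have h := Ring.factorial_nsmul_multichoose_eq_ascPochhammer (1 / 2 : ℝ) k
  rw [nsmul_eq_mul] at h
  rw [mul_comm, h]
  induction k with
  | zero => simp [poch]
  | succ k ih =>
    rw [poch_succ, ← ih (by simpa [nsmul_eq_mul] using
        Ring.factorial_nsmul_multichoose_eq_ascPochhammer (1 / 2 : ℝ) k),
      Polynomial.ascPochhammer_smeval_eq_eval, Polynomial.ascPochhammer_smeval_eq_eval,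
      ascPochhammer_succ_eval]

lemma hasSum_one_sub_rpow_neg_half {z : ℝ} (h0 : 0 ≤ z) (h1 : z < 1) :
    HasSum (fun k : ℕ => poch (1 / 2) k / (Nat.factorial k : ℝ) * z ^ k) (√(1 - z))⁻¹ := by
  have h := (Real.one_div_one_sub_rpow_hasFPowerSeriesOnBall_zero (1 / 2)).hasSum (y := z) (by
    simp [edist_dist, Real.norm_of_nonneg h0, h1])
  simp only [FormalMultilinearSeries.ofScalars_apply_eq, multichoose_half, zero_add] at h
  rw [← Real.sqrt_eq_rpow, one_div] at h
  simpa [mul_comm] using h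

lemma ellInt_one_one_sub_eq_integral (x : ℝ) :
    ellInt 1 (1 - x) = 1 / Real.pi * ∫ t in Ioo (0 : ℝ) 1,
      t ^ ((1 / 2 : ℝ) - 1) * (1 - t) ^ ((1 / 2 : ℝ) - 1) * (√(1 - x * t))⁻¹ := by
  have himg : (fun t : ℝ => (1 - t) / t) '' Ioo 0 1 = Ioi 0 := by
    ext u
    constructor
    · rintro ⟨t, ht, rfl⟩
      exact div_pos (by linarith [ht.2]) ht.1
    · intro (hu : 0 < u)
      exact ⟨1 / (1 + u), ⟨by positivity, by rw [div_lt_one (by positivity)]; linarith⟩,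
        by field_simp; ring⟩
  have hinj : InjOn (fun t : ℝ => (1 - t) / t) (Ioo 0 1) := fun s hs t ht h => by
    have h1 := hs.1.ne'
    have h2 := ht.1.ne'
    simp only at h
    field_simp at h
    linarith
  have hd : ∀ t ∈ Ioo (0 : ℝ) 1,
      HasDerivWithinAt (fun t : ℝ => (1 - t) / t) (-(1 / t ^ 2)) (Ioo 0 1) t := fun t ht => by
    have h0 := ht.1.ne'
    refine ((((hasDerivAt_id t).const_sub 1).div (hasDerivAt_id t) h0).congr_deriv
      ?_).hasDerivWithinAt
    simp only [id]
    field_simp; ring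
  rw [ellInt, ← himg, integral_image_eq_integral_abs_deriv_smul measurableSet_Ioo hd hinj]
  congr 1
  refine setIntegral_congr_fun measurableSet_Ioo fun t ht => ?_
  have h0 := ht.1
  have h1 : 0 < 1 - t := by linarith [ht.2]
  simp only [smul_eq_mul]
  rw [abs_neg, abs_of_pos (by positivity),
    show (1 - t) / t * ((1 - t) / t + 1) * ((1 - t) / t + (1 - x)) =
      (1 / t ^ 2) ^ 2 * (t * (1 - t)) * (1 - x * t) by field_simp; ring,
    Real.sqrt_mul (by positivity), Real.sqrt_mul (by positivity), Real.sqrt_sq (by positivity),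
    ← Real.mul_rpow h0.le h1.le, show (1 / 2 : ℝ) - 1 = -(1 / 2) by norm_num,
    Real.rpow_neg (by positivity), ← Real.sqrt_eq_rpow, mul_inv, mul_inv, ← mul_assoc, ← mul_assoc,
    mul_inv_cancel₀ (by positivity), one_mul]

lemma half_coeff_nonneg (k : ℕ) : 0 ≤ poch (1 / 2) k / (Nat.factorial k : ℝ) :=
  div_nonneg (poch_pos (by norm_num) k).le (by positivity)

lemma half_coeff_le_one (k : ℕ) : poch (1 / 2) k / (Nat.factorial k : ℝ) ≤ 1 := by
  rw [div_le_one (by positivity), ← poch_one]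
  refine Finset.prod_le_prod (fun i _ => by positivity) fun i _ => by norm_num

lemma beta_half_half (k : ℕ) : ProbabilityTheory.beta (1 / 2 + k) (1 / 2) =
    Real.pi * (poch (1 / 2) k / (Nat.factorial k : ℝ)) := by
  rw [ProbabilityTheory.beta, Gamma_add_nat_eq (by norm_num),
    show (1 / 2 : ℝ) + k + 1 / 2 = k + 1 by ring, Real.Gamma_nat_eq_factorial,
    Real.Gamma_one_half_eq, mul_assoc, Real.mul_self_sqrt Real.pi_pos.le]
  ring

lemma summable_half_coeff_sq {x : ℝ} (hx : x ∈ Ioo (0 : ℝ) 1) :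
    Summable fun k : ℕ => (poch (1 / 2) k / (Nat.factorial k : ℝ)) ^ 2 * x ^ k := by
  refine Summable.of_nonneg_of_le (fun k => ?_) (fun k => ?_)
    (summable_geometric_of_lt_one hx.1.le hx.2)
  · have := hx.1; positivity
  · exact mul_le_of_le_one_left (pow_nonneg hx.1.le k)
      (pow_le_one₀ (half_coeff_nonneg k) (half_coeff_le_one k))

lemma ellInt_one_one_sub_eq_tsum {x : ℝ} (hx : x ∈ Ioo (0 : ℝ) 1) :
    ellInt 1 (1 - x) = ∑' k : ℕ, (poch (1 / 2) k / (Nat.factorial k : ℝ)) ^ 2 * x ^ k := by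
  have hxt : ∀ t ∈ Ioo (0 : ℝ) 1, HasSum (fun k : ℕ =>
      poch (1 / 2) k / (Nat.factorial k : ℝ) * x ^ k * t ^ k) (√(1 - x * t))⁻¹ := fun t ht => by
    have := hasSum_one_sub_rpow_neg_half (mul_nonneg hx.1.le ht.1.le)
      (mul_lt_one_of_nonneg_of_lt_one_left hx.1.le hx.2 ht.2.le)
    simpa [mul_pow, mul_assoc] using this
  have h := integral_rpow_mul_one_sub_rpow_mul_tsum (a := 1 / 2) (b := 1 / 2) (by norm_num)
    (by norm_num) (fun k => mul_nonneg (half_coeff_nonneg k) (pow_nonneg hx.1.le k))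
    (fun t ht => (hxt t ht).summable)
  rw [ellInt_one_one_sub_eq_integral]
  rw [setIntegral_congr_fun measurableSet_Ioo (g := fun t : ℝ => t ^ ((1 / 2 : ℝ) - 1) *
    (1 - t) ^ ((1 / 2 : ℝ) - 1) * ∑' k : ℕ, poch (1 / 2) k / (Nat.factorial k : ℝ) * x ^ k * t ^ k)
    (fun t ht => by simp only [(hxt t ht).tsum_eq]), h, ← tsum_mul_left]
  refine tsum_congr fun k => ?_
  rw [beta_half_half]
  field_simp

/-- The hypergeometric value `F(r, s)` as an Eulerian integral of the elliptic period. -/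
lemma Fval_eq_integral {r s : ℚ} (hr : 0 < r) (hs : r < s) :
    Fval r s = (2 : ℝ) ^ ((1 : ℝ) - 4 * (r : ℝ)) / (2 * (r.den : ℝ)) *
      ∫ x in Ioo (0 : ℝ) 1, x ^ ((r : ℝ) - 1) * (1 - x) ^ ((s : ℝ) - r - 1) * ellInt 1 (1 - x) := by
  have hr' : (0 : ℝ) < r := by exact_mod_cast hr
  have hs' : (0 : ℝ) < (s : ℝ) - r := by
    have : (r : ℝ) < s := by exact_mod_cast hs
    linarith
  have hs0 : (0 : ℝ) < s := by linarith
  rw [setIntegral_congr_fun measurableSet_Ioo (g := fun x : ℝ => x ^ ((r : ℝ) - 1) *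
    (1 - x) ^ ((s : ℝ) - r - 1) *
      ∑' k : ℕ, (poch (1 / 2) k / (Nat.factorial k : ℝ)) ^ 2 * x ^ k)
    (fun x hx => by simp only [ellInt_one_one_sub_eq_tsum hx]),
    integral_rpow_mul_one_sub_rpow_mul_tsum hr' hs' (fun k => sq_nonneg _)
      (fun x hx => summable_half_coeff_sq hx), Fval, threeF2, ← tsum_mul_left, ← tsum_mul_left]
  refine tsum_congr fun k => ?_
  have hk := Gamma_add_nat_eq hs0 k
  have h1 := (poch_pos hs0 k).ne'
  have h2 := (Real.Gamma_pos_of_pos hs0).ne'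
  rw [ProbabilityTheory.beta, betaFn, Gamma_add_nat_eq hr',
    show (r : ℝ) + k + (s - r) = s + k by ring, hk, poch_one,
    show (r : ℝ) + (s - r) = s by ring]
  field_simp

lemma cos_pi_div_eight_eq : Real.cos (Real.pi / 8) = Real.sin (Real.pi / 8) * (1 + √2) := by
  rw [Real.cos_pi_div_eight, Real.sin_pi_div_eight]
  have h2 : √2 ^ 2 = 2 := Real.sq_sqrt (by norm_num)
  have h0 : 0 ≤ √2 := Real.sqrt_nonneg _
  have hlt : √2 ≤ 2 := by nlinarith
  have h : √(2 + √2) = √(2 - √2) * (1 + √2) := by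
    rw [Real.sqrt_eq_iff_mul_self_eq (by positivity) (by positivity), ← sq, mul_pow,
      Real.sq_sqrt (by linarith)]
    linear_combination √2 * h2
  rw [h]; ring

open Complex in
lemma class6_algebra {A0 A1 A2 A3 : ℝ}
    (h0 : A0 = (2 + √2) * A2 - (1 + √2) * A1) (h3 : A3 = (1 + √2) * A2 + (2 + √2) * A1) :
    ((Real.sin (Real.pi / 8) * A3 : ℝ) : ℂ) - Real.sqrt 3 * (Real.cos (Real.pi / 8) * A2 : ℝ) -
        I * Real.sqrt 3 * (Real.cos (Real.pi / 8) * A1 : ℝ) -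
        I * (Real.sin (Real.pi / 8) * A0 : ℝ) =
      -(1 / 2) * exp (2 * Real.pi * I / 48) *
        (A0 - I * Real.sqrt 3 * A1 - Real.sqrt 3 * A2 + I * A3) := by
  have e2 : √2 ^ 2 = 2 := Real.sq_sqrt (by norm_num)
  have e3 : √3 ^ 2 = 3 := Real.sq_sqrt (by norm_num)
  have e1 : (2 * Real.pi * I / 48 : ℂ) =
      ((Real.pi / 8 - (Real.pi / 3 - Real.pi / 4) : ℝ) : ℂ) * I := by
    push_cast; ring
  have hc : Real.cos (Real.pi / 8 - (Real.pi / 3 - Real.pi / 4)) =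
      Real.sin (Real.pi / 8) * ((1 + √2) * (√2 + √2 * √3) / 4 + (√2 * √3 - √2) / 4) := by
    rw [Real.cos_sub, Real.cos_sub, Real.sin_sub, Real.cos_pi_div_three, Real.sin_pi_div_three,
      Real.cos_pi_div_four, Real.sin_pi_div_four, cos_pi_div_eight_eq]
    ring
  have hs : Real.sin (Real.pi / 8 - (Real.pi / 3 - Real.pi / 4)) =
      Real.sin (Real.pi / 8) * ((√2 + √2 * √3) / 4 - (1 + √2) * (√2 * √3 - √2) / 4) := by
    rw [Real.sin_sub, Real.cos_sub, Real.sin_sub, Real.cos_pi_div_three, Real.sin_pi_div_three,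
      Real.cos_pi_div_four, Real.sin_pi_div_four, cos_pi_div_eight_eq]
    ring
  rw [e1, exp_mul_I, ← ofReal_cos, ← ofReal_sin, hc, hs, cos_pi_div_eight_eq, h0, h3]
  clear e1 h0 h3 hc hs
  generalize Real.sin (Real.pi / 8) = s
  generalize √2 = w at *
  generalize √3 = t at *
  apply Complex.ext
  · simp only [sub_re, mul_re, ofReal_re, ofReal_im, I_re, I_im, add_re, neg_re, neg_im, sub_im,
      mul_im, add_im, div_re, div_im, one_re, one_im]
    simp
    grind
  · simp
    grind

lemma intA_one_eighth_eq_trace :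
    intA (1 / 8) = -(intA (3 / 8) + (Real.cos (Real.pi / 8) * (-intB (3 / 8) - 3 * intX (3 / 8)) +
      Real.sin (Real.pi / 8) * intB (5 / 8))) := by
  obtain ⟨hi, hv⟩ := integral_arcForm_traceForm
  have h := trace_relation (e := 1 / 8) (r := 3 / 8) (k := 1) (ε := 1) (R := traceForm)
    (by norm_num) (by norm_num) (by norm_num) (by norm_num) (by norm_num)
    (fun q h0 h1 _ h3 => by rw [one_mul, one_mul, traceForm_eq h0 h1 h3])
    (fun q h0 h1 _ h3 => by rw [Complex.ofReal_one, one_mul, one_mul, traceForm_eq h0 h1 h3])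
    (fun q h1 h3 h0 => (modRatio_rpow_mul_traceForm h1 h3 h0).1) hi
  rw [hv, ← Complex.ofReal_mul, sub_eq_add_neg, ← mul_neg, ← Complex.ofReal_neg, re_exp_mul,
    mul_one_div] at h
  linear_combination h

lemma intA_seven_eighths_eq_trace :
    intA (7 / 8) = intA (5 / 8) + (Real.cos (Real.pi / 8) * (intB (5 / 8) + 3 * intX (5 / 8)) +
      Real.sin (Real.pi / 8) * intB (3 / 8)) := by
  obtain ⟨hi, hv⟩ := integral_arcForm_traceForm'
  have h := trace_relation (e := 7 / 8) (r := 5 / 8) (k := -1) (ε := -1) (R := traceForm')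
    (by norm_num) (by norm_num) (by norm_num) (by norm_num) (by norm_num)
    (fun q h0 _ h1 h3 => by rw [traceForm'_eq h0 h1 h3, neg_one_mul, neg_one_mul])
    (fun q h0 _ h1 h3 => by
      rw [Complex.ofReal_neg, Complex.ofReal_one, traceForm'_eq h0 h1 h3, neg_one_mul, neg_one_mul])
    (fun q h1 h3 h0 => (modRatio_rpow_mul_traceForm h1 h3 h0).2) hi
  rw [hv, ← Complex.ofReal_mul, sub_eq_add_neg, ← mul_neg, ← Complex.ofReal_neg, re_exp_mul,
    show Real.pi * (7 / 8) = Real.pi - Real.pi / 8 by ring, Real.cos_pi_sub, Real.sin_pi_sub] at h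
  linear_combination -h

lemma sin_three_pi_div_eight : Real.sin (Real.pi * (3 / 8)) = Real.cos (Real.pi / 8) := by
  rw [← Real.sin_pi_div_two_sub]; congr 1; ring

lemma cos_three_pi_div_eight : Real.cos (Real.pi * (3 / 8)) = Real.sin (Real.pi / 8) := by
  rw [← Real.cos_pi_div_two_sub]; congr 1; ring

lemma sin_five_pi_div_eight : Real.sin (Real.pi * (5 / 8)) = Real.cos (Real.pi / 8) := by
  rw [← Real.sin_add_pi_div_two]; congr 1; ring

lemma cos_five_pi_div_eight : Real.cos (Real.pi * (5 / 8)) = -Real.sin (Real.pi / 8) := by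
  rw [← Real.cos_add_pi_div_two]; congr 1; ring

lemma intB_one_eighth : intB (1 / 8) = Real.sin (Real.pi / 8) * intA (7 / 8) := by
  have h := (intB_one_sub_and_intX (r := 7 / 8) (by norm_num) (by norm_num)).1
  rwa [show Real.pi * (7 / 8) = Real.pi - Real.pi / 8 by ring, Real.sin_pi_sub,
    show (1 : ℝ) - 7 / 8 = 1 / 8 by norm_num] at h

lemma intB_three_eighths : intB (3 / 8) = Real.cos (Real.pi / 8) * intA (5 / 8) := by
  have h := (intB_one_sub_and_intX (r := 5 / 8) (by norm_num) (by norm_num)).1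
  rwa [sin_five_pi_div_eight, show (1 : ℝ) - 5 / 8 = 3 / 8 by norm_num] at h

lemma intB_five_eighths : intB (5 / 8) = Real.cos (Real.pi / 8) * intA (3 / 8) := by
  have h := (intB_one_sub_and_intX (r := 3 / 8) (by norm_num) (by norm_num)).1
  rwa [sin_three_pi_div_eight, show (1 : ℝ) - 3 / 8 = 5 / 8 by norm_num] at h

lemma intB_seven_eighths : intB (7 / 8) = Real.sin (Real.pi / 8) * intA (1 / 8) := by
  have h := (intB_one_sub_and_intX (r := 1 / 8) (by norm_num) (by norm_num)).1
  rwa [mul_one_div, show (1 : ℝ) - 1 / 8 = 7 / 8 by norm_num] at h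

lemma four_mul_cos_sq : 4 * Real.cos (Real.pi / 8) ^ 2 = 2 + √2 := by
  rw [Real.cos_sq, show 2 * (Real.pi / 8) = Real.pi / 4 by ring, Real.cos_pi_div_four]
  ring

lemma four_mul_sin_mul_cos : 4 * (Real.sin (Real.pi / 8) * Real.cos (Real.pi / 8)) = √2 := by
  have h := Real.sin_two_mul (Real.pi / 8)
  rw [show 2 * (Real.pi / 8) = Real.pi / 4 by ring, Real.sin_pi_div_four] at h
  linear_combination -2 * h

lemma intA_one_eighth : intA (1 / 8) = (2 + √2) * intA (5 / 8) - (1 + √2) * intA (3 / 8) := by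
  have hX := (intB_one_sub_and_intX (r := 3 / 8) (by norm_num) (by norm_num)).2
  rw [cos_three_pi_div_eight, intB_three_eighths] at hX
  rw [intA_one_eighth_eq_trace, hX, intB_three_eighths, intB_five_eighths]
  linear_combination intA (5 / 8) * four_mul_cos_sq - intA (3 / 8) * four_mul_sin_mul_cos

lemma intA_seven_eighths : intA (7 / 8) = (1 + √2) * intA (5 / 8) + (2 + √2) * intA (3 / 8) := by
  have hX := (intB_one_sub_and_intX (r := 5 / 8) (by norm_num) (by norm_num)).2
  rw [cos_five_pi_div_eight, intB_five_eighths] at hX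
  rw [intA_seven_eighths_eq_trace, hX, intB_three_eighths, intB_five_eighths]
  linear_combination intA (3 / 8) * four_mul_cos_sq + intA (5 / 8) * four_mul_sin_mul_cos

lemma Fval_eq_intA {r : ℚ} (hr : 0 < r) (hr1 : r < 1) :
    Fval r 1 = (2 : ℝ) ^ ((1 : ℝ) - 4 * (r : ℝ)) / (2 * (r.den : ℝ)) * intA r := by
  rw [Fval_eq_integral hr hr1, intA, Rat.cast_one, show (1 : ℝ) - r - 1 = -r by ring]

lemma Fval_eq_intB {r s : ℚ} (hr : 0 < r) (hs : s = r + 1 / 2) :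
    Fval r s = (2 : ℝ) ^ ((1 : ℝ) - 4 * (r : ℝ)) / (2 * (r.den : ℝ)) * intB r := by
  rw [Fval_eq_integral hr (by linarith), intB, hs]
  push_cast
  rw [show (r : ℝ) + 1 / 2 - r - 1 = -(1 / 2) by ring]

lemma two_rpow_half_sub (n : ℕ) : (2 : ℝ) ^ ((1 / 2 : ℝ) - n) = √2 / 2 ^ n := by
  rw [Real.rpow_sub_natCast two_ne_zero, ← Real.sqrt_eq_rpow]

/-- The factor `2 ^ (1 - 4 * r) / N(r)` for `r = (2 * n + 1) / 8`. -/
lemma Fval_factor {r : ℚ} (n : ℕ) (hr : r = (2 * n + 1) / 8) (hd : r.den = 8) :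
    (2 : ℝ) ^ ((1 : ℝ) - 4 * (r : ℝ)) / (2 * (r.den : ℝ)) = √2 / 16 / 2 ^ n := by
  rw [hd, hr]
  push_cast
  rw [show (1 : ℝ) - 4 * ((2 * n + 1) / 8) = 1 / 2 - n by ring, two_rpow_half_sub]
  ring

end

open Complex in
/-- L(f_{1/8,5/8},1) = −(1/2)·ζ₄₈·L(f_{1/8,1},1), where ζ₄₈ = e^{2πi/48}, with the
L-values expressed as linear combinations of normalized hypergeometric values. -/
theorem lvalue_relation_class6 :
    (Fval (1/8) (5/8) : ℂ) - 2 * (Real.sqrt 3 : ℂ) * (Fval (3/8) (7/8) : ℂ) -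
        4 * I * (Real.sqrt 3 : ℂ) * (Fval (5/8) (9/8) : ℂ) -
        8 * I * (Fval (7/8) (11/8) : ℂ) =
      -(1/2) * Complex.exp (2 * (Real.pi : ℂ) * I / 48) *
        ((Fval (1/8) 1 : ℂ) - 2 * I * (Real.sqrt 3 : ℂ) * (Fval (3/8) 1 : ℂ) -
          4 * (Real.sqrt 3 : ℂ) * (Fval (5/8) 1 : ℂ) + 8 * I * (Fval (7/8) 1 : ℂ)) := by
  have f0 := Fval_factor (r := 1 / 8) 0 (by norm_num) (by norm_num)
  have f1 := Fval_factor (r := 3 / 8) 1 (by norm_num) (by norm_num)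
  have f2 := Fval_factor (r := 5 / 8) 2 (by norm_num) (by norm_num)
  have f3 := Fval_factor (r := 7 / 8) 3 (by norm_num) (by norm_num)
  rw [Fval_eq_intB (by norm_num) (by norm_num), Fval_eq_intB (by norm_num) (by norm_num),
    Fval_eq_intB (by norm_num) (by norm_num), Fval_eq_intB (by norm_num) (by norm_num),
    Fval_eq_intA (by norm_num) (by norm_num), Fval_eq_intA (by norm_num) (by norm_num),
    Fval_eq_intA (by norm_num) (by norm_num), Fval_eq_intA (by norm_num) (by norm_num),
    f0, f1, f2, f3]
  norm_num only [Rat.cast_div, Rat.cast_one, Rat.cast_ofNat]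
  rw [intB_one_eighth, intB_three_eighths, intB_five_eighths, intB_seven_eighths]
  have h := class6_algebra intA_one_eighth intA_seven_eighths
  push_cast at h ⊢
  linear_combination (√2 / 16 : ℂ) * h
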